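/- Let T > 0, 0 < α < 1, r ≥ 1, p ≥ 1 an integer, and let v satisfy the regularity condition with constants C₀ > 0 and σ ∈ (0,1). Then there exists C > 0 depending only on p, σ, α, r, C₀ and T (in particular independent of N and n) with the following property: for every integer N ≥ 1, every 1 ≤ n ≤ N and every function R : (0,t_n] → ℝ which on each subinterval (t_{k−1}, t_k] (1 ≤ k ≤ n) of the graded mesh agrees with a polynomial of degree ≤ p and which satisfies the orthogonality relations ∫_0^{t_n} (D_{0+}^α (R − v))(t) · X(t) dt = 0 for every X : (0,t_n] → ℝ that agrees on each (t_{k−1}, t_k] with a polynomial of degree ≤ p, one has ∫_0^{t_n} (R(t) − v(t))² dt ≤ C · E(n,N,σ,α,r,p). -/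

import Mathlib

/-- The Riemann–Liouville kernel `ω_β(t) = t^(β-1) / Γ(β)`. -/
noncomputable def rlKernel (β t : ℝ) : ℝ := t ^ (β - 1) / Real.Gamma β

/-- The graded mesh `t_n = (n/N)^r * T`. -/
noncomputable def gradedMesh (T r : ℝ) (N n : ℕ) : ℝ := ((n : ℝ) / (N : ℝ)) ^ r * T

/-- The error bound `E(n,N,σ,α,r,p)`:
`E = N^{-r(1+2σ-α)-α}` if `1 ≤ r < (2p+2-α)/(1+2σ-α)`,
`E = N^{-2p-2}(1+ln n)` if `r = (2p+2-α)/(1+2σ-α)`,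
`E = N^{-2p-2} t_n^{1+2σ-α-(2p+2-α)/r}` if `r > (2p+2-α)/(1+2σ-α)`. -/
noncomputable def projErrBound (T r α σ : ℝ) (p N n : ℕ) : ℝ :=
  if r < (2 * (p : ℝ) + 2 - α) / (1 + 2 * σ - α) then
    (N : ℝ) ^ (-(r * (1 + 2 * σ - α)) - α)
  else if r = (2 * (p : ℝ) + 2 - α) / (1 + 2 * σ - α) then
    (N : ℝ) ^ (-2 * (p : ℝ) - 2) * (1 + Real.log n)
  else
    (N : ℝ) ^ (-2 * (p : ℝ) - 2) *
      gradedMesh T r N n ^ (1 + 2 * σ - α - (2 * (p : ℝ) + 2 - α) / r)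

/-!
For a function `e` with enough cellwise regularity the Riemann–Liouville derivative has the
Marchaud form `Γ(1 - α) D e (x) = x ^ (-α) e(x) + α ∫_0^x (e(x) - e(y)) (x - y) ^ (-α - 1) dy`,
and pairing this with `e` itself produces a nonnegative energy (a weighted `L²` norm plus a
fractional Gagliardo seminorm). Write `R - v = θ - η` with `θ` piecewise polynomial and `η` the
error of cellwise Taylor polynomials of `v`. Testing the orthogonality with `θ` bounds the energy
of `θ` by quantities of `η`, which local estimates compare with `∑ ε_k² τ_k^(1-α)`, where `ε_k`
bounds `η` on the `k`-th cell. The remaining factor `h^α` in the `L²` estimate is gained by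
duality: `D (R - v)` is paired with the Abel integral of `R - v`, which gives back the `L²` norm,
and orthogonality allows a piecewise constant approximation to be subtracted from that integral.
On the graded mesh the sum over the cells is a sum of powers `k^(γ-1)`, whose exponent decides
between the three regimes of the bound.
-/

namespace RLProjection

open MeasureTheory Set Filter Topology

/-! ### Integration against nonnegative kernels -/

section Kernel

variable {X Y : Type*} [MeasurableSpace X] [MeasurableSpace Y] {μ : Measure X} {ν : Measure Y}

theorem integrable_kernel_mul_fst [SFinite ν] {κ : X → Y → ℝ} {m f : X → ℝ}
    (hκ : Measurable (Function.uncurry κ)) (hκ0 : ∀ x y, 0 ≤ κ x y)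
    (hm : ∀ᵐ x ∂μ, Integrable (κ x) ν ∧ ∫ y, κ x y ∂ν ≤ m x) (hf : Measurable f)
    (hfm : Integrable (fun x => |f x| * m x) μ) :
    Integrable (fun p : X × Y => κ p.1 p.2 * f p.1) (μ.prod ν) := by
  have hmeas : Measurable (fun p : X × Y => κ p.1 p.2 * f p.1) :=
    hκ.mul (hf.comp measurable_fst)
  refine (integrable_prod_iff hmeas.aestronglyMeasurable).2 ⟨?_, ?_⟩
  · filter_upwards [hm] with x hx using hx.1.mul_const _
  · refine hfm.mono' (hmeas.norm.stronglyMeasurable.integral_prod_right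
      (f := fun x y => ‖κ x y * f x‖)).aestronglyMeasurable ?_
    filter_upwards [hm] with x hx
    simp only [norm_mul, Real.norm_of_nonneg (hκ0 x _), integral_mul_const,
      Real.norm_of_nonneg (integral_nonneg (hκ0 x)), norm_norm, mul_comm |f x|]
    exact mul_le_mul_of_nonneg_right hx.2 (abs_nonneg _)

theorem integral_kernel_mul_fst_le [SFinite μ] [SFinite ν] {κ : X → Y → ℝ} {m f : X → ℝ}
    (hκ : Measurable (Function.uncurry κ)) (hκ0 : ∀ x y, 0 ≤ κ x y)
    (hm : ∀ᵐ x ∂μ, Integrable (κ x) ν ∧ ∫ y, κ x y ∂ν ≤ m x) (hf : Measurable f)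
    (hf0 : ∀ x, 0 ≤ f x) (hfm : Integrable (fun x => f x * m x) μ) :
    Integrable (fun p : X × Y => κ p.1 p.2 * f p.1) (μ.prod ν) ∧
      ∫ p, κ p.1 p.2 * f p.1 ∂μ.prod ν ≤ ∫ x, f x * m x ∂μ := by
  have hi : Integrable (fun p : X × Y => κ p.1 p.2 * f p.1) (μ.prod ν) :=
    integrable_kernel_mul_fst hκ hκ0 hm hf (by simpa only [abs_of_nonneg (hf0 _)] using hfm)
  refine ⟨hi, ?_⟩
  rw [integral_prod _ hi]
  refine integral_mono_ae hi.integral_prod_left hfm ?_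
  filter_upwards [hm] with x hx
  rw [integral_mul_const, mul_comm]
  exact mul_le_mul_of_nonneg_left hx.2 (hf0 x)

theorem integrable_kernel_mul_snd [SFinite μ] [SFinite ν] {κ : X → Y → ℝ} {m f : Y → ℝ}
    (hκ : Measurable (Function.uncurry κ)) (hκ0 : ∀ x y, 0 ≤ κ x y)
    (hm : ∀ᵐ y ∂ν, Integrable (κ · y) μ ∧ ∫ x, κ x y ∂μ ≤ m y) (hf : Measurable f)
    (hfm : Integrable (fun y => |f y| * m y) ν) :
    Integrable (fun p : X × Y => κ p.1 p.2 * f p.2) (μ.prod ν) :=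
  (integrable_kernel_mul_fst (κ := fun y x => κ x y) (hκ.comp measurable_swap)
    (fun y x => hκ0 x y) hm hf hfm).swap

theorem integral_kernel_mul_snd_le [SFinite μ] [SFinite ν] {κ : X → Y → ℝ} {m f : Y → ℝ}
    (hκ : Measurable (Function.uncurry κ)) (hκ0 : ∀ x y, 0 ≤ κ x y)
    (hm : ∀ᵐ y ∂ν, Integrable (κ · y) μ ∧ ∫ x, κ x y ∂μ ≤ m y) (hf : Measurable f)
    (hf0 : ∀ y, 0 ≤ f y) (hfm : Integrable (fun y => f y * m y) ν) :
    Integrable (fun p : X × Y => κ p.1 p.2 * f p.2) (μ.prod ν) ∧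
      ∫ p, κ p.1 p.2 * f p.2 ∂μ.prod ν ≤ ∫ y, f y * m y ∂ν := by
  have h := integral_kernel_mul_fst_le (κ := fun y x => κ x y) (hκ.comp measurable_swap)
    (fun y x => hκ0 x y) hm hf hf0 hfm
  exact ⟨h.1.swap, (integral_prod_swap _).symm.trans_le h.2⟩

theorem sq_integral_mul_le {κ e : X → ℝ} {m : ℝ} (hκ0 : ∀ x, 0 ≤ κ x) (hκ : Integrable κ μ)
    (hκm : ∫ x, κ x ∂μ ≤ m) (h1 : Integrable (fun x => κ x * e x) μ)
    (h2 : Integrable (fun x => κ x * e x ^ 2) μ) :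
    (∫ x, κ x * e x ∂μ) ^ 2 ≤ m * ∫ x, κ x * e x ^ 2 ∂μ := by
  have hquad : ∀ z : ℝ, 0 ≤ (∫ x, κ x ∂μ) * (z * z) + -2 * (∫ x, κ x * e x ∂μ) * z
      + ∫ x, κ x * e x ^ 2 ∂μ := fun z => by
    calc 0 ≤ ∫ x, κ x * (z - e x) ^ 2 ∂μ :=
          integral_nonneg fun x => mul_nonneg (hκ0 x) (sq_nonneg _)
      _ = ∫ x, (κ x * (z * z) + κ x * e x * (-2 * z)) + κ x * e x ^ 2 ∂μ := by
          congr 1 with x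
          ring
      _ = _ := by
          have hlin : Integrable (fun x => κ x * (z * z) + κ x * e x * (-2 * z)) μ :=
            (hκ.mul_const _).add (h1.mul_const _)
          rw [integral_add hlin h2, integral_add (hκ.mul_const _) (h1.mul_const _),
            integral_mul_const, integral_mul_const]
          ring
  have hdiscrim := discrim_le_zero hquad
  have hsq : 0 ≤ ∫ x, κ x * e x ^ 2 ∂μ :=
    integral_nonneg fun x => mul_nonneg (hκ0 x) (sq_nonneg _)
  have hmono := mul_le_mul_of_nonneg_right hκm hsq
  rw [discrim] at hdiscrim
  linarith

end Kernel

/-! ### Integrals of powers -/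

section Powers

variable {a b c γ : ℝ}

theorem integrableOn_sub_left_rpow (hab : a ≤ b) (hγ : -1 < γ) :
    IntegrableOn (fun x => (x - a) ^ γ) (Ioc a b) := by
  rw [← intervalIntegrable_iff_integrableOn_Ioc_of_le hab]
  simpa using
    (intervalIntegral.intervalIntegrable_rpow' (a := 0) (b := b - a) hγ).comp_sub_right a

theorem integral_sub_left_rpow (hab : a ≤ b) (hγ : -1 < γ) :
    ∫ x in Ioc a b, (x - a) ^ γ = (b - a) ^ (γ + 1) / (γ + 1) := by
  rw [← intervalIntegral.integral_of_le hab,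
    intervalIntegral.integral_comp_sub_right (· ^ γ) a, integral_rpow (.inl hγ), sub_self,
    Real.zero_rpow (by linarith), sub_zero]

theorem integrableOn_sub_right_rpow (hab : a ≤ b) (hγ : -1 < γ) :
    IntegrableOn (fun x => (b - x) ^ γ) (Ioc a b) := by
  rw [← intervalIntegrable_iff_integrableOn_Ioc_of_le hab]
  simpa using
    (intervalIntegral.intervalIntegrable_rpow' (a := b - a) (b := 0) hγ).comp_sub_left b

theorem integral_sub_right_rpow (hab : a ≤ b) (hγ : -1 < γ) :
    ∫ x in Ioc a b, (b - x) ^ γ = (b - a) ^ (γ + 1) / (γ + 1) := by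
  rw [← intervalIntegral.integral_of_le hab,
    intervalIntegral.integral_comp_sub_left (· ^ γ) b, integral_rpow (.inl hγ), sub_self,
    Real.zero_rpow (by linarith), sub_zero]

theorem integrableOn_sub_rpow_of_lt (hbc : b < c) :
    IntegrableOn (fun y => (c - y) ^ γ) (Ioc a b) := by
  refine (ContinuousOn.integrableOn_Icc ?_).mono_set Ioc_subset_Icc_self
  exact ContinuousOn.rpow_const (by fun_prop) fun x hx =>
    .inl (sub_pos.2 (hx.2.trans_lt hbc)).ne'

theorem integral_sub_rpow_of_lt (hab : a ≤ b) (hbc : b < c) (hγ : γ ≠ -1) :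
    ∫ y in Ioc a b, (c - y) ^ γ = ((c - a) ^ (γ + 1) - (c - b) ^ (γ + 1)) / (γ + 1) := by
  rw [← intervalIntegral.integral_of_le hab,
    intervalIntegral.integral_comp_sub_left (· ^ γ) c, integral_rpow (.inr ⟨hγ, ?_⟩)]
  exact notMem_uIcc_of_lt (by linarith) (by linarith)

theorem integrableOn_rpow_sub_of_lt (hca : c < a) :
    IntegrableOn (fun y => (y - c) ^ γ) (Ioc a b) := by
  refine (ContinuousOn.integrableOn_Icc ?_).mono_set Ioc_subset_Icc_self
  exact ContinuousOn.rpow_const (by fun_prop) fun x hx =>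
    .inl (sub_pos.2 (hca.trans_le hx.1)).ne'

theorem integral_rpow_sub_of_lt (hab : a ≤ b) (hca : c < a) (hγ : γ ≠ -1) :
    ∫ y in Ioc a b, (y - c) ^ γ = ((b - c) ^ (γ + 1) - (a - c) ^ (γ + 1)) / (γ + 1) := by
  rw [← intervalIntegral.integral_of_le hab,
    intervalIntegral.integral_comp_sub_right (· ^ γ) c, integral_rpow (.inr ⟨hγ, ?_⟩)]
  exact notMem_uIcc_of_lt (by linarith) (by linarith)

end Powers

/-- Lebesgue measure on `(0, b]`. -/
noncomputable abbrev volIoc (b : ℝ) : Measure ℝ := volume.restrict (Ioc 0 b)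

section BoundedMultiplier

variable {b B : ℝ} {f g : ℝ → ℝ}

theorem ae_mem_Ioo (b : ℝ) : ∀ᵐ x ∂volIoc b, x ∈ Ioo 0 b := by
  filter_upwards [ae_restrict_mem measurableSet_Ioc, Measure.ae_ne _ b] with x hx hxb
  exact ⟨hx.1, hx.2.lt_of_ne hxb⟩

theorem ae_prod_mem_Ioc (b : ℝ) :
    ∀ᵐ p : ℝ × ℝ ∂(volIoc b).prod (volIoc b), p.1 ∈ Ioc 0 b ∧ p.2 ∈ Ioc 0 b := by
  rw [volIoc, Measure.prod_restrict]
  filter_upwards [ae_restrict_mem (measurableSet_Ioc.prod measurableSet_Ioc)] with p hp using hp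

theorem integrable_of_abs_le (hf : Measurable f) (hB : ∀ x ∈ Ioc 0 b, |f x| ≤ B) :
    Integrable f (volIoc b) := by
  refine (integrable_const B).mono' hf.aestronglyMeasurable ?_
  filter_upwards [ae_restrict_mem measurableSet_Ioc] with x hx using hB x hx

theorem integrable_mul_of_abs_le (hf : Measurable f) (hB : ∀ x ∈ Ioc 0 b, |f x| ≤ B)
    (hg : Integrable g (volIoc b)) : Integrable (fun x => g x * f x) (volIoc b) := by
  refine hg.mul_bdd (c := B) hf.aestronglyMeasurable ?_
  filter_upwards [ae_restrict_mem measurableSet_Ioc] with x hx using hB x hx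

theorem integrable_mul_fst_of_abs_le (hf : Measurable f) (hB : ∀ x ∈ Ioc 0 b, |f x| ≤ B)
    {F : ℝ × ℝ → ℝ} (hF : Integrable F ((volIoc b).prod (volIoc b))) :
    Integrable (fun p => F p * f p.1) ((volIoc b).prod (volIoc b)) := by
  refine hF.mul_bdd (c := B) (hf.comp measurable_fst).aestronglyMeasurable ?_
  filter_upwards [ae_prod_mem_Ioc b] with p hp using hB _ hp.1

theorem integrable_mul_snd_of_abs_le (hf : Measurable f) (hB : ∀ x ∈ Ioc 0 b, |f x| ≤ B)
    {F : ℝ × ℝ → ℝ} (hF : Integrable F ((volIoc b).prod (volIoc b))) :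
    Integrable (fun p => F p * f p.2) ((volIoc b).prod (volIoc b)) := by
  refine hF.mul_bdd (c := B) (hf.comp measurable_snd).aestronglyMeasurable ?_
  filter_upwards [ae_prod_mem_Ioc b] with p hp using hB _ hp.2

end BoundedMultiplier

theorem integrable_rpow_neg {α : ℝ} (hα1 : α < 1) (b : ℝ) :
    Integrable (fun x => x ^ (-α)) (volIoc b) := by
  rcases le_total 0 b with hb | hb
  · simpa only [sub_zero, IntegrableOn] using
      integrableOn_sub_left_rpow hb (by linarith : -1 < -α)
  · simp [volIoc, Ioc_eq_empty_of_le hb]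

theorem integrable_sub_rpow_neg {α : ℝ} (hα1 : α < 1) (b : ℝ) :
    Integrable (fun x => (b - x) ^ (-α)) (volIoc b) := by
  rcases le_total 0 b with hb | hb
  · exact integrableOn_sub_right_rpow hb (by linarith : -1 < -α)
  · simp [volIoc, Ioc_eq_empty_of_le hb]

/-! ### Causal kernels -/

/-- The causal (Volterra) part of the kernel `K`: it vanishes unless `y < x`. -/
noncomputable def causal (K : ℝ → ℝ → ℝ) (x y : ℝ) : ℝ := if y < x then K x y else 0

section Causal

variable {K : ℝ → ℝ → ℝ} {b x y : ℝ}

theorem causal_of_lt (K : ℝ → ℝ → ℝ) (h : y < x) : causal K x y = K x y := if_pos h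

theorem causal_of_le (K : ℝ → ℝ → ℝ) (h : x ≤ y) : causal K x y = 0 := if_neg h.not_gt

theorem causal_nonneg (hK : ∀ x y, y < x → 0 ≤ K x y) (x y : ℝ) : 0 ≤ causal K x y := by
  unfold causal
  split_ifs with h
  exacts [hK x y h, le_rfl]

theorem measurable_causal (hK : Measurable (Function.uncurry K)) :
    Measurable (Function.uncurry (causal K)) :=
  Measurable.ite (measurableSet_lt measurable_snd measurable_fst) hK measurable_const

theorem causal_right_eq_indicator (K : ℝ → ℝ → ℝ) (x : ℝ) :
    causal K x = (Iio x).indicator (K x) := by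
  ext y
  simp [causal, indicator]

theorem causal_left_eq_indicator (K : ℝ → ℝ → ℝ) (y : ℝ) :
    (causal K · y) = (Ioi y).indicator (K · y) := by
  ext x
  simp [causal, indicator]

theorem volIoc_restrict_Iio (hx : x ≤ b) : (volIoc b).restrict (Iio x) = volIoc x := by
  rw [volIoc, volIoc, Measure.restrict_restrict measurableSet_Iio,
    ← restrict_Ioo_eq_restrict_Ioc]
  congr 1
  ext y
  exact ⟨fun h => ⟨h.2.1, h.1⟩, fun h => ⟨h.2, h.1, h.2.le.trans hx⟩⟩

theorem volIoc_restrict_Ioi (hy : 0 ≤ y) :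
    (volIoc b).restrict (Ioi y) = volume.restrict (Ioc y b) := by
  rw [Measure.restrict_restrict measurableSet_Ioi]
  congr 1
  ext x
  exact ⟨fun h => ⟨h.1, h.2.2⟩, fun h => ⟨h.1, hy.trans_lt h.1, h.2⟩⟩

theorem integral_causal_right (hx : x ≤ b) :
    ∫ y, causal K x y ∂volIoc b = ∫ y, K x y ∂volIoc x := by
  rw [causal_right_eq_indicator, integral_indicator measurableSet_Iio, volIoc_restrict_Iio hx]

theorem integral_causal_mul_right (f : ℝ → ℝ) (hx : x ≤ b) :
    ∫ y, causal K x y * f y ∂volIoc b = ∫ y, K x y * f y ∂volIoc x := by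
  rw [← integral_causal_right (K := fun x y => K x y * f y) hx]
  simp only [causal, ite_mul, zero_mul]

theorem integrable_causal_left (hy : 0 ≤ y) :
    Integrable (causal K · y) (volIoc b) ↔ IntegrableOn (K · y) (Ioc y b) := by
  rw [causal_left_eq_indicator, integrable_indicator_iff measurableSet_Ioi, IntegrableOn,
    volIoc_restrict_Ioi hy, IntegrableOn]

theorem integral_causal_left (hy : 0 ≤ y) :
    ∫ x, causal K x y ∂volIoc b = ∫ x in Ioc y b, K x y := by
  rw [causal_left_eq_indicator, integral_indicator measurableSet_Ioi, volIoc_restrict_Ioi hy]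

theorem integral_integral_causal {C : ℝ} {f : ℝ → ℝ} (hKm : Measurable (Function.uncurry K))
    (hK0 : ∀ x ≤ b, ∀ y < x, 0 ≤ K x y)
    (hK : ∀ y ∈ Ioo 0 b, IntegrableOn (K · y) (Ioc y b) ∧ ∫ x in Ioc y b, K x y ≤ C)
    (hfm : Measurable f) (hf : Integrable f (volIoc b)) :
    ∫ x, ∫ y, K x y * f y ∂volIoc x ∂volIoc b
      = ∫ y, (∫ x in Ioc y b, K x y) * f y ∂volIoc b := by
  set L : ℝ → ℝ → ℝ := fun x y => if x ≤ b then K x y else 0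
  have hL : ∀ {x}, x ≤ b → L x = K x := fun h => funext fun y => if_pos h
  have hLm : Measurable (Function.uncurry L) :=
    Measurable.ite (measurableSet_le measurable_fst measurable_const) hKm measurable_const
  have hL0 : ∀ x y, 0 ≤ causal L x y := causal_nonneg fun x y hyx => by
    by_cases h : x ≤ b
    exacts [hL h ▸ hK0 x h y hyx, (if_neg h).ge]
  have hLK : ∀ y, ∀ x ∈ Ioc y b, L x y = K x y := fun y x hx => congrFun (hL hx.2) y
  have hi : Integrable (fun p : ℝ × ℝ => causal L p.1 p.2 * f p.2)
      ((volIoc b).prod (volIoc b)) := by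
    refine integrable_kernel_mul_snd (m := fun _ => C) (measurable_causal hLm) hL0 ?_ hfm
      (hf.abs.mul_const C)
    filter_upwards [ae_mem_Ioo b] with y hy
    rw [integrable_causal_left hy.1.le, integral_causal_left hy.1.le,
      integrableOn_congr_fun (hLK y) measurableSet_Ioc,
      setIntegral_congr_fun measurableSet_Ioc (hLK y)]
    exact hK y hy
  calc ∫ x, ∫ y, K x y * f y ∂volIoc x ∂volIoc b
      = ∫ x, ∫ y, causal L x y * f y ∂volIoc b ∂volIoc b :=
        setIntegral_congr_fun measurableSet_Ioc fun x hx => by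
          simp only [integral_causal_mul_right f hx.2, hL hx.2]
    _ = ∫ y, ∫ x, causal L x y * f y ∂volIoc b ∂volIoc b := integral_integral_swap hi
    _ = _ := setIntegral_congr_fun measurableSet_Ioc fun y hy => by
        simp only [integral_mul_const, integral_causal_left hy.1.le,
          setIntegral_congr_fun measurableSet_Ioc (hLK y)]

end Causal

/-! ### Regularisation of the hypersingular kernel -/

/-- The hypersingular kernel `(x - y)^(-1-α)` on `y < x`. -/
noncomputable def hyperKer (α : ℝ) : ℝ → ℝ → ℝ := causal fun x y => (x - y) ^ (-1 - α)

/-- The regularisation of `hyperKer` obtained by shifting the singularity by `ε`. -/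
noncomputable def regKer (α ε : ℝ) : ℝ → ℝ → ℝ := causal fun x y => (x - y + ε) ^ (-1 - α)

section HyperKer

variable {α ε b B : ℝ}

theorem hyperKer_nonneg (α x y : ℝ) : 0 ≤ hyperKer α x y :=
  causal_nonneg (fun _ _ h => Real.rpow_nonneg (sub_nonneg.2 h.le) _) x y

theorem regKer_nonneg (α : ℝ) (hε : 0 < ε) (x y : ℝ) : 0 ≤ regKer α ε x y :=
  causal_nonneg (fun _ _ h => Real.rpow_nonneg (by linarith) _) x y

theorem measurable_hyperKer (α : ℝ) : Measurable (Function.uncurry (hyperKer α)) :=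
  measurable_causal (by unfold Function.uncurry; fun_prop)

theorem measurable_regKer (α ε : ℝ) : Measurable (Function.uncurry (regKer α ε)) :=
  measurable_causal (by unfold Function.uncurry; fun_prop)

theorem regKer_le_hyperKer (hα : 0 < α) (hε : 0 < ε) (x y : ℝ) :
    regKer α ε x y ≤ hyperKer α x y := by
  unfold regKer hyperKer causal
  split_ifs with h
  · exact Real.rpow_le_rpow_of_nonpos (by linarith) (by linarith) (by linarith)
  · exact le_rfl

theorem abs_regKer_le (hα : 0 < α) (hε : 0 < ε) (x y : ℝ) :
    |regKer α ε x y| ≤ ε ^ (-1 - α) := by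
  rw [abs_of_nonneg (regKer_nonneg α hε x y)]
  unfold regKer causal
  split_ifs with h
  · exact Real.rpow_le_rpow_of_nonpos (by linarith) (by linarith) (by linarith)
  · exact Real.rpow_nonneg hε.le _

theorem tendsto_add_rpow {z : ℝ} (hz : z ≠ 0) (γ : ℝ) :
    Tendsto (fun ε : ℝ => (z + ε) ^ γ) (𝓝[>] 0) (𝓝 (z ^ γ)) := by
  have hc : ContinuousAt (fun ε : ℝ => (z + ε) ^ γ) 0 :=
    ContinuousAt.rpow_const (by fun_prop) (.inl (by simpa))
  simpa only [add_zero] using hc.tendsto.mono_left nhdsWithin_le_nhds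

theorem tendsto_regKer (α x y : ℝ) :
    Tendsto (fun ε => regKer α ε x y) (𝓝[>] 0) (𝓝 (hyperKer α x y)) := by
  unfold regKer hyperKer causal
  split_ifs with h
  · exact tendsto_add_rpow (sub_pos.2 h).ne' _
  · exact tendsto_const_nhds

theorem integral_regKer_right (hα : 0 < α) (hε : 0 < ε) {x : ℝ} (hx : x ∈ Ioc 0 b) :
    ∫ y, regKer α ε x y ∂volIoc b = (ε ^ (-α) - (x + ε) ^ (-α)) / α := by
  simp only [regKer, integral_causal_right hx.2, ← add_sub_right_comm]
  rw [integral_sub_rpow_of_lt hx.1.le (lt_add_of_pos_right x hε) (by linarith),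
    show -1 - α + 1 = -α by ring, sub_zero, add_sub_cancel_left, div_neg, ← neg_div, neg_sub]

theorem integral_regKer_left (hα : 0 < α) (hε : 0 < ε) {y : ℝ} (hy : y ∈ Ioc 0 b) :
    ∫ x, regKer α ε x y ∂volIoc b = (ε ^ (-α) - (b - y + ε) ^ (-α)) / α := by
  simp only [regKer, integral_causal_left hy.1.le, sub_add]
  rw [integral_rpow_sub_of_lt hy.2 (sub_lt_self y hε) (by linarith),
    show -1 - α + 1 = -α by ring, sub_sub_cancel, div_neg, ← neg_div, neg_sub]

theorem integral_kernel_mul_sub {X : Type*} [MeasurableSpace X] {μ : Measure X}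
    [IsFiniteMeasure μ] {κ : X → X → ℝ} {C : ℝ} (hκ : Measurable (Function.uncurry κ))
    (hκC : ∀ x y, |κ x y| ≤ C) {g : X → ℝ} (hg : Integrable g μ) :
    ∫ p : X × X, κ p.1 p.2 * (g p.1 - g p.2) ∂μ.prod μ
      = ∫ x, g x * ((∫ y, κ x y ∂μ) - ∫ y, κ y x ∂μ) ∂μ := by
  have hbound : ∀ᵐ p : X × X ∂μ.prod μ, ‖κ p.1 p.2‖ ≤ C := ae_of_all _ fun p => hκC _ _
  have hfst : Integrable (fun p : X × X => κ p.1 p.2 * g p.1) (μ.prod μ) :=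
    (hg.comp_fst μ).bdd_mul hκ.aestronglyMeasurable hbound
  have hsnd : Integrable (fun p : X × X => κ p.1 p.2 * g p.2) (μ.prod μ) :=
    (hg.comp_snd μ).bdd_mul hκ.aestronglyMeasurable hbound
  simp only [mul_sub]
  rw [integral_sub hfst hsnd, integral_prod _ hfst, integral_prod_symm _ hsnd,
    ← integral_sub hfst.integral_prod_left hsnd.integral_prod_right]
  simp only [integral_mul_const, mul_comm]

theorem integral_regKer_mul_sub (hα : 0 < α) (hε : 0 < ε) {g : ℝ → ℝ}
    (hg : Integrable g (volIoc b)) :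
    ∫ p : ℝ × ℝ, regKer α ε p.1 p.2 * (g p.1 - g p.2) ∂(volIoc b).prod (volIoc b)
      = (∫ x, g x * ((b - x + ε) ^ (-α) - (x + ε) ^ (-α)) ∂volIoc b) / α := by
  rw [integral_kernel_mul_sub (measurable_regKer α ε) (abs_regKer_le hα hε) hg, ← integral_div]
  refine setIntegral_congr_fun measurableSet_Ioc fun x hx => ?_
  simp only [integral_regKer_right hα hε hx, integral_regKer_left hα hε hx]
  ring

variable {g : ℝ → ℝ}

theorem tendsto_integral_regKer_mul_sub (hα : 0 < α) (hg : Measurable g)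
    (hi : Integrable (fun p : ℝ × ℝ => hyperKer α p.1 p.2 * (g p.1 - g p.2))
      ((volIoc b).prod (volIoc b))) :
    Tendsto (fun ε => ∫ p : ℝ × ℝ, regKer α ε p.1 p.2 * (g p.1 - g p.2)
        ∂(volIoc b).prod (volIoc b)) (𝓝[>] 0)
      (𝓝 (∫ p : ℝ × ℝ, hyperKer α p.1 p.2 * (g p.1 - g p.2)
        ∂(volIoc b).prod (volIoc b))) := by
  refine tendsto_integral_filter_of_dominated_convergence _ ?_ ?_ hi.norm ?_
  · exact .of_forall fun ε => ((measurable_regKer α ε).mul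
      ((hg.comp measurable_fst).sub (hg.comp measurable_snd))).aestronglyMeasurable
  · filter_upwards [self_mem_nhdsWithin] with ε hε
    refine ae_of_all _ fun p => ?_
    rw [norm_mul, norm_mul, Real.norm_of_nonneg (regKer_nonneg α hε _ _),
      Real.norm_of_nonneg (hyperKer_nonneg α _ _)]
    exact mul_le_mul_of_nonneg_right (regKer_le_hyperKer hα hε _ _) (norm_nonneg _)
  · exact ae_of_all _ fun p => (tendsto_regKer α _ _).mul_const _

theorem tendsto_integral_mul_shifted_rpow (hα : 0 < α) (hα1 : α < 1) (hg : Measurable g)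
    (hB : ∀ x ∈ Ioc 0 b, |g x| ≤ B) :
    Tendsto (fun ε => ∫ x, g x * ((b - x + ε) ^ (-α) - (x + ε) ^ (-α)) ∂volIoc b) (𝓝[>] 0)
      (𝓝 (∫ x, g x * ((b - x) ^ (-α) - x ^ (-α)) ∂volIoc b)) := by
  refine tendsto_integral_filter_of_dominated_convergence
    (fun x => B * ((b - x) ^ (-α) + x ^ (-α))) ?_ ?_
    (((integrable_sub_rpow_neg hα1 b).add (integrable_rpow_neg hα1 b)).const_mul B) ?_
  · exact .of_forall fun ε => Measurable.aestronglyMeasurable (by fun_prop)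
  · filter_upwards [self_mem_nhdsWithin] with ε (hε : 0 < ε)
    have hshift : ∀ z : ℝ, 0 < z → 0 ≤ (z + ε) ^ (-α) ∧ (z + ε) ^ (-α) ≤ z ^ (-α) :=
      fun z hz => ⟨Real.rpow_nonneg (by linarith) _,
        Real.rpow_le_rpow_of_nonpos hz (by linarith) (by linarith)⟩
    filter_upwards [ae_mem_Ioo b] with x hx
    have hgx := hB x (Ioo_subset_Ioc_self hx)
    obtain ⟨hr0, hr⟩ := hshift (b - x) (sub_pos.2 hx.2)
    obtain ⟨hl0, hl⟩ := hshift x hx.1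
    rw [norm_mul]
    refine mul_le_mul hgx ?_ (norm_nonneg _) ((abs_nonneg _).trans hgx)
    exact abs_le.2 ⟨by linarith, by linarith⟩
  · filter_upwards [ae_mem_Ioo b] with x hx
    exact ((tendsto_add_rpow (sub_pos.2 hx.2).ne' _).sub
      (tendsto_add_rpow hx.1.ne' _)).const_mul _

theorem integral_hyperKer_mul_sub (hα : 0 < α) (hα1 : α < 1) (hg : Measurable g)
    (hB : ∀ x ∈ Ioc 0 b, |g x| ≤ B)
    (hi : Integrable (fun p : ℝ × ℝ => hyperKer α p.1 p.2 * (g p.1 - g p.2))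
      ((volIoc b).prod (volIoc b))) :
    ∫ p : ℝ × ℝ, hyperKer α p.1 p.2 * (g p.1 - g p.2) ∂(volIoc b).prod (volIoc b)
      = (∫ x, g x * ((b - x) ^ (-α) - x ^ (-α)) ∂volIoc b) / α := by
  refine tendsto_nhds_unique ((tendsto_integral_regKer_mul_sub hα hg hi).congr' ?_)
    ((tendsto_integral_mul_shifted_rpow hα hα1 hg hB).div_const α)
  filter_upwards [self_mem_nhdsWithin] with ε hε
  exact integral_regKer_mul_sub hα hε (integrable_of_abs_le hg hB)

end HyperKer

/-! ### The Marchaud form of the Riemann–Liouville derivative -/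

/-- The Marchaud form of `Γ(1-α)` times the Riemann–Liouville derivative of `e`. -/
noncomputable def marchaud (α : ℝ) (e : ℝ → ℝ) (x : ℝ) : ℝ :=
  x ^ (-α) * e x + α * ∫ y in Ioc 0 x, (x - y) ^ (-1 - α) * (e x - e y)

/-- The regularity under which the Marchaud form of `e` is integrable on `(0, b]`: a bounded
measurable function whose hypersingular difference quotient is integrable. -/
structure MarchaudRegular (α b B : ℝ) (e : ℝ → ℝ) : Prop where
  measurable : Measurable e
  abs_le : ∀ x ∈ Ioc 0 b, |e x| ≤ B
  integrable : Integrable (fun p : ℝ × ℝ => hyperKer α p.1 p.2 * (e p.1 - e p.2))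
    ((volIoc b).prod (volIoc b))

theorem measurable_marchaud {α : ℝ} {e : ℝ → ℝ} (he : Measurable e) :
    Measurable (marchaud α e) := by
  have hF : Measurable fun p : ℝ × ℝ => (p.1 - p.2) ^ (-1 - α) * (e p.1 - e p.2) := by fun_prop
  have hind : Measurable fun p : ℝ × ℝ => {q : ℝ × ℝ | q.2 ∈ Ioc 0 q.1}.indicator
      (fun p : ℝ × ℝ => (p.1 - p.2) ^ (-1 - α) * (e p.1 - e p.2)) p :=
    hF.indicator ((measurableSet_lt measurable_const measurable_snd).inter
      (measurableSet_le measurable_snd measurable_fst))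
  have hmeas : Measurable fun x => ∫ y in Ioc 0 x, (x - y) ^ (-1 - α) * (e x - e y) := by
    simp only [← integral_indicator measurableSet_Ioc]
    exact hind.stronglyMeasurable.integral_prod_right.measurable
  exact ((measurable_id.pow_const _).mul he).add (hmeas.const_mul α)

namespace MarchaudRegular

variable {α b B B' x : ℝ} {e f : ℝ → ℝ}

theorem mono (he : MarchaudRegular α b B e) (hx : x ≤ b) : MarchaudRegular α x B e where
  measurable := he.measurable
  abs_le y hy := he.abs_le y (Ioc_subset_Ioc_right hx hy)
  integrable := by
    have hle : volIoc x ≤ volIoc b := Measure.restrict_mono (Ioc_subset_Ioc_right hx) le_rfl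
    exact he.integrable.mono_measure (Measure.prod_mono hle hle)

theorem integrable_self (he : MarchaudRegular α b B e) : Integrable e (volIoc b) :=
  integrable_of_abs_le he.measurable he.abs_le

theorem sub (he : MarchaudRegular α b B e) (hf : MarchaudRegular α b B' f) :
    MarchaudRegular α b (B + B') (fun x => e x - f x) where
  measurable := he.measurable.sub hf.measurable
  abs_le x hx := (abs_sub _ _).trans (add_le_add (he.abs_le x hx) (hf.abs_le x hx))
  integrable := (he.integrable.sub hf.integrable).congr (.of_forall fun p => by
    simp only [Pi.sub_apply]
    ring)

theorem mul (he : MarchaudRegular α b B e) (hf : MarchaudRegular α b B' f) :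
    MarchaudRegular α b (B * B') (fun x => e x * f x) where
  measurable := he.measurable.mul hf.measurable
  abs_le x hx := by
    rw [abs_mul]
    exact mul_le_mul (he.abs_le x hx) (hf.abs_le x hx) (abs_nonneg _)
      ((abs_nonneg _).trans (he.abs_le x hx))
  integrable :=
    ((integrable_mul_fst_of_abs_le hf.measurable hf.abs_le he.integrable).add
      (integrable_mul_snd_of_abs_le he.measurable he.abs_le hf.integrable)).congr
        (.of_forall fun p => by
          simp only [Pi.add_apply]
          ring)

end MarchaudRegular

theorem marchaud_eq_integral_hyperKer {α b x : ℝ} (e : ℝ → ℝ) (hx : x ≤ b) :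
    marchaud α e x = x ^ (-α) * e x + α * ∫ y, hyperKer α x y * (e x - e y) ∂volIoc b := by
  rw [marchaud, hyperKer, integral_causal_mul_right (fun y => e x - e y) hx]

section Marchaud

variable {α b B : ℝ} {e : ℝ → ℝ}

theorem integrable_marchaud (hα1 : α < 1) (he : MarchaudRegular α b B e) :
    Integrable (marchaud α e) (volIoc b) := by
  refine ((integrable_mul_of_abs_le he.measurable he.abs_le (integrable_rpow_neg hα1 b)).add
    (he.integrable.integral_prod_left.const_mul α)).congr ?_
  filter_upwards [ae_mem_Ioo b] with x hx
  exact (marchaud_eq_integral_hyperKer e hx.2.le).symm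

theorem integral_marchaud_mul (hα1 : α < 1) (he : MarchaudRegular α b B e) {X : ℝ → ℝ} {B' : ℝ}
    (hX : Measurable X) (hX' : ∀ x ∈ Ioc 0 b, |X x| ≤ B') :
    ∫ x, marchaud α e x * X x ∂volIoc b = (∫ x, x ^ (-α) * e x * X x ∂volIoc b)
      + α * ∫ p : ℝ × ℝ, hyperKer α p.1 p.2 * (e p.1 - e p.2) * X p.1
          ∂(volIoc b).prod (volIoc b) := by
  have hi := integrable_mul_fst_of_abs_le hX hX' he.integrable
  rw [integral_prod _ hi, ← integral_const_mul, ← integral_add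
    (integrable_mul_of_abs_le hX hX' (integrable_mul_of_abs_le he.measurable he.abs_le
      (integrable_rpow_neg hα1 b))) (hi.integral_prod_left.const_mul α)]
  refine setIntegral_congr_fun measurableSet_Ioc fun x hx => ?_
  simp only [marchaud_eq_integral_hyperKer e hx.2, integral_mul_const]
  ring

theorem integral_marchaud (hα : 0 < α) (hα1 : α < 1) (he : MarchaudRegular α b B e) :
    ∫ x, marchaud α e x ∂volIoc b = ∫ x, (b - x) ^ (-α) * e x ∂volIoc b := by
  have hone := integral_marchaud_mul hα1 he (X := fun _ => 1) (B' := 1) measurable_const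
    (by simp)
  simp only [mul_one] at hone
  have hleft := integrable_mul_of_abs_le he.measurable he.abs_le (integrable_rpow_neg hα1 b)
  have hdiff := integrable_mul_of_abs_le he.measurable he.abs_le
    ((integrable_sub_rpow_neg hα1 b).sub (integrable_rpow_neg hα1 b))
  rw [hone, integral_hyperKer_mul_sub hα hα1 he.measurable he.abs_le he.integrable,
    mul_div_cancel₀ _ hα.ne']
  simp only [mul_comm (e _)]
  exact (integral_add hleft hdiff).symm.trans (by simp only [Pi.sub_apply, ← add_mul,
    add_sub_cancel])

theorem hasDerivAt_integral_of_integrable {f : ℝ → ℝ} (hf : Integrable f (volIoc b)) :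
    ∀ᵐ x ∂volIoc b, HasDerivAt (fun x => ∫ y in (0 : ℝ)..x, f y) (f x) x := by
  rcases le_or_gt b 0 with hb | hb
  · simp [volIoc, Ioc_eq_empty_of_le hb]
  have hf' : IntervalIntegrable f volume 0 b :=
    (intervalIntegrable_iff_integrableOn_Ioc_of_le hb.le).2 hf
  filter_upwards [ae_restrict_of_ae hf'.ae_hasDerivAt_integral,
    ae_restrict_mem measurableSet_Ioc] with x hderiv hx
  exact hderiv (by rw [uIcc_of_le hb.le]; exact Ioc_subset_Icc_self hx) 0 left_mem_uIcc

theorem ae_eq_marchaud (hα : 0 < α) (hα1 : α < 1) (he : MarchaudRegular α b B e) {D : ℝ → ℝ}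
    (hD : ∀ᵐ x ∂volIoc b,
      HasDerivAt (fun x => ∫ y in (0 : ℝ)..x, (x - y) ^ (-α) * e y) (D x) x) :
    D =ᵐ[volIoc b] marchaud α e := by
  filter_upwards [hD, hasDerivAt_integral_of_integrable (integrable_marchaud hα1 he),
    ae_mem_Ioo b] with x hDx hMx hx
  refine hDx.unique (hMx.congr_of_eventuallyEq ?_)
  filter_upwards [Ioo_mem_nhds hx.1 hx.2] with z hz
  rw [intervalIntegral.integral_of_le hz.1.le, intervalIntegral.integral_of_le hz.1.le]
  exact (integral_marchaud hα hα1 (he.mono hz.2.le)).symm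

theorem ae_eq_zero_of_forall_integral_eq_zero {f : ℝ → ℝ} (hf : Integrable f (volIoc b))
    (h : ∀ x ∈ Ioc 0 b, ∫ y, f y ∂volIoc x = 0) : ∀ᵐ x ∂volIoc b, f x = 0 := by
  filter_upwards [hasDerivAt_integral_of_integrable hf, ae_mem_Ioo b] with x hfx hx
  refine hfx.unique ((hasDerivAt_const x (0 : ℝ)).congr_of_eventuallyEq ?_)
  filter_upwards [Ioo_mem_nhds hx.1 hx.2] with z hz
  rw [intervalIntegral.integral_of_le hz.1.le]
  exact h z ⟨hz.1, hz.2.le⟩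

end Marchaud

/-! ### Abel inversion -/

section Abel

variable {α : ℝ}

theorem integrableOn_beta (hα : 0 < α) (hα1 : α < 1) {u x : ℝ} (hux : u < x) :
    IntegrableOn (fun w => (x - w) ^ (α - 1) * (w - u) ^ (-α)) (Ioc u x) := by
  obtain ⟨m, hum, hmx⟩ := exists_between hux
  rw [← Ioc_union_Ioc_eq_Ioc hum.le hmx.le]
  refine IntegrableOn.union ?_ ?_
  · refine Integrable.bdd_mul (c := (x - m) ^ (α - 1))
      (integrableOn_sub_left_rpow hum.le (by linarith))
      (Measurable.aestronglyMeasurable (by fun_prop)) ?_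
    filter_upwards [ae_restrict_mem measurableSet_Ioc] with w hw
    rw [Real.norm_of_nonneg (Real.rpow_nonneg (by linarith [hw.2]) _)]
    exact Real.rpow_le_rpow_of_nonpos (by linarith) (by linarith [hw.2]) (by linarith)
  · refine Integrable.mul_bdd (c := (m - u) ^ (-α))
      (integrableOn_sub_right_rpow hmx.le (by linarith))
      (Measurable.aestronglyMeasurable (by fun_prop)) ?_
    filter_upwards [ae_restrict_mem measurableSet_Ioc] with w hw
    rw [Real.norm_of_nonneg (Real.rpow_nonneg (by linarith [hw.1]) _)]
    exact Real.rpow_le_rpow_of_nonpos (by linarith) (by linarith [hw.1]) (by linarith)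

theorem integral_beta (hα : 0 < α) (hα1 : α < 1) {u x : ℝ} (hux : u < x) :
    ∫ w in Ioc u x, (x - w) ^ (α - 1) * (w - u) ^ (-α)
      = Real.Gamma α * Real.Gamma (1 - α) := by
  have hd : 0 < x - u := sub_pos.2 hux
  have hscaled := Complex.betaIntegral_scaled ((1 - α : ℝ) : ℂ) (α : ℂ) hd
  have hbeta : Complex.betaIntegral ((1 - α : ℝ) : ℂ) (α : ℂ)
      = (Real.Gamma α * Real.Gamma (1 - α) : ℝ) := by
    rw [Complex.betaIntegral_eq_Gamma_mul_div _ _ (by simpa using hα1) (by simpa using hα),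
      Complex.Gamma_ofReal, Complex.Gamma_ofReal]
    push_cast
    simp [mul_comm]
  have hexp : ((1 - α : ℝ) : ℂ) + α - 1 = 0 := by push_cast; ring
  have hshift := intervalIntegral.integral_comp_sub_right (a := u) (b := x)
    (fun z : ℝ => (z : ℂ) ^ (((1 - α : ℝ) : ℂ) - 1) * (((x - u : ℝ) : ℂ) - z) ^ ((α : ℂ) - 1)) u
  rw [sub_self, hscaled, hbeta, hexp, Complex.cpow_zero, one_mul] at hshift
  rw [← intervalIntegral.integral_of_le hux.le, ← Complex.ofReal_inj, ← hshift,
    ← intervalIntegral.integral_ofReal]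
  refine intervalIntegral.integral_congr fun w hw => ?_
  rw [uIcc_of_le hux.le] at hw
  rw [Complex.ofReal_mul, Complex.ofReal_cpow (sub_nonneg.2 hw.2),
    Complex.ofReal_cpow (sub_nonneg.2 hw.1)]
  push_cast
  ring_nf

theorem one_le_Gamma_mul_Gamma_one_sub (hα : 0 < α) (hα1 : α < 1) :
    1 ≤ Real.Gamma α * Real.Gamma (1 - α) := by
  rw [Real.Gamma_mul_Gamma_one_sub, one_le_div
    (Real.sin_pos_of_pos_of_lt_pi (by positivity) (by nlinarith [Real.pi_pos]))]
  linarith [Real.sin_le_one (Real.pi * α), Real.pi_gt_three]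

variable {x : ℝ} {M e : ℝ → ℝ}

theorem integral_abel (hα : 0 < α) (hα1 : α < 1)
    (hMm : Measurable M) (hM : Integrable M (volIoc x)) (hem : Measurable e)
    (he : Integrable e (volIoc x))
    (hMe : ∀ w ∈ Ioc 0 x, ∫ y, M y ∂volIoc w = ∫ y, (w - y) ^ (-α) * e y ∂volIoc w) :
    ∫ w, ∫ y, (w - y) ^ (α - 1) * M y ∂volIoc w ∂volIoc x
      = Real.Gamma α * Real.Gamma (1 - α) * ∫ y, e y ∂volIoc x := by
  have hα' : -1 < α - 1 := by linarith
  have hbound : ∀ y ∈ Ioo 0 x, (x - y) ^ (α - 1 + 1) / (α - 1 + 1) ≤ x ^ α / α := fun y hy => by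
    rw [sub_add_cancel]
    gcongr
    exacts [sub_nonneg.2 hy.2.le, by linarith [hy.1]]
  calc ∫ w, ∫ y, (w - y) ^ (α - 1) * M y ∂volIoc w ∂volIoc x
      = ∫ y, (∫ w in Ioc y x, (w - y) ^ (α - 1)) * M y ∂volIoc x :=
        integral_integral_causal (by unfold Function.uncurry; fun_prop)
          (fun w _ y hy => Real.rpow_nonneg (sub_nonneg.2 hy.le) _)
          (fun y hy => ⟨integrableOn_sub_left_rpow hy.2.le hα',
            (integral_sub_left_rpow hy.2.le hα').trans_le (hbound y hy)⟩) hMm hM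
    _ = ∫ y, (∫ w in Ioc y x, (x - w) ^ (α - 1)) * M y ∂volIoc x :=
        setIntegral_congr_fun measurableSet_Ioc fun y hy => by
          simp only [integral_sub_left_rpow hy.2 hα', integral_sub_right_rpow hy.2 hα']
    _ = ∫ w, ∫ y, (x - w) ^ (α - 1) * M y ∂volIoc w ∂volIoc x :=
        (integral_integral_causal (K := fun w _ => (x - w) ^ (α - 1))
          (by unfold Function.uncurry; fun_prop)
          (fun w hw y _ => Real.rpow_nonneg (sub_nonneg.2 hw) _)
          (fun y hy => ⟨integrableOn_sub_right_rpow hy.2.le hα',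
            (integral_sub_right_rpow hy.2.le hα').trans_le (hbound y hy)⟩) hMm hM).symm
    _ = ∫ w, ∫ y, (x - w) ^ (α - 1) * (w - y) ^ (-α) * e y ∂volIoc w ∂volIoc x :=
        setIntegral_congr_fun measurableSet_Ioc fun w hw => by
          simp only [integral_const_mul, mul_assoc, hMe w hw]
    _ = ∫ y, (∫ w in Ioc y x, (x - w) ^ (α - 1) * (w - y) ^ (-α)) * e y ∂volIoc x :=
        integral_integral_causal (by unfold Function.uncurry; fun_prop)
          (fun w hw y hy => mul_nonneg (Real.rpow_nonneg (sub_nonneg.2 hw) _)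
            (Real.rpow_nonneg (sub_nonneg.2 hy.le) _))
          (fun y hy => ⟨integrableOn_beta hα hα1 hy.2, (integral_beta hα hα1 hy.2).le⟩) hem he
    _ = _ := by
        rw [← integral_const_mul]
        refine integral_congr_ae ?_
        filter_upwards [ae_mem_Ioo x] with y hy
        rw [integral_beta hα hα1 hy.2]

/-- The Abel kernel `(x - y)^(α-1)` on `y < x`. -/
noncomputable def abelKer (α : ℝ) : ℝ → ℝ → ℝ := causal fun x y => (x - y) ^ (α - 1)

theorem abelKer_nonneg (α x y : ℝ) : 0 ≤ abelKer α x y :=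
  causal_nonneg (fun _ _ h => Real.rpow_nonneg (sub_nonneg.2 h.le) _) x y

theorem measurable_abelKer (α : ℝ) : Measurable (Function.uncurry (abelKer α)) :=
  measurable_causal (by unfold Function.uncurry; fun_prop)

theorem integrable_abelKer_left (hα : 0 < α) {b y : ℝ} (hy : y ∈ Ioc 0 b) :
    Integrable (abelKer α · y) (volIoc b) :=
  (integrable_causal_left hy.1.le).2 (integrableOn_sub_left_rpow hy.2 (by linarith))

theorem integral_abelKer_left (hα : 0 < α) {b y : ℝ} (hy : y ∈ Ioc 0 b) :
    ∫ x, abelKer α x y ∂volIoc b = (b - y) ^ α / α := by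
  rw [abelKer, integral_causal_left hy.1.le, integral_sub_left_rpow hy.2 (by linarith),
    sub_add_cancel]

theorem integral_abelKer_left_le (hα : 0 < α) {b y : ℝ} (hy : y ∈ Ioc 0 b) :
    ∫ x, abelKer α x y ∂volIoc b ≤ b ^ α / α := by
  rw [integral_abelKer_left hα hy]
  gcongr
  exacts [sub_nonneg.2 hy.2, by linarith [hy.1]]

theorem integrable_abelKer_mul (hα : 0 < α) {b : ℝ} (hMm : Measurable M)
    (hM : Integrable M (volIoc b)) :
    Integrable (fun p : ℝ × ℝ => abelKer α p.1 p.2 * M p.2) ((volIoc b).prod (volIoc b)) := by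
  refine integrable_kernel_mul_snd (m := fun _ => b ^ α / α) (measurable_abelKer α)
    (abelKer_nonneg α) ?_ hMm (hM.abs.mul_const _)
  filter_upwards [ae_restrict_mem measurableSet_Ioc] with y hy
  exact ⟨integrable_abelKer_left hα hy, integral_abelKer_left_le hα hy⟩

theorem ae_eq_integral_abelKer_mul_marchaud (hα : 0 < α) (hα1 : α < 1) {b B : ℝ}
    (he : MarchaudRegular α b B e) :
    ∀ᵐ x ∂volIoc b, ∫ y, abelKer α x y * marchaud α e y ∂volIoc b
      = Real.Gamma α * Real.Gamma (1 - α) * e x := by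
  have hMm := measurable_marchaud (α := α) he.measurable
  have hJ := (integrable_abelKer_mul hα hMm (integrable_marchaud hα1 he)).integral_prod_left
  have hzero := ae_eq_zero_of_forall_integral_eq_zero (hJ.sub (he.integrable_self.const_mul
    (Real.Gamma α * Real.Gamma (1 - α)))) fun x hx => ?_
  · filter_upwards [hzero] with x hx using sub_eq_zero.1 hx
  have hex := he.mono hx.2
  have habel := integral_abel hα hα1 hMm (integrable_marchaud hα1 hex) he.measurable
    hex.integrable_self fun w hw => integral_marchaud hα hα1 (hex.mono hw.2)
  have hJx : ∫ w, ∫ y, abelKer α w y * marchaud α e y ∂volIoc b ∂volIoc x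
      = ∫ w, ∫ y, (w - y) ^ (α - 1) * marchaud α e y ∂volIoc w ∂volIoc x :=
    setIntegral_congr_fun measurableSet_Ioc fun w hw =>
      integral_causal_mul_right _ (hw.2.trans hx.2)
  refine (integral_sub (hJ.mono_measure (Measure.restrict_mono (Ioc_subset_Ioc_right hx.2) le_rfl))
    (hex.integrable_self.const_mul _)).trans ?_
  rw [integral_const_mul, hJx, habel, sub_self]

theorem integral_marchaud_mul_integral_abelKer (hα : 0 < α) (hα1 : α < 1) {b B : ℝ}
    (he : MarchaudRegular α b B e) :
    ∫ y, marchaud α e y * ∫ x, abelKer α x y * e x ∂volIoc b ∂volIoc b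
      = Real.Gamma α * Real.Gamma (1 - α) * ∫ x, e x ^ 2 ∂volIoc b := by
  have hi := integrable_mul_fst_of_abs_le he.measurable he.abs_le
    (integrable_abelKer_mul hα (measurable_marchaud (α := α) he.measurable)
      (integrable_marchaud hα1 he))
  calc ∫ y, marchaud α e y * ∫ x, abelKer α x y * e x ∂volIoc b ∂volIoc b
      = ∫ y, ∫ x, abelKer α x y * marchaud α e y * e x ∂volIoc b ∂volIoc b := by
        congr 1 with y
        rw [← integral_const_mul]
        congr 1 with x
        ring
    _ = ∫ x, (∫ y, abelKer α x y * marchaud α e y ∂volIoc b) * e x ∂volIoc b := by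
        rw [← integral_integral_swap hi]
        simp only [integral_mul_const]
    _ = _ := by
        rw [← integral_const_mul]
        refine integral_congr_ae ?_
        filter_upwards [ae_eq_integral_abelKer_mul_marchaud hα hα1 he] with x hx
        rw [hx]
        ring

end Abel

/-! ### Meshes and cells -/

/-- An infinite mesh: strictly increasing nodes `t 0 = 0 < t 1 < ⋯`, of which only the first `n`
cells `(t k, t (k + 1)]`, `k < n`, matter on `(0, t n]`. -/
structure IsMesh (t : ℕ → ℝ) : Prop where
  strictMono : StrictMono t
  zero : t 0 = 0

/-- The index of the cell `(t k, t (k + 1)]` containing `x`. -/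
noncomputable def cellIdx (t : ℕ → ℝ) (n : ℕ) (x : ℝ) : ℕ :=
  ((Finset.range n).filter fun k => t (k + 1) < x).card

/-- Left endpoint of the cell of `x`. -/
noncomputable def cellL (t : ℕ → ℝ) (n : ℕ) (x : ℝ) : ℝ := t (cellIdx t n x)

/-- Right endpoint of the cell of `x`. -/
noncomputable def cellR (t : ℕ → ℝ) (n : ℕ) (x : ℝ) : ℝ := t (cellIdx t n x + 1)

section Cells

variable {t : ℕ → ℝ} {n : ℕ}

theorem measurable_cellIdx (t : ℕ → ℝ) (n : ℕ) : Measurable (cellIdx t n) := by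
  have h : cellIdx t n = fun x => ∑ k ∈ Finset.range n, if t (k + 1) < x then 1 else 0 :=
    funext fun x => Finset.card_filter _ _
  rw [h]
  exact Finset.measurable_sum _ fun k _ =>
    Measurable.ite measurableSet_Ioi measurable_const measurable_const

theorem measurable_comp_cellIdx {β : Type*} [MeasurableSpace β] (F : ℕ → β) (t : ℕ → ℝ) (n : ℕ) :
    Measurable fun x => F (cellIdx t n x) :=
  (measurable_from_nat (f := F)).comp (measurable_cellIdx t n)

theorem measurable_cellL (t : ℕ → ℝ) (n : ℕ) : Measurable (cellL t n) :=
  measurable_comp_cellIdx t t n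

theorem measurable_cellR (t : ℕ → ℝ) (n : ℕ) : Measurable (cellR t n) :=
  measurable_comp_cellIdx (fun k => t (k + 1)) t n

namespace IsMesh

variable {x y : ℝ} {k : ℕ}

theorem le_succ (ht : IsMesh t) (k : ℕ) : t k ≤ t (k + 1) := ht.strictMono.monotone k.le_succ

theorem nonneg (ht : IsMesh t) (k : ℕ) : 0 ≤ t k :=
  ht.zero.symm.trans_le (ht.strictMono.monotone k.zero_le)

theorem cell_subset (ht : IsMesh t) (hk : k < n) : Ioc (t k) (t (k + 1)) ⊆ Ioc 0 (t n) :=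
  Ioc_subset_Ioc (ht.nonneg k) (ht.strictMono.monotone hk)

theorem cellIdx_eq (ht : IsMesh t) (hk : k < n) (hx : x ∈ Ioc (t k) (t (k + 1))) :
    cellIdx t n x = k := by
  have hfilter : (Finset.range n).filter (fun j => t (j + 1) < x) = Finset.range k := by
    ext j
    simp only [Finset.mem_filter, Finset.mem_range]
    refine ⟨fun h => ?_, fun h => ⟨h.trans hk, ?_⟩⟩
    · have := ht.strictMono.lt_iff_lt.1 (h.2.trans_le hx.2)
      omega
    · exact (ht.strictMono.monotone h).trans_lt hx.1
  rw [cellIdx, hfilter, Finset.card_range]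

theorem exists_mem_cell (ht : IsMesh t) (hx : x ∈ Ioc 0 (t n)) :
    ∃ k < n, x ∈ Ioc (t k) (t (k + 1)) := by
  have hx' : x ∈ Ioc (t 0) (t n) := by rwa [ht.zero]
  obtain ⟨k, hk, hxk⟩ := mem_iUnion₂.1
    ((ht.strictMono.monotone.biUnion_Ico_Ioc_map_succ 0 n).ge hx')
  exact ⟨k, hk.2, hxk⟩

theorem cellIdx_lt (ht : IsMesh t) (hx : x ∈ Ioc 0 (t n)) : cellIdx t n x < n := by
  obtain ⟨k, hk, hxk⟩ := ht.exists_mem_cell hx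
  rwa [ht.cellIdx_eq hk hxk]

theorem mem_cell (ht : IsMesh t) (hx : x ∈ Ioc 0 (t n)) :
    x ∈ Ioc (cellL t n x) (cellR t n x) := by
  obtain ⟨k, hk, hxk⟩ := ht.exists_mem_cell hx
  rwa [cellL, cellR, ht.cellIdx_eq hk hxk]

theorem cellL_nonneg (ht : IsMesh t) (x : ℝ) : 0 ≤ cellL t n x := ht.nonneg _

theorem cellR_le (ht : IsMesh t) (hx : x ∈ Ioc 0 (t n)) : cellR t n x ≤ t n :=
  ht.strictMono.monotone (ht.cellIdx_lt hx)

theorem le_cellL_iff (ht : IsMesh t) (hx : x ∈ Ioc 0 (t n)) (hy : y ∈ Ioc 0 (t n)) :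
    y ≤ cellL t n x ↔ cellR t n y < x := by
  have hx' := ht.mem_cell hx
  have hy' := ht.mem_cell hy
  constructor <;> intro h
  · have hidx : cellIdx t n y < cellIdx t n x := ht.strictMono.lt_iff_lt.1 (hy'.1.trans_le h)
    exact (ht.strictMono.monotone hidx).trans_lt hx'.1
  · have hidx := ht.strictMono.lt_iff_lt.1 (h.trans_le hx'.2)
    exact hy'.2.trans (ht.strictMono.monotone (Nat.le_of_lt_succ hidx))

theorem cellIdx_eq_of_cellL_lt (ht : IsMesh t) (hx : x ∈ Ioc 0 (t n)) (h : cellL t n x < y)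
    (hyx : y ≤ x) : cellIdx t n y = cellIdx t n x :=
  ht.cellIdx_eq (ht.cellIdx_lt hx) ⟨h, hyx.trans (ht.mem_cell hx).2⟩

theorem ae_lt_cellR (ht : IsMesh t) : ∀ᵐ x ∂volIoc (t n), x < cellR t n x := by
  have hne : ∀ᵐ x ∂volIoc (t n), ∀ k, x ≠ t k := ae_all_iff.2 fun k => Measure.ae_ne _ _
  filter_upwards [hne, ae_restrict_mem measurableSet_Ioc] with x hx hxm
  exact (ht.mem_cell hxm).2.lt_of_ne (hx _)

theorem integrable_of_cells (ht : IsMesh t) {f : ℝ → ℝ}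
    (h : ∀ k < n, IntegrableOn f (Ioc (t k) (t (k + 1)))) : Integrable f (volIoc (t n)) := by
  have hi := IntervalIntegrable.trans_iterate (a := t) (n := n) (f := f) (μ := volume)
    fun k hk => (intervalIntegrable_iff_integrableOn_Ioc_of_le (ht.le_succ k)).2 (h k hk)
  rw [ht.zero] at hi
  exact (intervalIntegrable_iff_integrableOn_Ioc_of_le (ht.nonneg n)).1 hi

theorem integral_eq_sum_cells (ht : IsMesh t) {f : ℝ → ℝ} (hf : Integrable f (volIoc (t n))) :
    ∫ x, f x ∂volIoc (t n) = ∑ k ∈ Finset.range n, ∫ x in Ioc (t k) (t (k + 1)), f x := by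
  have h := intervalIntegral.sum_integral_adjacent_intervals (a := t) (n := n) (f := f)
    (μ := volume) fun k hk => (intervalIntegrable_iff_integrableOn_Ioc_of_le (ht.le_succ k)).2
      (IntegrableOn.mono_set hf (ht.cell_subset hk))
  rw [ht.zero, intervalIntegral.integral_of_le (ht.nonneg n)] at h
  rw [← h]
  exact Finset.sum_congr rfl fun k _ => intervalIntegral.integral_of_le (ht.le_succ k)

section CompCellIdx

variable {f : ℕ → ℝ → ℝ}

theorem eqOn_comp_cellIdx (ht : IsMesh t) (f : ℕ → ℝ → ℝ) (hk : k < n) :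
    EqOn (f k) (fun x => f (cellIdx t n x) x) (Ioc (t k) (t (k + 1))) := fun x hx => by
  simp only [ht.cellIdx_eq hk hx]

theorem integrable_comp_cellIdx (ht : IsMesh t)
    (hf : ∀ k < n, IntegrableOn (f k) (Ioc (t k) (t (k + 1)))) :
    Integrable (fun x => f (cellIdx t n x) x) (volIoc (t n)) :=
  ht.integrable_of_cells fun k hk =>
    (hf k hk).congr_fun (ht.eqOn_comp_cellIdx f hk) measurableSet_Ioc

theorem integral_comp_cellIdx (ht : IsMesh t)
    (hf : ∀ k < n, IntegrableOn (f k) (Ioc (t k) (t (k + 1)))) :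
    ∫ x, f (cellIdx t n x) x ∂volIoc (t n)
      = ∑ k ∈ Finset.range n, ∫ x in Ioc (t k) (t (k + 1)), f k x := by
  rw [ht.integral_eq_sum_cells (ht.integrable_comp_cellIdx hf)]
  exact Finset.sum_congr rfl fun k hk =>
    (setIntegral_congr_fun measurableSet_Ioc
      (ht.eqOn_comp_cellIdx f (Finset.mem_range.1 hk))).symm

end CompCellIdx

variable {γ : ℝ}

theorem integrable_cellL_rpow (ht : IsMesh t) (F : ℕ → ℝ) (hγ : -1 < γ) :
    Integrable (fun x => F (cellIdx t n x) * (x - cellL t n x) ^ γ) (volIoc (t n)) :=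
  ht.integrable_comp_cellIdx (f := fun k x => F k * (x - t k) ^ γ) fun k _ =>
    (integrableOn_sub_left_rpow (ht.le_succ k) hγ).const_mul (F k)

theorem integral_cellL_rpow (ht : IsMesh t) (F : ℕ → ℝ) (hγ : -1 < γ) :
    ∫ x, F (cellIdx t n x) * (x - cellL t n x) ^ γ ∂volIoc (t n)
      = ∑ k ∈ Finset.range n, F k * ((t (k + 1) - t k) ^ (γ + 1) / (γ + 1)) := by
  refine (ht.integral_comp_cellIdx (f := fun k x => F k * (x - t k) ^ γ) fun k _ =>
    (integrableOn_sub_left_rpow (ht.le_succ k) hγ).const_mul (F k)).trans ?_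
  simp only [integral_const_mul, integral_sub_left_rpow (ht.le_succ _) hγ]

theorem integrable_cellR_rpow (ht : IsMesh t) (F : ℕ → ℝ) (hγ : -1 < γ) :
    Integrable (fun x => F (cellIdx t n x) * (cellR t n x - x) ^ γ) (volIoc (t n)) :=
  ht.integrable_comp_cellIdx (f := fun k x => F k * (t (k + 1) - x) ^ γ) fun k _ =>
    (integrableOn_sub_right_rpow (ht.le_succ k) hγ).const_mul (F k)

theorem integral_cellR_rpow (ht : IsMesh t) (F : ℕ → ℝ) (hγ : -1 < γ) :
    ∫ x, F (cellIdx t n x) * (cellR t n x - x) ^ γ ∂volIoc (t n)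
      = ∑ k ∈ Finset.range n, F k * ((t (k + 1) - t k) ^ (γ + 1) / (γ + 1)) := by
  refine (ht.integral_comp_cellIdx (f := fun k x => F k * (t (k + 1) - x) ^ γ) fun k _ =>
    (integrableOn_sub_right_rpow (ht.le_succ k) hγ).const_mul (F k)).trans ?_
  simp only [integral_const_mul, integral_sub_right_rpow (ht.le_succ _) hγ]

end IsMesh

end Cells

/-! ### Splitting the hypersingular kernel along the mesh -/

section SplitKernel

variable {t : ℕ → ℝ} {n : ℕ} {α : ℝ}

/-- The part of the hypersingular kernel coupling different cells. -/
noncomputable def offCellKer (t : ℕ → ℝ) (n : ℕ) (α x y : ℝ) : ℝ :=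
  if y ≤ cellL t n x then hyperKer α x y else 0

/-- The kernel `(x - y)^(-α)` on `y < x`, restricted to pairs in the same cell. -/
noncomputable def inCellKer (t : ℕ → ℝ) (n : ℕ) (α x y : ℝ) : ℝ :=
  if cellL t n x < y then abelKer (1 - α) x y else 0

theorem offCellKer_nonneg (x y : ℝ) : 0 ≤ offCellKer t n α x y := by
  unfold offCellKer
  split_ifs
  exacts [hyperKer_nonneg _ _ _, le_rfl]

theorem offCellKer_le_hyperKer (x y : ℝ) : offCellKer t n α x y ≤ hyperKer α x y := by
  unfold offCellKer
  split_ifs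
  exacts [le_rfl, hyperKer_nonneg _ _ _]

theorem inCellKer_nonneg (x y : ℝ) : 0 ≤ inCellKer t n α x y := by
  unfold inCellKer
  split_ifs
  exacts [abelKer_nonneg _ _ _, le_rfl]

theorem measurable_offCellKer (t : ℕ → ℝ) (n : ℕ) (α : ℝ) :
    Measurable (Function.uncurry (offCellKer t n α)) :=
  Measurable.ite (measurableSet_le measurable_snd ((measurable_cellL t n).comp measurable_fst))
    (measurable_hyperKer α) measurable_const

theorem measurable_inCellKer (t : ℕ → ℝ) (n : ℕ) (α : ℝ) :
    Measurable (Function.uncurry (inCellKer t n α)) :=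
  Measurable.ite (measurableSet_lt ((measurable_cellL t n).comp measurable_fst) measurable_snd)
    (measurable_abelKer (1 - α)) measurable_const

theorem hyperKer_mul_sub (α x y : ℝ) : hyperKer α x y * (x - y) = abelKer (1 - α) x y := by
  unfold hyperKer abelKer causal
  split_ifs with h
  · rw [← Real.rpow_add_one (sub_pos.2 h).ne']
    ring_nf
  · exact zero_mul _

theorem integral_of_eqOn_indicator {b : ℝ} {s : Set ℝ} (hs : MeasurableSet s)
    (hsb : s ⊆ Ioc 0 b) {f g : ℝ → ℝ} (hg : IntegrableOn g s)
    (hfg : EqOn (s.indicator g) f (Ioc 0 b)) :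
    Integrable f (volIoc b) ∧ ∫ y, f y ∂volIoc b = ∫ y in s, g y := by
  have hae : s.indicator g =ᵐ[volIoc b] f := by
    filter_upwards [ae_restrict_mem measurableSet_Ioc] with y hy using hfg hy
  have hrestrict : (volIoc b).restrict s = volume.restrict s := by
    rw [Measure.restrict_restrict hs, inter_eq_left.2 hsb]
  refine ⟨Integrable.congr ?_ hae, ?_⟩
  · rwa [integrable_indicator_iff hs, IntegrableOn, hrestrict]
  · rw [← integral_congr_ae hae, integral_indicator hs, hrestrict]

theorem ae_integral_offCellKer_right_le (hα : 0 < α) (ht : IsMesh t) :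
    ∀ᵐ x ∂volIoc (t n), Integrable (offCellKer t n α x) (volIoc (t n)) ∧
      ∫ y, offCellKer t n α x y ∂volIoc (t n) ≤ (x - cellL t n x) ^ (-α) / α := by
  filter_upwards [ae_restrict_mem measurableSet_Ioc] with x hx
  have hLx : cellL t n x < x := (ht.mem_cell hx).1
  have hker : EqOn ((Ioc 0 (cellL t n x)).indicator fun y => (x - y) ^ (-1 - α))
      (offCellKer t n α x) (Ioc 0 (t n)) := fun y hy => by
    by_cases h : y ≤ cellL t n x
    · rw [indicator_of_mem (show y ∈ Ioc _ _ from ⟨hy.1, h⟩), offCellKer, if_pos h, hyperKer,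
        causal_of_lt _ (h.trans_lt hLx)]
    · rw [indicator_of_notMem fun h' => h h'.2, offCellKer, if_neg h]
  obtain ⟨hinteg, heq⟩ := integral_of_eqOn_indicator measurableSet_Ioc
    (Ioc_subset_Ioc_right (hLx.le.trans hx.2)) (integrableOn_sub_rpow_of_lt hLx) hker
  refine ⟨hinteg, heq.trans_le ?_⟩
  rw [integral_sub_rpow_of_lt (ht.cellL_nonneg x) hLx (by linarith),
    show -1 - α + 1 = -α by ring, sub_zero, div_neg, ← neg_div, neg_sub]
  gcongr
  exact sub_le_self _ (Real.rpow_nonneg hx.1.le _)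

theorem ae_integral_offCellKer_left_le (hα : 0 < α) (ht : IsMesh t) :
    ∀ᵐ y ∂volIoc (t n), Integrable (offCellKer t n α · y) (volIoc (t n)) ∧
      ∫ x, offCellKer t n α x y ∂volIoc (t n) ≤ (cellR t n y - y) ^ (-α) / α := by
  filter_upwards [ae_restrict_mem measurableSet_Ioc, ht.ae_lt_cellR] with y hy hyR
  have hker : EqOn ((Ioc (cellR t n y) (t n)).indicator fun x => (x - y) ^ (-1 - α))
      (offCellKer t n α · y) (Ioc 0 (t n)) := fun x hx => by
    by_cases h : y ≤ cellL t n x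
    · have h' := (ht.le_cellL_iff hx hy).1 h
      simp only [indicator_of_mem (show x ∈ Ioc _ _ from ⟨h', hx.2⟩), offCellKer, if_pos h,
        hyperKer, causal_of_lt _ (hyR.trans h')]
    · have hnot : x ∉ Ioc (cellR t n y) (t n) := fun h' => h ((ht.le_cellL_iff hx hy).2 h'.1)
      simp only [indicator_of_notMem hnot, offCellKer, if_neg h]
  obtain ⟨hinteg, heq⟩ := integral_of_eqOn_indicator measurableSet_Ioc
    (Ioc_subset_Ioc_left (hy.1.le.trans hyR.le)) (integrableOn_rpow_sub_of_lt hyR) hker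
  refine ⟨hinteg, heq.trans_le ?_⟩
  rw [integral_rpow_sub_of_lt (ht.cellR_le hy) hyR (by linarith),
    show -1 - α + 1 = -α by ring, div_neg, ← neg_div, neg_sub]
  gcongr
  exact sub_le_self _ (Real.rpow_nonneg (sub_nonneg.2 hy.2) _)

theorem ae_integral_inCellKer_right_le (hα1 : α < 1) (ht : IsMesh t) :
    ∀ᵐ x ∂volIoc (t n), Integrable (inCellKer t n α x) (volIoc (t n)) ∧
      ∫ y, inCellKer t n α x y ∂volIoc (t n) ≤ (x - cellL t n x) ^ (1 - α) / (1 - α) := by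
  filter_upwards [ae_restrict_mem measurableSet_Ioc] with x hx
  have hLx : cellL t n x < x := (ht.mem_cell hx).1
  have hker : EqOn ((Ioo (cellL t n x) x).indicator fun y => (x - y) ^ (1 - α - 1))
      (inCellKer t n α x) (Ioc 0 (t n)) := fun y _ => by
    by_cases h : cellL t n x < y <;> by_cases h' : y < x <;>
      simp [indicator, inCellKer, abelKer, causal, h, h']
  obtain ⟨hinteg, heq⟩ := integral_of_eqOn_indicator measurableSet_Ioo
    (fun y hy => ⟨(ht.cellL_nonneg x).trans_lt hy.1, hy.2.le.trans hx.2⟩)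
    ((integrableOn_sub_right_rpow hLx.le (by linarith)).mono_set Ioo_subset_Ioc_self) hker
  refine ⟨hinteg, heq.trans_le ?_⟩
  rw [← integral_Ioc_eq_integral_Ioo, integral_sub_right_rpow hLx.le (by linarith),
    sub_add_cancel]

theorem hyperKer_mul_le_split {x y F O Λ : ℝ} (hO : F ≤ O)
    (hΛ : cellL t n x < y → y < x → F ≤ (x - y) * Λ) :
    hyperKer α x y * F ≤ offCellKer t n α x y * O + inCellKer t n α x y * Λ := by
  by_cases h : y ≤ cellL t n x
  · rw [offCellKer, inCellKer, if_pos h, if_neg h.not_gt, zero_mul, add_zero]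
    exact mul_le_mul_of_nonneg_left hO (hyperKer_nonneg _ _ _)
  · rw [offCellKer, inCellKer, if_neg h, if_pos (lt_of_not_ge h), zero_mul, zero_add,
      ← hyperKer_mul_sub, mul_assoc]
    rcases lt_or_ge y x with hyx | hxy
    · exact mul_le_mul_of_nonneg_left (hΛ (lt_of_not_ge h) hyx) (hyperKer_nonneg _ _ _)
    · simp [hyperKer, causal_of_le _ hxy]

end SplitKernel

/-! ### Functions controlled cell by cell -/

/-- A measurable function of size `ε k` on the cell of index `k`, whose increments there scale like
`ε k` times those of `((x - t k) / (t (k + 1) - t k)) ^ σ`. -/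
structure CellSmall (t : ℕ → ℝ) (n : ℕ) (σ : ℝ) (ε : ℕ → ℝ) (η : ℝ → ℝ) : Prop where
  measurable : Measurable η
  nonneg : ∀ k, 0 ≤ ε k
  abs_le : ∀ x ∈ Ioc 0 (t n), |η x| ≤ ε (cellIdx t n x)
  abs_sub_le : ∀ x ∈ Ioc 0 (t n), ∀ y, cellL t n x < y → y < x →
    |η x - η y| ≤ (x - y) * (ε (cellIdx t n x) * (cellR t n x - cellL t n x) ^ (-σ) *
      (x - cellL t n x) ^ (σ - 1))

theorem IsMesh.apply_cellIdx_le_sum {t : ℕ → ℝ} {n : ℕ} {F : ℕ → ℝ} {x : ℝ} (ht : IsMesh t)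
    (hF : ∀ k, 0 ≤ F k) (hx : x ∈ Ioc 0 (t n)) :
    F (cellIdx t n x) ≤ ∑ k ∈ Finset.range n, F k :=
  Finset.single_le_sum (fun k _ => hF k) (Finset.mem_range.2 (ht.cellIdx_lt hx))

namespace CellSmall

variable {t : ℕ → ℝ} {n : ℕ} {α σ : ℝ} {ε : ℕ → ℝ} {η : ℝ → ℝ}

theorem sq_le {x : ℝ} (hη : CellSmall t n σ ε η) (hx : x ∈ Ioc 0 (t n)) :
    η x ^ 2 ≤ ε (cellIdx t n x) ^ 2 :=
  (sq_abs _).symm.trans_le (pow_le_pow_left₀ (abs_nonneg _) (hη.abs_le x hx) 2)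

theorem abs_le_sum {x : ℝ} (ht : IsMesh t) (hη : CellSmall t n σ ε η) (hx : x ∈ Ioc 0 (t n)) :
    |η x| ≤ ∑ k ∈ Finset.range n, ε k :=
  (hη.abs_le x hx).trans (ht.apply_cellIdx_le_sum hη.nonneg hx)

theorem integrable_inCellKer_mul (hα1 : α < 1) (ht : IsMesh t) (hσ : 0 < σ)
    (hη : CellSmall t n σ ε η) :
    Integrable (fun p : ℝ × ℝ => inCellKer t n α p.1 p.2 * (ε (cellIdx t n p.1) *
        (cellR t n p.1 - cellL t n p.1) ^ (-σ) * (p.1 - cellL t n p.1) ^ (σ - 1)))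
      ((volIoc (t n)).prod (volIoc (t n))) := by
  refine integrable_kernel_mul_fst (f := fun x => ε (cellIdx t n x) *
      (cellR t n x - cellL t n x) ^ (-σ) * (x - cellL t n x) ^ (σ - 1))
    (measurable_inCellKer t n α) inCellKer_nonneg (ae_integral_inCellKer_right_le hα1 ht)
    (((measurable_comp_cellIdx ε t n).mul
      (((measurable_cellR t n).sub (measurable_cellL t n)).pow_const _)).mul
      ((measurable_id.sub (measurable_cellL t n)).pow_const _)) ?_
  refine (ht.integrable_cellL_rpow (fun k => ε k * (t (k + 1) - t k) ^ (-σ) / (1 - α))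
    (by linarith : -1 < σ - 1 + (1 - α))).congr ?_
  filter_upwards [ae_restrict_mem measurableSet_Ioc] with x hx
  have hLx : 0 < x - cellL t n x := sub_pos.2 (ht.mem_cell hx).1
  have hLR : 0 < cellR t n x - cellL t n x :=
    sub_pos.2 ((ht.mem_cell hx).1.trans_le (ht.mem_cell hx).2)
  have hε := hη.nonneg (cellIdx t n x)
  rw [abs_of_nonneg (by positivity), Real.rpow_add hLx, cellR, cellL]
  ring

theorem marchaudRegular (hα : 0 < α) (hα1 : α < 1) (ht : IsMesh t) (hσ : 0 < σ)
    (hη : CellSmall t n σ ε η) :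
    MarchaudRegular α (t n) (∑ k ∈ Finset.range n, ε k) η where
  measurable := hη.measurable
  abs_le x hx := hη.abs_le_sum ht hx
  integrable := by
    set B := ∑ k ∈ Finset.range n, ε k
    have hoff : Integrable (fun p : ℝ × ℝ => offCellKer t n α p.1 p.2 * (2 * B))
        ((volIoc (t n)).prod (volIoc (t n))) := by
      refine integrable_kernel_mul_fst (f := fun _ => 2 * B) (measurable_offCellKer t n α)
        offCellKer_nonneg (ae_integral_offCellKer_right_le hα ht) measurable_const ?_
      refine (ht.integrable_cellL_rpow (fun _ => |2 * B| / α) (by linarith : -1 < -α)).congr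
        (.of_forall fun x => by ring)
    refine (hoff.add (hη.integrable_inCellKer_mul hα1 ht hσ)).mono'
      ((measurable_hyperKer α).mul ((hη.measurable.comp measurable_fst).sub
        (hη.measurable.comp measurable_snd))).aestronglyMeasurable ?_
    filter_upwards [ae_prod_mem_Ioc (t n)] with p hp
    rw [Real.norm_eq_abs, abs_mul, abs_of_nonneg (hyperKer_nonneg _ _ _)]
    refine hyperKer_mul_le_split ?_ (hη.abs_sub_le p.1 hp.1 p.2)
    linarith [abs_sub (η p.1) (η p.2), hη.abs_le_sum ht hp.1, hη.abs_le_sum ht hp.2]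

end CellSmall

/-! ### An inverse estimate for polynomials -/

theorem exists_pos_mul_sq_norm_le {E : Type*} [NormedAddCommGroup E] [NormedSpace ℝ E]
    [FiniteDimensional ℝ E] {Φ : E → ℝ} (hΦ : Continuous Φ) (hpos : ∀ c, c ≠ 0 → 0 < Φ c)
    (hsmul : ∀ (a : ℝ) (c : E), Φ (a • c) = a ^ 2 * Φ c) :
    ∃ m : ℝ, 0 < m ∧ ∀ c, m * ‖c‖ ^ 2 ≤ Φ c := by
  have hΦ0 : Φ 0 = 0 := by simpa using hsmul 0 0
  rcases subsingleton_or_nontrivial E with hE | hE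
  · exact ⟨1, one_pos, fun c => by simp [Subsingleton.elim c 0, hΦ0]⟩
  have := FiniteDimensional.proper ℝ E
  obtain ⟨c₀, hc₀, hmin⟩ := (isCompact_sphere (0 : E) 1).exists_isMinOn
    (NormedSpace.sphere_nonempty.2 zero_le_one) hΦ.continuousOn
  refine ⟨Φ c₀, hpos _ (Metric.ne_of_mem_sphere hc₀ one_ne_zero), fun c => ?_⟩
  rcases eq_or_ne c 0 with rfl | hc
  · simp [hΦ0]
  have hn : 0 < ‖c‖ := norm_pos_iff.2 hc
  have hle : Φ c₀ ≤ Φ (‖c‖⁻¹ • c) := hmin (by simp [norm_smul, hn.ne'])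
  calc Φ c₀ * ‖c‖ ^ 2 ≤ Φ (‖c‖⁻¹ • c) * ‖c‖ ^ 2 := by gcongr
    _ = Φ c := by
      rw [hsmul]
      field_simp

section InverseEstimate

open Polynomial

theorem integral_sq_eval_pos {q : ℝ[X]} (hq : q ≠ 0) {a b : ℝ} (hab : a < b) :
    0 < ∫ x in a..b, q.eval x ^ 2 := by
  obtain ⟨z, hz, hzq⟩ : ∃ z ∈ Icc a b, q.eval z ≠ 0 := by
    by_contra! h
    exact hq (q.eq_zero_of_infinite_isRoot ((Icc_infinite hab).mono h))
  exact intervalIntegral.integral_pos hab (by fun_prop) (fun _ _ => sq_nonneg _)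
    ⟨z, hz, by positivity⟩

theorem exists_mul_sq_coeff_le (p : ℕ) {a b : ℝ} (hab : a < b) : ∃ m : ℝ, 0 < m ∧
    ∀ g : ℝ[X], g.natDegree ≤ p → ∀ i, m * g.coeff i ^ 2 ≤ ∫ x in a..b, g.eval x ^ 2 := by
  set ofCoeff : (Fin (p + 1) → ℝ) → ℝ[X] :=
    fun c => ∑ i : Fin (p + 1), monomial i (c i) with hofCoeff
  have heval (c : Fin (p + 1) → ℝ) (x : ℝ) : (ofCoeff c).eval x = ∑ i, c i * x ^ (i : ℕ) := by
    simp [hofCoeff, eval_finsetSum]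
  have hne (c : Fin (p + 1) → ℝ) (hc : c ≠ 0) : ofCoeff c ≠ 0 := by
    obtain ⟨j, hj⟩ := Function.ne_iff.1 hc
    have hcoeff : (ofCoeff c).coeff j = c j := by
      simp [hofCoeff, finsetSum_coeff, coeff_monomial, Fin.val_inj]
    exact fun h => hj (by simpa [h] using hcoeff.symm)
  obtain ⟨m, hm, hle⟩ := exists_pos_mul_sq_norm_le
    (Φ := fun c => ∫ x in a..b, (ofCoeff c).eval x ^ 2)
    (by
      simp only [heval]
      refine intervalIntegral.continuous_parametric_intervalIntegral_of_continuous' ?_ _ _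
      unfold Function.uncurry
      fun_prop)
    (fun c hc => integral_sq_eval_pos (hne c hc) hab)
    (fun r c => by
      have hr (x : ℝ) : (ofCoeff (r • c)).eval x ^ 2 = r ^ 2 * (ofCoeff c).eval x ^ 2 := by
        simp only [heval, Pi.smul_apply, smul_eq_mul, mul_assoc, ← Finset.mul_sum, mul_pow]
      simp only [hr, intervalIntegral.integral_const_mul])
  refine ⟨m, hm, fun g hg i => ?_⟩
  rcases le_or_gt i p with hi | hi
  · have hg' : ofCoeff (fun i => g.coeff i) = g := by
      exact (Finset.sum_range fun i => monomial i (g.coeff i)).symm.trans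
        (g.as_sum_range' _ (Nat.lt_succ_of_le hg)).symm
    have hnorm : |g.coeff i| ≤ ‖fun j : Fin (p + 1) => g.coeff j‖ :=
      norm_le_pi_norm (fun j : Fin (p + 1) => g.coeff j) ⟨i, Nat.lt_succ_of_le hi⟩
    rw [← sq_abs]
    calc m * |g.coeff i| ^ 2 ≤ m * ‖fun j : Fin (p + 1) => g.coeff j‖ ^ 2 := by gcongr
      _ ≤ _ := by simpa only [hg'] using hle fun j => g.coeff j
  · rw [coeff_eq_zero_of_natDegree_lt (hg.trans_lt hi), zero_pow two_ne_zero, mul_zero]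
    exact intervalIntegral.integral_nonneg hab.le fun _ _ => sq_nonneg _

theorem abs_eval_sub_eval_le {p : ℕ} {g : ℝ[X]} (hg : g.natDegree ≤ p) {x y : ℝ} (hx : |x| ≤ 1)
    (hy : |y| ≤ 1) :
    |g.eval x - g.eval y| ≤ (∑ i ∈ Finset.range (p + 1), |g.coeff i| * i) * |x - y| := by
  rw [eval_eq_sum_range' (Nat.lt_succ_of_le hg), eval_eq_sum_range' (Nat.lt_succ_of_le hg),
    ← Finset.sum_sub_distrib, Finset.sum_mul]
  refine (Finset.abs_sum_le_sum_abs _ _).trans (Finset.sum_le_sum fun i _ => ?_)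
  rw [← mul_sub, abs_mul, mul_assoc, mul_comm (i : ℝ)]
  refine mul_le_mul_of_nonneg_left ((abs_pow_sub_pow_le _ _ _).trans ?_) (abs_nonneg _)
  exact mul_le_of_le_one_right (by positivity) (pow_le_one₀ (by positivity) (max_le hx hy))

theorem exists_unit_inverse_estimate (p : ℕ) : ∃ K : ℝ, 0 < K ∧ ∀ g : ℝ[X], g.natDegree ≤ p →
    ∃ L : ℝ, 0 ≤ L ∧ (∀ x y : ℝ, |x| ≤ 1 → |y| ≤ 1 → |g.eval x - g.eval y| ≤ L * |x - y|) ∧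
      ∀ c : ℝ, L ^ 2 ≤ K * ∫ x in (1 / 2 : ℝ)..1, (g.eval x - c) ^ 2 := by
  obtain ⟨m, hm, hcoeff⟩ := exists_mul_sq_coeff_le p (one_half_lt_one (α := ℝ))
  refine ⟨(p + 1) * ((p + 1) * (((p : ℝ) + 1) ^ 2 / m)), by positivity, fun g hg =>
    ⟨∑ i ∈ Finset.range (p + 1), |g.coeff i| * i, by positivity,
      fun x y hx hy => abs_eval_sub_eval_le hg hx hy, fun c => ?_⟩⟩
  set I := ∫ x in (1 / 2 : ℝ)..1, (g.eval x - c) ^ 2 with hI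
  -- The weight `i` kills the constant coefficient, so `g` may be replaced by `g - c`.
  have hterm : ∀ i ∈ Finset.range (p + 1), (|g.coeff i| * i) ^ 2 ≤ ((p : ℝ) + 1) ^ 2 / m * I := by
    intro i hi
    have hi' : (i : ℝ) ≤ p + 1 := by exact_mod_cast (Finset.mem_range.1 hi).le
    have hle := hcoeff (g - C c) (by rwa [natDegree_sub_C]) i
    simp only [eval_sub, eval_C, ← hI] at hle
    rcases eq_or_ne i 0 with rfl | hi0
    · have : 0 ≤ I := le_trans (by positivity) hle
      simp only [Nat.cast_zero, mul_zero, ne_eq, OfNat.ofNat_ne_zero, not_false_eq_true, zero_pow]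
      positivity
    · rw [coeff_sub, coeff_C_of_ne_zero hi0, sub_zero] at hle
      calc (|g.coeff i| * i) ^ 2 = i ^ 2 / m * (m * g.coeff i ^ 2) := by
            rw [mul_pow, sq_abs]
            field_simp
        _ ≤ _ := by gcongr
  calc (∑ i ∈ Finset.range (p + 1), |g.coeff i| * i) ^ 2
      ≤ (p + 1 : ℕ) * ∑ i ∈ Finset.range (p + 1), (|g.coeff i| * i) ^ 2 := by
        simpa only [Finset.card_range] using sq_sum_le_card_mul_sum_sq
          (s := Finset.range (p + 1)) (f := fun i => |g.coeff i| * (i : ℝ))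
    _ ≤ (p + 1 : ℕ) * ∑ _i ∈ Finset.range (p + 1), ((p : ℝ) + 1) ^ 2 / m * I := by
        gcongr with i hi
        exact hterm i hi
    _ = _ := by
        simp only [Finset.sum_const, Finset.card_range, nsmul_eq_mul]
        push_cast
        ring

theorem exists_inverse_estimate (p : ℕ) : ∃ K : ℝ, 0 < K ∧ ∀ q : ℝ[X], q.degree ≤ p →
    ∀ a τ : ℝ, 0 < τ → ∃ L : ℝ, 0 ≤ L ∧
      (∀ x ∈ Icc a (a + τ), ∀ y ∈ Icc a (a + τ), |q.eval x - q.eval y| ≤ L * |x - y|) ∧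
      ∀ c : ℝ, L ^ 2 * τ ^ 3 ≤ K * ∫ x in Ioc (a + τ / 2) (a + τ), (q.eval x - c) ^ 2 := by
  obtain ⟨K, hK, hunit⟩ := exists_unit_inverse_estimate p
  refine ⟨K, hK, fun q hq a τ hτ => ?_⟩
  set g : ℝ[X] := q.comp (C τ * X + C a) with hg
  have hgq (s : ℝ) : g.eval s = q.eval (τ * s + a) := by simp [hg]
  have hdeg : g.natDegree ≤ p := by
    refine natDegree_comp_le.trans ((Nat.mul_le_mul_left _ (natDegree_linear_le)).trans ?_)
    rw [mul_one]
    exact natDegree_le_of_degree_le hq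
  obtain ⟨L, hL, hlip, hsq⟩ := hunit g hdeg
  have hscale (x : ℝ) : q.eval x = g.eval ((x - a) / τ) := by
    rw [hgq, mul_div_cancel₀ _ hτ.ne', sub_add_cancel]
  have hunit_mem (x : ℝ) (hx : x ∈ Icc a (a + τ)) : |(x - a) / τ| ≤ 1 := by
    rw [abs_div, abs_of_pos hτ, div_le_one hτ, abs_of_nonneg (sub_nonneg.2 hx.1)]
    exact sub_le_iff_le_add'.2 hx.2
  refine ⟨L / τ, by positivity, fun x hx y hy => ?_, fun c => ?_⟩
  · rw [hscale x, hscale y]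
    refine (hlip _ _ (hunit_mem x hx) (hunit_mem y hy)).trans_eq ?_
    rw [← sub_div, sub_sub_sub_cancel_right, abs_div, abs_of_pos hτ]
    ring
  · have hcov : τ * ∫ s in (1 / 2 : ℝ)..1, (g.eval s - c) ^ 2
        = ∫ x in Ioc (a + τ / 2) (a + τ), (q.eval x - c) ^ 2 := by
      simp only [hgq]
      rw [intervalIntegral.mul_integral_comp_mul_add (f := fun x => (q.eval x - c) ^ 2),
        intervalIntegral.integral_of_le (by linarith)]
      ring_nf
    calc (L / τ) ^ 2 * τ ^ 3 = τ * L ^ 2 := by field_simp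
      _ ≤ τ * (K * ∫ s in (1 / 2 : ℝ)..1, (g.eval s - c) ^ 2) := by
          gcongr
          exact hsq c
      _ = _ := by rw [← hcov, mul_left_comm]

end InverseEstimate

/-! ### The energy identity -/

section Energy

variable {α b B B' : ℝ} {η θ : ℝ → ℝ}

theorem mul_integral_hyperKer_mul_sub (hα : 0 < α) (hα1 : α < 1) (hη : MarchaudRegular α b B η) :
    α * ∫ p : ℝ × ℝ, hyperKer α p.1 p.2 * (η p.1 - η p.2) ∂(volIoc b).prod (volIoc b)
      = (∫ x, (b - x) ^ (-α) * η x ∂volIoc b) - ∫ x, x ^ (-α) * η x ∂volIoc b := by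
  rw [integral_hyperKer_mul_sub hα hα1 hη.measurable hη.abs_le hη.integrable,
    mul_div_cancel₀ _ hα.ne', ← integral_sub
      (integrable_mul_of_abs_le hη.measurable hη.abs_le (integrable_sub_rpow_neg hα1 b))
      (integrable_mul_of_abs_le hη.measurable hη.abs_le (integrable_rpow_neg hα1 b))]
  simp only [mul_comm (η _), sub_mul]

theorem integral_marchaud_mul_eq_sub (hα : 0 < α) (hα1 : α < 1) (hη : MarchaudRegular α b B η)
    (hθ : MarchaudRegular α b B' θ) :
    ∫ x, marchaud α η x * θ x ∂volIoc b = (∫ x, (b - x) ^ (-α) * (η x * θ x) ∂volIoc b)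
      - α * ∫ p : ℝ × ℝ, hyperKer α p.1 p.2 * (θ p.1 - θ p.2) * η p.2
          ∂(volIoc b).prod (volIoc b) := by
  have hηθ := hη.mul hθ
  have hproduct : ∫ p : ℝ × ℝ, hyperKer α p.1 p.2 * (η p.1 - η p.2) * θ p.1
        ∂(volIoc b).prod (volIoc b)
      = (∫ p : ℝ × ℝ, hyperKer α p.1 p.2 * (η p.1 * θ p.1 - η p.2 * θ p.2)
          ∂(volIoc b).prod (volIoc b))
        - ∫ p : ℝ × ℝ, hyperKer α p.1 p.2 * (θ p.1 - θ p.2) * η p.2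
          ∂(volIoc b).prod (volIoc b) := by
    rw [← integral_sub hηθ.integrable
      (integrable_mul_snd_of_abs_le hη.measurable hη.abs_le hθ.integrable)]
    exact integral_congr_ae (.of_forall fun p => by ring)
  rw [integral_marchaud_mul hα1 hη hθ.measurable hθ.abs_le, hproduct, mul_sub,
    mul_integral_hyperKer_mul_sub hα hα1 hηθ]
  simp only [mul_assoc]
  ring

theorem two_mul_integral_marchaud_mul_self (hα : 0 < α) (hα1 : α < 1)
    (hθ : MarchaudRegular α b B θ) :
    2 * ∫ x, marchaud α θ x * θ x ∂volIoc b
      = (∫ x, x ^ (-α) * θ x ^ 2 ∂volIoc b) + (∫ x, (b - x) ^ (-α) * θ x ^ 2 ∂volIoc b)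
        + α * ∫ p : ℝ × ℝ, hyperKer α p.1 p.2 * (θ p.1 - θ p.2) ^ 2
          ∂(volIoc b).prod (volIoc b) := by
  have hsquare : ∫ p : ℝ × ℝ, hyperKer α p.1 p.2 * (θ p.1 - θ p.2) ^ 2 ∂(volIoc b).prod (volIoc b)
      = (∫ p : ℝ × ℝ, hyperKer α p.1 p.2 * (θ p.1 - θ p.2) * θ p.1 ∂(volIoc b).prod (volIoc b))
        - ∫ p : ℝ × ℝ, hyperKer α p.1 p.2 * (θ p.1 - θ p.2) * θ p.2
          ∂(volIoc b).prod (volIoc b) := by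
    rw [← integral_sub (integrable_mul_fst_of_abs_le hθ.measurable hθ.abs_le hθ.integrable)
      (integrable_mul_snd_of_abs_le hθ.measurable hθ.abs_le hθ.integrable)]
    exact integral_congr_ae (.of_forall fun p => by ring)
  have hfst := integral_marchaud_mul hα1 hθ hθ.measurable hθ.abs_le
  have hsnd := integral_marchaud_mul_eq_sub hα hα1 hθ hθ
  simp only [mul_assoc, ← pow_two] at hfst hsnd hsquare
  rw [hsquare]
  linarith

theorem integral_marchaud_sub_mul (hα1 : α < 1) (hθ : MarchaudRegular α b B θ)
    (hη : MarchaudRegular α b B' η) {X : ℝ → ℝ} {B₀ : ℝ} (hX : Measurable X)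
    (hX' : ∀ x ∈ Ioc 0 b, |X x| ≤ B₀) :
    ∫ x, marchaud α (fun y => θ y - η y) x * X x ∂volIoc b
      = (∫ x, marchaud α θ x * X x ∂volIoc b) - ∫ x, marchaud α η x * X x ∂volIoc b := by
  have hpow := integrable_rpow_neg hα1 b
  rw [integral_marchaud_mul hα1 (hθ.sub hη) hX hX', integral_marchaud_mul hα1 hθ hX hX',
    integral_marchaud_mul hα1 hη hX hX', add_sub_add_comm, ← mul_sub,
    ← integral_sub (integrable_mul_fst_of_abs_le hX hX' hθ.integrable)
      (integrable_mul_fst_of_abs_le hX hX' hη.integrable),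
    ← integral_sub
      (integrable_mul_of_abs_le hX hX' (integrable_mul_of_abs_le hθ.measurable hθ.abs_le hpow))
      (integrable_mul_of_abs_le hX hX' (integrable_mul_of_abs_le hη.measurable hη.abs_le hpow))]
  congr 1
  · exact integral_congr_ae (.of_forall fun x => by ring)
  · exact congrArg _ (integral_congr_ae (.of_forall fun p => by ring))

theorem energy_identity (hα : 0 < α) (hα1 : α < 1) (hθ : MarchaudRegular α b B θ)
    (hη : MarchaudRegular α b B' η)
    (horth : ∫ x, marchaud α (fun y => θ y - η y) x * θ x ∂volIoc b = 0) :
    (∫ x, x ^ (-α) * θ x ^ 2 ∂volIoc b) + (∫ x, (b - x) ^ (-α) * θ x ^ 2 ∂volIoc b)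
      + α * ∫ p : ℝ × ℝ, hyperKer α p.1 p.2 * (θ p.1 - θ p.2) ^ 2 ∂(volIoc b).prod (volIoc b)
      = 2 * (∫ x, (b - x) ^ (-α) * (η x * θ x) ∂volIoc b)
        - 2 * α * ∫ p : ℝ × ℝ, hyperKer α p.1 p.2 * (θ p.1 - θ p.2) * η p.2
            ∂(volIoc b).prod (volIoc b) := by
  rw [integral_marchaud_sub_mul hα1 hθ hη hθ.measurable hθ.abs_le, sub_eq_zero] at horth
  rw [← two_mul_integral_marchaud_mul_self hα hα1 hθ, horth,
    integral_marchaud_mul_eq_sub hα hα1 hη hθ]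
  ring

end Energy

/-! ### Piecewise polynomials -/

/-- The piecewise polynomial with piece `Q k` on the cell of index `k`. -/
noncomputable def pwPoly (t : ℕ → ℝ) (n : ℕ) (Q : ℕ → Polynomial ℝ) (x : ℝ) : ℝ :=
  (Q (cellIdx t n x)).eval x

/-- `L k` is a Lipschitz constant of `f` on the cell of index `k`. -/
def CellLipschitz (t : ℕ → ℝ) (n : ℕ) (L : ℕ → ℝ) (f : ℝ → ℝ) : Prop :=
  ∀ x ∈ Ioc 0 (t n), ∀ y, cellL t n x < y → y < x → |f x - f y| ≤ (x - y) * L (cellIdx t n x)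

section PiecewisePolynomial

theorem measurable_pwPoly (t : ℕ → ℝ) (n : ℕ) (Q : ℕ → Polynomial ℝ) :
    Measurable (pwPoly t n Q) :=
  (measurable_from_prod_countable_right fun k => (Q k).continuous.measurable :
    Measurable fun q : ℕ × ℝ => (Q q.1).eval q.2).comp
      ((measurable_cellIdx t n).prodMk measurable_id)

variable {t : ℕ → ℝ} {n : ℕ} {α : ℝ}

theorem cellLipschitz_pwPoly (ht : IsMesh t) {Q : ℕ → Polynomial ℝ} {L : ℕ → ℝ}
    (hL : ∀ k, ∀ x ∈ Icc (t k) (t (k + 1)), ∀ y ∈ Icc (t k) (t (k + 1)),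
      |(Q k).eval x - (Q k).eval y| ≤ L k * |x - y|) :
    CellLipschitz t n L (pwPoly t n Q) := by
  intro x hx y hLy hyx
  have hxm := ht.mem_cell hx
  rw [pwPoly, pwPoly, ht.cellIdx_eq_of_cellL_lt hx hLy hyx.le]
  have hlip := hL _ x (Ioc_subset_Icc_self hxm) y ⟨hLy.le, hyx.le.trans hxm.2⟩
  rwa [abs_of_pos (sub_pos.2 hyx), mul_comm] at hlip

theorem le_integral_hyperKer_mul_sq_sub (hα : 0 < α) {a τ c E : ℝ} {f : ℝ → ℝ} {g : ℝ → ℝ}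
    (hg : Continuous g) (hfg : EqOn f g (Ioc (a + τ / 2) (a + τ)))
    (hE : E ≤ ∫ x in Ioc (a + τ / 2) (a + τ), (g x - c) ^ 2) {y : ℝ} (hτ : 0 < τ)
    (hy : y ∈ Ioc a (a + τ / 2))
    (hi : IntegrableOn (fun x => hyperKer α x y * (f x - c) ^ 2) (Ioc (a + τ / 2) (a + τ))) :
    τ ^ (-1 - α) * E ≤ ∫ x in Ioc (a + τ / 2) (a + τ), hyperKer α x y * (f x - c) ^ 2 := by
  calc τ ^ (-1 - α) * E ≤ τ ^ (-1 - α) * ∫ x in Ioc (a + τ / 2) (a + τ), (g x - c) ^ 2 := by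
        gcongr
    _ = ∫ x in Ioc (a + τ / 2) (a + τ), τ ^ (-1 - α) * (g x - c) ^ 2 :=
        (integral_const_mul _ _).symm
    _ ≤ _ := by
        refine setIntegral_mono_on (Continuous.integrableOn_Ioc (by fun_prop)) hi
          measurableSet_Ioc fun x hx => ?_
        have hyx : y < x := hy.2.trans_lt hx.1
        rw [hfg hx, hyperKer, causal_of_lt _ hyx]
        exact mul_le_mul_of_nonneg_right (Real.rpow_le_rpow_of_nonpos (sub_pos.2 hyx)
          (by linarith [hx.2, hy.1]) (by linarith)) (sq_nonneg _)

theorem half_mul_le_setIntegral {a τ M : ℝ} {G : ℝ → ℝ} (hτ : 0 < τ)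
    (hG : IntegrableOn G (Ioc a (a + τ))) (hG0 : ∀ y, 0 ≤ G y)
    (hM : ∀ᵐ y ∂volume.restrict (Ioc a (a + τ / 2)), M ≤ G y) :
    τ / 2 * M ≤ ∫ y in Ioc a (a + τ), G y := by
  have hsub : Ioc a (a + τ / 2) ⊆ Ioc a (a + τ) := Ioc_subset_Ioc_right (by linarith)
  calc τ / 2 * M = ∫ _y in Ioc a (a + τ / 2), M := by
        rw [setIntegral_const, smul_eq_mul, Measure.real, Real.volume_Ioc,
          ENNReal.toReal_ofReal (by linarith), add_sub_cancel_left]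
    _ ≤ ∫ y in Ioc a (a + τ / 2), G y :=
        integral_mono_ae (integrable_const _) (hG.mono_set hsub) hM
    _ ≤ _ := setIntegral_mono_set hG (.of_forall hG0) hsub.eventuallyLE

theorem sq_mul_rpow_le_setIntegral_hyperKer (hα : 0 < α) (ht : IsMesh t) {Q : ℕ → Polynomial ℝ}
    {K L : ℝ} {k : ℕ} (hk : k < n) (hK : 0 < K)
    (hL : ∀ c, L ^ 2 * (t (k + 1) - t k) ^ 3 ≤
      K * ∫ x in Ioc (t k + (t (k + 1) - t k) / 2) (t k + (t (k + 1) - t k)),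
        ((Q k).eval x - c) ^ 2)
    (hi : Integrable (fun q : ℝ × ℝ =>
      hyperKer α q.1 q.2 * (pwPoly t n Q q.1 - pwPoly t n Q q.2) ^ 2)
        ((volIoc (t n)).prod (volIoc (t n)))) :
    L ^ 2 * (t (k + 1) - t k) ^ (3 - α) ≤ 2 * K * ∫ y in Ioc (t k) (t (k + 1)),
      ∫ x, hyperKer α x y * (pwPoly t n Q x - pwPoly t n Q y) ^ 2 ∂volIoc (t n) := by
  set τ := t (k + 1) - t k with hτ
  have hτ0 : 0 < τ := sub_pos.2 (ht.strictMono k.lt_succ_self)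
  have hend : t k + τ = t (k + 1) := by rw [hτ, add_sub_cancel]
  have hcell : Ioc (t k) (t k + τ) ⊆ Ioc 0 (t n) := hend ▸ ht.cell_subset hk
  have hright : Ioc (t k + τ / 2) (t k + τ) ⊆ Ioc (t k) (t k + τ) :=
    Ioc_subset_Ioc_left (by linarith)
  have hleft : Ioc (t k) (t k + τ / 2) ⊆ Ioc (t k) (t k + τ) :=
    Ioc_subset_Ioc_right (by linarith)
  have hnonneg (x y : ℝ) : 0 ≤ hyperKer α x y * (pwPoly t n Q x - pwPoly t n Q y) ^ 2 :=
    mul_nonneg (hyperKer_nonneg _ _ _) (sq_nonneg _)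
  have hslice : ∀ᵐ y ∂volume.restrict (Ioc (t k) (t k + τ / 2)), τ ^ (-1 - α) * (L ^ 2 * τ ^ 3 / K)
      ≤ ∫ x, hyperKer α x y * (pwPoly t n Q x - pwPoly t n Q y) ^ 2 ∂volIoc (t n) := by
    filter_upwards [ae_restrict_of_ae_restrict_of_subset (hleft.trans hcell) hi.prod_left_ae,
      ae_restrict_mem measurableSet_Ioc] with y hy hym
    refine (le_integral_hyperKer_mul_sq_sub hα (Q k).continuous (fun x hx => ?_)
      ((div_le_iff₀' hK).2 (hL _)) hτ0 hym (IntegrableOn.mono_set (t := Ioc 0 (t n)) hy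
        (hright.trans hcell))).trans (setIntegral_mono_set hy (.of_forall fun x => hnonneg x y)
          (hright.trans hcell).eventuallyLE)
    rw [pwPoly, ht.cellIdx_eq hk (hend ▸ hright hx)]
  have hpow : τ ^ (3 - α) = τ * τ ^ (-1 - α) * τ ^ 3 := by
    rw [← Real.rpow_natCast, ← Real.rpow_one_add' hτ0.le (by linarith), ← Real.rpow_add hτ0]
    norm_num
    ring_nf
  rw [← hend]
  calc L ^ 2 * τ ^ (3 - α) = 2 * K * (τ / 2 * (τ ^ (-1 - α) * (L ^ 2 * τ ^ 3 / K))) := by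
        rw [hpow]
        field_simp
    _ ≤ _ := by
        gcongr
        exact half_mul_le_setIntegral hτ0 (IntegrableOn.mono_set hi.integral_prod_right hcell)
          (fun y => integral_nonneg fun x => hnonneg x y) hslice

theorem exists_cellLipschitz (p : ℕ) : ∃ K : ℝ, 0 < K ∧ ∀ (α : ℝ) (t : ℕ → ℝ) (n : ℕ)
    (Q : ℕ → Polynomial ℝ), 0 < α → IsMesh t → (∀ k, (Q k).degree ≤ p) →
    ∃ L : ℕ → ℝ, (∀ k, 0 ≤ L k) ∧ CellLipschitz t n L (pwPoly t n Q) ∧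
      (Integrable (fun q : ℝ × ℝ =>
          hyperKer α q.1 q.2 * (pwPoly t n Q q.1 - pwPoly t n Q q.2) ^ 2)
        ((volIoc (t n)).prod (volIoc (t n))) →
      ∑ k ∈ Finset.range n, L k ^ 2 * (t (k + 1) - t k) ^ (3 - α) ≤
        K * ∫ q : ℝ × ℝ, hyperKer α q.1 q.2 * (pwPoly t n Q q.1 - pwPoly t n Q q.2) ^ 2
          ∂(volIoc (t n)).prod (volIoc (t n))) := by
  obtain ⟨K, hK, hinv⟩ := exists_inverse_estimate p
  refine ⟨2 * K, by positivity, fun α t n Q hα ht hQ => ?_⟩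
  choose L hL0 hLip hLK using fun k => hinv (Q k) (hQ k) (t k) (t (k + 1) - t k)
    (sub_pos.2 (ht.strictMono k.lt_succ_self))
  refine ⟨L, hL0, cellLipschitz_pwPoly ht fun k => ?_, fun hi => ?_⟩
  · simpa only [add_sub_cancel] using hLip k
  · rw [integral_prod_symm _ hi, ht.integral_eq_sum_cells hi.integral_prod_right, Finset.mul_sum]
    exact Finset.sum_le_sum fun k hk =>
      sq_mul_rpow_le_setIntegral_hyperKer hα ht (Finset.mem_range.1 hk) hK (hLK k) hi

end PiecewisePolynomial

/-! ### Weighted norms of cellwise small functions -/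

/-- The weighted sum of squares of the cell sizes, to which all error quantities are compared. -/
noncomputable def cellSum (t : ℕ → ℝ) (n : ℕ) (α : ℝ) (ε : ℕ → ℝ) : ℝ :=
  ∑ k ∈ Finset.range n, ε k ^ 2 * (t (k + 1) - t k) ^ (1 - α)

section Weighted

variable {t : ℕ → ℝ} {n : ℕ} {α σ : ℝ} {ε : ℕ → ℝ} {η w : ℝ → ℝ}

theorem cellSum_nonneg (ht : IsMesh t) (n : ℕ) (α : ℝ) (ε : ℕ → ℝ) : 0 ≤ cellSum t n α ε :=
  Finset.sum_nonneg fun k _ =>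
    mul_nonneg (sq_nonneg _) (Real.rpow_nonneg (sub_nonneg.2 (ht.le_succ k)) _)

theorem sum_sq_mul_rpow_div_eq_cellSum_div (t : ℕ → ℝ) (n : ℕ) (α : ℝ) (ε : ℕ → ℝ) :
    ∑ k ∈ Finset.range n, ε k ^ 2 * ((t (k + 1) - t k) ^ (-α + 1) / (-α + 1))
      = cellSum t n α ε / (1 - α) := by
  rw [cellSum, Finset.sum_div, neg_add_eq_sub]
  exact Finset.sum_congr rfl fun k _ => (mul_div_assoc _ _ _).symm

namespace CellSmall

theorem integral_mul_sq_le {W : ℝ → ℝ} (hη : CellSmall t n σ ε η) (hw : Measurable w)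
    (hw0 : ∀ᵐ x ∂volIoc (t n), 0 ≤ w x) (hwW : ∀ᵐ x ∂volIoc (t n), w x ≤ W x)
    (hW : Integrable (fun x => ε (cellIdx t n x) ^ 2 * W x) (volIoc (t n))) :
    Integrable (fun x => w x * η x ^ 2) (volIoc (t n)) ∧
      ∫ x, w x * η x ^ 2 ∂volIoc (t n)
        ≤ ∫ x, ε (cellIdx t n x) ^ 2 * W x ∂volIoc (t n) := by
  have hle : ∀ᵐ x ∂volIoc (t n), w x * η x ^ 2 ≤ ε (cellIdx t n x) ^ 2 * W x := by
    filter_upwards [hw0, hwW, ae_restrict_mem measurableSet_Ioc] with x hwx hwWx hx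
    rw [mul_comm]
    exact mul_le_mul (hη.sq_le hx) hwWx hwx (sq_nonneg _)
  have hi : Integrable (fun x => w x * η x ^ 2) (volIoc (t n)) := by
    refine hW.mono' (hw.mul (hη.measurable.pow_const 2)).aestronglyMeasurable ?_
    filter_upwards [hle, hw0] with x hx hwx
    rwa [Real.norm_eq_abs, abs_of_nonneg (by positivity)]
  exact ⟨hi, integral_mono_ae hi hW hle⟩

theorem integral_mul_sq_le_of_le_cellL (hα1 : α < 1) (ht : IsMesh t)
    (hη : CellSmall t n σ ε η) (hw : Measurable w) (hw0 : ∀ᵐ x ∂volIoc (t n), 0 ≤ w x)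
    (hwL : ∀ᵐ x ∂volIoc (t n), w x ≤ (x - cellL t n x) ^ (-α)) :
    Integrable (fun x => w x * η x ^ 2) (volIoc (t n)) ∧
      ∫ x, w x * η x ^ 2 ∂volIoc (t n) ≤ cellSum t n α ε / (1 - α) := by
  have hα' : -1 < -α := by linarith
  rw [← sum_sq_mul_rpow_div_eq_cellSum_div, ← ht.integral_cellL_rpow (fun k => ε k ^ 2) hα']
  exact hη.integral_mul_sq_le hw hw0 hwL (ht.integrable_cellL_rpow (fun k => ε k ^ 2) hα')

theorem integral_mul_sq_le_of_le_cellR (hα1 : α < 1) (ht : IsMesh t)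
    (hη : CellSmall t n σ ε η) (hw : Measurable w) (hw0 : ∀ᵐ x ∂volIoc (t n), 0 ≤ w x)
    (hwR : ∀ᵐ x ∂volIoc (t n), w x ≤ (cellR t n x - x) ^ (-α)) :
    Integrable (fun x => w x * η x ^ 2) (volIoc (t n)) ∧
      ∫ x, w x * η x ^ 2 ∂volIoc (t n) ≤ cellSum t n α ε / (1 - α) := by
  have hα' : -1 < -α := by linarith
  rw [← sum_sq_mul_rpow_div_eq_cellSum_div, ← ht.integral_cellR_rpow (fun k => ε k ^ 2) hα']
  exact hη.integral_mul_sq_le hw hw0 hwR (ht.integrable_cellR_rpow (fun k => ε k ^ 2) hα')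

theorem integral_rpow_mul_sq_le (hα : 0 < α) (hα1 : α < 1) (ht : IsMesh t)
    (hη : CellSmall t n σ ε η) :
    Integrable (fun x => x ^ (-α) * η x ^ 2) (volIoc (t n)) ∧
      ∫ x, x ^ (-α) * η x ^ 2 ∂volIoc (t n) ≤ cellSum t n α ε / (1 - α) := by
  refine hη.integral_mul_sq_le_of_le_cellL hα1 ht (measurable_id.pow_const _) ?_ ?_
  · filter_upwards [ae_restrict_mem measurableSet_Ioc] with x hx using Real.rpow_nonneg hx.1.le _
  · filter_upwards [ae_restrict_mem measurableSet_Ioc] with x hx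
    exact Real.rpow_le_rpow_of_nonpos (sub_pos.2 (ht.mem_cell hx).1)
      (sub_le_self _ (ht.cellL_nonneg x)) (by linarith)

theorem integral_sub_rpow_mul_sq_le (hα : 0 < α) (hα1 : α < 1) (ht : IsMesh t)
    (hη : CellSmall t n σ ε η) :
    Integrable (fun x => (t n - x) ^ (-α) * η x ^ 2) (volIoc (t n)) ∧
      ∫ x, (t n - x) ^ (-α) * η x ^ 2 ∂volIoc (t n) ≤ cellSum t n α ε / (1 - α) := by
  refine hη.integral_mul_sq_le_of_le_cellR hα1 ht
    ((measurable_const.sub measurable_id).pow_const _) ?_ ?_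
  · filter_upwards [ae_restrict_mem measurableSet_Ioc] with x hx using
      Real.rpow_nonneg (sub_nonneg.2 hx.2) _
  · filter_upwards [ht.ae_lt_cellR, ae_restrict_mem measurableSet_Ioc] with x hxR hx
    exact Real.rpow_le_rpow_of_nonpos (sub_pos.2 hxR) (sub_le_sub_right (ht.cellR_le hx) _)
      (by linarith)

theorem integral_offCellKer_mul_sq_snd_le (hα : 0 < α) (hα1 : α < 1) (ht : IsMesh t)
    (hη : CellSmall t n σ ε η) :
    Integrable (fun p : ℝ × ℝ => offCellKer t n α p.1 p.2 * η p.2 ^ 2)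
      ((volIoc (t n)).prod (volIoc (t n))) ∧
    ∫ p : ℝ × ℝ, offCellKer t n α p.1 p.2 * η p.2 ^ 2 ∂(volIoc (t n)).prod (volIoc (t n))
      ≤ cellSum t n α ε / (1 - α) / α := by
  obtain ⟨hi, hle⟩ := hη.integral_mul_sq_le_of_le_cellR hα1 ht
    (((measurable_cellR t n).sub measurable_id).pow_const (-α))
    (by filter_upwards [ht.ae_lt_cellR] with x hx using Real.rpow_nonneg (sub_pos.2 hx).le _)
    (.of_forall fun _ => le_rfl)
  have heq : (fun y => η y ^ 2 * ((cellR t n y - y) ^ (-α) / α))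
      = fun y => (cellR t n y - y) ^ (-α) * η y ^ 2 / α := by
    ext y
    ring
  obtain ⟨hik, hlek⟩ := integral_kernel_mul_snd_le (measurable_offCellKer t n α)
    offCellKer_nonneg (ae_integral_offCellKer_left_le hα ht) (hη.measurable.pow_const 2)
    (fun _ => sq_nonneg _) (heq ▸ hi.div_const α)
  refine ⟨hik, hlek.trans ?_⟩
  rw [heq, integral_div]
  exact div_le_div_of_nonneg_right hle hα.le

theorem integral_offCellKer_mul_sq_fst_le (hα : 0 < α) (hα1 : α < 1) (ht : IsMesh t)
    (hη : CellSmall t n σ ε η) :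
    Integrable (fun p : ℝ × ℝ => offCellKer t n α p.1 p.2 * η p.1 ^ 2)
      ((volIoc (t n)).prod (volIoc (t n))) ∧
    ∫ p : ℝ × ℝ, offCellKer t n α p.1 p.2 * η p.1 ^ 2 ∂(volIoc (t n)).prod (volIoc (t n))
      ≤ cellSum t n α ε / (1 - α) / α := by
  obtain ⟨hi, hle⟩ := hη.integral_mul_sq_le_of_le_cellL hα1 ht
    ((measurable_id.sub (measurable_cellL t n)).pow_const (-α))
    (by filter_upwards [ae_restrict_mem measurableSet_Ioc] with x hx using
      Real.rpow_nonneg (sub_pos.2 (ht.mem_cell hx).1).le _)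
    (.of_forall fun _ => le_rfl)
  have heq : (fun y => η y ^ 2 * ((y - cellL t n y) ^ (-α) / α))
      = fun y => (y - cellL t n y) ^ (-α) * η y ^ 2 / α := by
    ext y
    ring
  obtain ⟨hik, hlek⟩ := integral_kernel_mul_fst_le (measurable_offCellKer t n α)
    offCellKer_nonneg (ae_integral_offCellKer_right_le hα ht) (hη.measurable.pow_const 2)
    (fun _ => sq_nonneg _) (heq ▸ hi.div_const α)
  refine ⟨hik, hlek.trans ?_⟩
  rw [heq, integral_div]
  exact div_le_div_of_nonneg_right hle hα.le

end CellSmall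

theorem integral_inCellKer_mul_le (hα1 : α < 1) (ht : IsMesh t) {F : ℕ → ℝ}
    (hF : ∀ k, 0 ≤ F k) :
    Integrable (fun p : ℝ × ℝ => inCellKer t n α p.1 p.2 * F (cellIdx t n p.1))
      ((volIoc (t n)).prod (volIoc (t n))) ∧
    ∫ p : ℝ × ℝ, inCellKer t n α p.1 p.2 * F (cellIdx t n p.1)
        ∂(volIoc (t n)).prod (volIoc (t n))
      ≤ (∑ k ∈ Finset.range n, F k * (t (k + 1) - t k) ^ (2 - α)) / (1 - α) := by
  have hα' : 0 < 1 - α := sub_pos.2 hα1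
  have hpow : -1 < 1 - α := by linarith
  have heq : (fun x => F (cellIdx t n x) * ((x - cellL t n x) ^ (1 - α) / (1 - α)))
      = fun x => F (cellIdx t n x) * (x - cellL t n x) ^ (1 - α) / (1 - α) :=
    funext fun x => (mul_div_assoc _ _ _).symm
  obtain ⟨hik, hlek⟩ := integral_kernel_mul_fst_le (measurable_inCellKer t n α)
    inCellKer_nonneg (ae_integral_inCellKer_right_le hα1 ht) (measurable_comp_cellIdx F t n)
    (fun _ => hF _) (heq ▸ (ht.integrable_cellL_rpow F hpow).div_const _)
  refine ⟨hik, hlek.trans ?_⟩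
  rw [heq, integral_div, ht.integral_cellL_rpow F hpow]
  refine div_le_div_of_nonneg_right
    (Finset.sum_le_sum fun k _ => mul_le_mul_of_nonneg_left ?_ (hF k)) hα'.le
  rw [show 1 - α + 1 = 2 - α by ring]
  exact div_le_self (Real.rpow_nonneg (sub_nonneg.2 (ht.le_succ k)) _) (by linarith)

theorem integral_le_add_add {X : Type*} [MeasurableSpace X] {μ : Measure X} {F f g h : X → ℝ}
    (hF : Integrable F μ) (hf : Integrable f μ) (hg : Integrable g μ) (hh : Integrable h μ)
    (hle : ∀ᵐ x ∂μ, F x ≤ f x + g x + h x) :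
    ∫ x, F x ∂μ ≤ (∫ x, f x ∂μ) + (∫ x, g x ∂μ) + ∫ x, h x ∂μ := by
  have hfg : Integrable (fun x => f x + g x) μ := hf.add hg
  rw [← integral_add hf hg, ← integral_add hfg hh]
  exact integral_mono_ae hF (hfg.add hh) hle

end Weighted

/-! ### The energy bound -/

section EnergyBound

variable {t L ε : ℕ → ℝ} {n : ℕ} {α σ B : ℝ} {θ η : ℝ → ℝ}

theorem exists_marchaudRegular_pwPoly (hα : 0 < α) (hα1 : α < 1) (ht : IsMesh t)
    {Q : ℕ → Polynomial ℝ} (hL0 : ∀ k, 0 ≤ L k) (hL : CellLipschitz t n L (pwPoly t n Q)) :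
    ∃ B, 0 ≤ B ∧ MarchaudRegular α (t n) B (pwPoly t n Q) := by
  have hbound : ∀ k, ∃ B, ∀ x ∈ Icc (t k) (t (k + 1)), |(Q k).eval x| ≤ B := fun k =>
    isCompact_Icc.exists_bound_of_continuousOn (Q k).continuousOn
  choose B hB using hbound
  have hB0 : ∀ k, 0 ≤ B k := fun k => (abs_nonneg _).trans (hB k _ (left_mem_Icc.2 (ht.le_succ k)))
  have hτ : ∀ k, 0 < t (k + 1) - t k := fun k => sub_pos.2 (ht.strictMono k.lt_succ_self)
  have hLτ : ∀ k, 0 ≤ L k * (t (k + 1) - t k) := fun k => mul_nonneg (hL0 k) (hτ k).le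
  have hsmall : CellSmall t n 1 (fun k => B k + L k * (t (k + 1) - t k)) (pwPoly t n Q) := by
    refine ⟨measurable_pwPoly t n Q, fun k => add_nonneg (hB0 k) (hLτ k), fun x hx => ?_,
      fun x hx y hLy hyx => (hL x hx y hLy hyx).trans
        (mul_le_mul_of_nonneg_left ?_ (sub_pos.2 hyx).le)⟩
    · have hxB := hB _ x (Ioc_subset_Icc_self (ht.mem_cell hx))
      exact hxB.trans (le_add_of_nonneg_right (hLτ _))
    · rw [sub_self, Real.rpow_zero, mul_one, Real.rpow_neg_one, cellR, cellL, ← div_eq_mul_inv,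
        le_div_iff₀ (hτ _)]
      exact le_add_of_nonneg_left (hB0 _)
  exact ⟨_, Finset.sum_nonneg fun k _ => hsmall.nonneg k, hsmall.marchaudRegular hα hα1 ht one_pos⟩

theorem MarchaudRegular.integrable_hyperKer_mul_sq {b : ℝ} (hθ : MarchaudRegular α b B θ) :
    Integrable (fun p : ℝ × ℝ => hyperKer α p.1 p.2 * (θ p.1 - θ p.2) ^ 2)
      ((volIoc b).prod (volIoc b)) :=
  ((integrable_mul_fst_of_abs_le hθ.measurable hθ.abs_le hθ.integrable).sub
    (integrable_mul_snd_of_abs_le hθ.measurable hθ.abs_le hθ.integrable)).congr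
      (.of_forall fun p => by
        simp only [Pi.sub_apply]
        ring)

theorem two_mul_integral_sub_rpow_mul_le (hα : 0 < α) (hα1 : α < 1) (ht : IsMesh t)
    (hθ : MarchaudRegular α (t n) B θ) (hη : CellSmall t n σ ε η) :
    2 * (∫ x, (t n - x) ^ (-α) * (η x * θ x) ∂volIoc (t n))
      ≤ (∫ x, (t n - x) ^ (-α) * θ x ^ 2 ∂volIoc (t n)) + cellSum t n α ε / (1 - α) := by
  obtain ⟨hηi, hηle⟩ := hη.integral_sub_rpow_mul_sq_le hα hα1 ht
  have hw := integrable_sub_rpow_neg hα1 (t n)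
  have hθi : Integrable (fun x => (t n - x) ^ (-α) * θ x ^ 2) (volIoc (t n)) :=
    integrable_mul_of_abs_le (hθ.measurable.pow_const 2)
      (fun x hx => (abs_pow (θ x) 2).trans_le (pow_le_pow_left₀ (abs_nonneg _) (hθ.abs_le x hx) 2))
      hw
  have hηθ : Integrable (fun x => (t n - x) ^ (-α) * (η x * θ x)) (volIoc (t n)) :=
    (integrable_mul_of_abs_le hθ.measurable hθ.abs_le
      (integrable_mul_of_abs_le hη.measurable (fun x hx => hη.abs_le_sum ht hx) hw)).congr
        (.of_forall fun x => mul_assoc _ _ _)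
  refine le_trans ?_ (add_le_add_right hηle _)
  rw [← integral_const_mul, ← integral_add hθi hηi]
  refine setIntegral_mono_on (hηθ.const_mul 2) (hθi.add hηi) measurableSet_Ioc fun x hx => ?_
  have hx0 : 0 ≤ (t n - x) ^ (-α) := Real.rpow_nonneg (sub_nonneg.2 hx.2) _
  linarith [mul_nonneg hx0 (sq_nonneg (η x - θ x))]

theorem neg_integral_hyperKer_mul_le (hα : 0 < α) (hα1 : α < 1) (ht : IsMesh t)
    (hθ : MarchaudRegular α (t n) B θ) (hL0 : ∀ k, 0 ≤ L k) (hL : CellLipschitz t n L θ)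
    (hη : CellSmall t n σ ε η) :
    -(∫ q : ℝ × ℝ, hyperKer α q.1 q.2 * (θ q.1 - θ q.2) * η q.2
        ∂(volIoc (t n)).prod (volIoc (t n)))
      ≤ cellSum t n α ε / (1 - α) / α
        + (∑ k ∈ Finset.range n, L k * ε k * (t (k + 1) - t k) ^ (2 - α)) / (1 - α)
        + 1 / 4 * ∫ q : ℝ × ℝ, hyperKer α q.1 q.2 * (θ q.1 - θ q.2) ^ 2
            ∂(volIoc (t n)).prod (volIoc (t n)) := by
  obtain ⟨hoffi, hoff⟩ := hη.integral_offCellKer_mul_sq_snd_le hα hα1 ht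
  obtain ⟨hini, hin⟩ := integral_inCellKer_mul_le (n := n) hα1 ht
    fun k => mul_nonneg (hL0 k) (hη.nonneg k)
  have hi := integrable_mul_snd_of_abs_le hη.measurable (fun x hx => hη.abs_le_sum ht hx)
    hθ.integrable
  refine le_trans ?_ (add_le_add_left (add_le_add hoff hin) _)
  rw [← integral_const_mul, ← integral_neg]
  refine integral_le_add_add hi.neg hoffi hini (hθ.integrable_hyperKer_mul_sq.const_mul _) ?_
  filter_upwards [ae_prod_mem_Ioc (t n)] with q hq
  have hsplit := hyperKer_mul_le_split (t := t) (n := n) (α := α) (x := q.1) (y := q.2)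
    (F := -((θ q.1 - θ q.2) * η q.2) - 1 / 4 * (θ q.1 - θ q.2) ^ 2) (O := η q.2 ^ 2)
    (Λ := L (cellIdx t n q.1) * ε (cellIdx t n q.1))
    (by linarith [sq_nonneg ((θ q.1 - θ q.2) + 2 * η q.2)]) fun hLy hyx => ?_
  · linarith
  · have hηy := hη.abs_le q.2 hq.2
    rw [ht.cellIdx_eq_of_cellL_lt hq.1 hLy hyx.le] at hηy
    have hprod := mul_le_mul (hL q.1 hq.1 q.2 hLy hyx) hηy (abs_nonneg _)
      (mul_nonneg (sub_pos.2 hyx).le (hL0 _))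
    rw [← abs_mul, mul_assoc] at hprod
    linarith [neg_le_abs ((θ q.1 - θ q.2) * η q.2), sq_nonneg (θ q.1 - θ q.2)]

theorem mul_le_mul_sq_add_sq_div {l : ℝ} (hl : 0 < l) (a b : ℝ) :
    a * b ≤ l * a ^ 2 + b ^ 2 / (4 * l) := by
  have hsq : l * a ^ 2 + b ^ 2 / (4 * l) - a * b = (2 * l * a - b) ^ 2 / (4 * l) := by
    field_simp
    ring
  exact sub_nonneg.1 (hsq ▸ div_nonneg (sq_nonneg _) (mul_pos four_pos hl).le)

theorem sum_mul_mul_rpow_le (ht : IsMesh t) {δ : ℝ} (hδ : 0 < δ) (n : ℕ) (α : ℝ)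
    (L ε : ℕ → ℝ) :
    ∑ k ∈ Finset.range n, L k * ε k * (t (k + 1) - t k) ^ (2 - α)
      ≤ δ * (∑ k ∈ Finset.range n, L k ^ 2 * (t (k + 1) - t k) ^ (3 - α))
        + cellSum t n α ε / (4 * δ) := by
  rw [cellSum, Finset.mul_sum, Finset.sum_div, ← Finset.sum_add_distrib]
  refine Finset.sum_le_sum fun k _ => ?_
  have hτ : 0 < t (k + 1) - t k := sub_pos.2 (ht.strictMono k.lt_succ_self)
  set τ := t (k + 1) - t k
  have hpow2 : τ ^ (2 - α) = τ * τ ^ (1 - α) := by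
    rw [show 2 - α = 1 - α + 1 by ring, Real.rpow_add_one hτ.ne', mul_comm]
  have hpow3 : τ ^ (3 - α) = τ ^ 2 * τ ^ (1 - α) := by
    rw [show 3 - α = 1 - α + 1 + 1 by ring, Real.rpow_add_one hτ.ne', Real.rpow_add_one hτ.ne']
    ring
  calc L k * ε k * τ ^ (2 - α) = L k * τ * ε k * τ ^ (1 - α) := by rw [hpow2]; ring
    _ ≤ (δ * (L k * τ) ^ 2 + ε k ^ 2 / (4 * δ)) * τ ^ (1 - α) :=
        mul_le_mul_of_nonneg_right (mul_le_mul_sq_add_sq_div hδ _ _) (Real.rpow_nonneg hτ.le _)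
    _ = δ * (L k ^ 2 * τ ^ (3 - α)) + ε k ^ 2 * τ ^ (1 - α) / (4 * δ) := by rw [hpow3]; ring

theorem energy_le_mul_cellSum (hα : 0 < α) (hα1 : α < 1) (ht : IsMesh t) {K : ℝ} (hK : 0 < K)
    (hθ : MarchaudRegular α (t n) B θ) (hσ : 0 < σ) (hη : CellSmall t n σ ε η)
    (hL0 : ∀ k, 0 ≤ L k) (hL : CellLipschitz t n L θ)
    (hLK : ∑ k ∈ Finset.range n, L k ^ 2 * (t (k + 1) - t k) ^ (3 - α)
      ≤ K * ∫ q : ℝ × ℝ, hyperKer α q.1 q.2 * (θ q.1 - θ q.2) ^ 2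
          ∂(volIoc (t n)).prod (volIoc (t n)))
    (horth : ∫ x, marchaud α (fun y => θ y - η y) x * θ x ∂volIoc (t n) = 0) :
    (∫ x, x ^ (-α) * θ x ^ 2 ∂volIoc (t n))
        + α / 4 * (∫ q : ℝ × ℝ, hyperKer α q.1 q.2 * (θ q.1 - θ q.2) ^ 2
          ∂(volIoc (t n)).prod (volIoc (t n)))
      ≤ (3 / (1 - α) + 4 * α * K / (1 - α) ^ 2) * cellSum t n α ε := by
  have hid := energy_identity hα hα1 hθ (hη.marchaudRegular hα hα1 ht hσ) horth
  have hboundary := two_mul_integral_sub_rpow_mul_le hα hα1 ht hθ hη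
  have hinterior := neg_integral_hyperKer_mul_le hα hα1 ht hθ hL0 hL hη
  set S := cellSum t n α ε
  set G := ∫ q : ℝ × ℝ, hyperKer α q.1 q.2 * (θ q.1 - θ q.2) ^ 2
    ∂(volIoc (t n)).prod (volIoc (t n))
  have hα' : 0 < 1 - α := sub_pos.2 hα1
  have hδ : 0 < (1 - α) / (8 * K) := by positivity
  have hyoung := (sum_mul_mul_rpow_le ht hδ n α L ε).trans
    (add_le_add_left (mul_le_mul_of_nonneg_left hLK hδ.le) _)
  have hG := hinterior.trans (add_le_add_left (add_le_add_right
    (div_le_div_of_nonneg_right hyoung hα'.le) (S / (1 - α) / α)) (1 / 4 * G))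
  have hconst : 2 * α * (S / (1 - α) / α + ((1 - α) / (8 * K) * (K * G)
      + S / (4 * ((1 - α) / (8 * K)))) / (1 - α) + 1 / 4 * G)
      = (2 / (1 - α) + 4 * α * K / (1 - α) ^ 2) * S + 3 / 4 * (α * G) := by
    field_simp
    ring
  have hmain := (mul_le_mul_of_nonneg_left hG (mul_pos two_pos hα).le).trans_eq hconst
  have hsplit : (3 / (1 - α) + 4 * α * K / (1 - α) ^ 2) * S
      = S / (1 - α) + (2 / (1 - α) + 4 * α * K / (1 - α) ^ 2) * S := by ring
  linarith

end EnergyBound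

theorem exists_energy_bound {α σ : ℝ} (hα : 0 < α) (hα1 : α < 1) (hσ : 0 < σ) (p : ℕ) :
    ∃ C : ℝ, 0 < C ∧ ∀ (t : ℕ → ℝ) (n : ℕ) (Q : ℕ → Polynomial ℝ) (ε : ℕ → ℝ) (η : ℝ → ℝ),
      IsMesh t → (∀ k, (Q k).degree ≤ p) → CellSmall t n σ ε η →
      ∫ x, marchaud α (fun x => pwPoly t n Q x - η x) x * pwPoly t n Q x ∂volIoc (t n) = 0 →
      ∃ L : ℕ → ℝ, (∀ k, 0 ≤ L k) ∧ CellLipschitz t n L (pwPoly t n Q) ∧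
        ∫ x, x ^ (-α) * pwPoly t n Q x ^ 2 ∂volIoc (t n) ≤ C * cellSum t n α ε ∧
        ∫ q : ℝ × ℝ, hyperKer α q.1 q.2 * (pwPoly t n Q q.1 - pwPoly t n Q q.2) ^ 2
          ∂(volIoc (t n)).prod (volIoc (t n)) ≤ C * cellSum t n α ε ∧
        ∑ k ∈ Finset.range n, L k ^ 2 * (t (k + 1) - t k) ^ (3 - α) ≤ C * cellSum t n α ε := by
  obtain ⟨K, hK, hLip⟩ := exists_cellLipschitz p
  set C₁ : ℝ := 3 / (1 - α) + 4 * α * K / (1 - α) ^ 2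
  have hC₁ : 0 < C₁ := add_pos_of_pos_of_nonneg (div_pos three_pos (sub_pos.2 hα1)) (by positivity)
  refine ⟨C₁ + 4 / α * C₁ + K * (4 / α * C₁),
    add_pos (add_pos hC₁ (mul_pos (div_pos four_pos hα) hC₁))
      (mul_pos hK (mul_pos (div_pos four_pos hα) hC₁)),
    fun t n Q ε η ht hQ hη horth => ?_⟩
  obtain ⟨L, hL0, hL, hLsum⟩ := hLip α t n Q hα ht hQ
  obtain ⟨B, -, hθ⟩ := exists_marchaudRegular_pwPoly hα hα1 ht hL0 hL
  have hLK := hLsum hθ.integrable_hyperKer_mul_sq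
  have henergy := energy_le_mul_cellSum hα hα1 ht hK hθ hσ hη hL0 hL hLK horth
  have hI0 : 0 ≤ ∫ x, x ^ (-α) * pwPoly t n Q x ^ 2 ∂volIoc (t n) :=
    setIntegral_nonneg measurableSet_Ioc fun x hx =>
      mul_nonneg (Real.rpow_nonneg hx.1.le _) (sq_nonneg _)
  have hG0 : 0 ≤ ∫ q : ℝ × ℝ, hyperKer α q.1 q.2 * (pwPoly t n Q q.1 - pwPoly t n Q q.2) ^ 2
      ∂(volIoc (t n)).prod (volIoc (t n)) :=
    integral_nonneg fun q => mul_nonneg (hyperKer_nonneg _ _ _) (sq_nonneg _)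
  set S := cellSum t n α ε
  set G := ∫ q : ℝ × ℝ, hyperKer α q.1 q.2 * (pwPoly t n Q q.1 - pwPoly t n Q q.2) ^ 2
    ∂(volIoc (t n)).prod (volIoc (t n))
  have hS0 : 0 ≤ S := cellSum_nonneg ht n α ε
  have hG : G ≤ 4 / α * C₁ * S := by
    rw [mul_assoc, div_mul_eq_mul_div, le_div_iff₀ hα]
    linarith
  have hKG : K * G ≤ K * (4 / α * C₁) * S := by
    rw [mul_assoc]
    exact mul_le_mul_of_nonneg_left hG hK.le
  have hC₁S : 0 ≤ C₁ * S := mul_nonneg hC₁.le hS0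
  have hKS : 0 ≤ K * (4 / α * C₁) * S := by positivity
  have hαG : 0 ≤ α / 4 * G := by positivity
  rw [add_mul, add_mul]
  exact ⟨L, hL0, hL, by linarith, by linarith, by linarith⟩

/-! ### The dual function modulo piecewise constants -/

section DualKernel

variable {t : ℕ → ℝ} {n : ℕ} {α : ℝ}

/-- The approximation of the Abel kernel obtained by moving `y` to the left end `L` of its cell
`(L, R]`; it is kept only for `x` to the right of that cell. -/
noncomputable def coarseKer (t : ℕ → ℝ) (n : ℕ) (α x y : ℝ) : ℝ :=
  if cellR t n y < x then (x - cellL t n y) ^ (α - 1) else 0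

/-- The Abel kernel minus its coarse approximation. The difference is nonnegative on `(0, t n]`;
the maximum with zero makes it so everywhere. -/
noncomputable def dualKer (t : ℕ → ℝ) (n : ℕ) (α x y : ℝ) : ℝ :=
  max (abelKer α x y - coarseKer t n α x y) 0

theorem measurable_coarseKer (t : ℕ → ℝ) (n : ℕ) (α : ℝ) :
    Measurable (Function.uncurry (coarseKer t n α)) :=
  Measurable.ite (measurableSet_lt ((measurable_cellR t n).comp measurable_snd) measurable_fst)
    ((measurable_fst.sub ((measurable_cellL t n).comp measurable_snd)).pow_const _)
    measurable_const

theorem measurable_dualKer (t : ℕ → ℝ) (n : ℕ) (α : ℝ) :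
    Measurable (Function.uncurry (dualKer t n α)) :=
  ((measurable_abelKer α).sub (measurable_coarseKer t n α)).max measurable_const

theorem dualKer_nonneg (x y : ℝ) : 0 ≤ dualKer t n α x y := le_max_right _ _

namespace IsMesh

variable {h x y : ℝ}

theorem coarseKer_nonneg (ht : IsMesh t) (x y : ℝ) : 0 ≤ coarseKer t n α x y := by
  unfold coarseKer
  split_ifs with hx
  · exact Real.rpow_nonneg (sub_nonneg.2 ((ht.le_succ _).trans hx.le)) _
  · exact le_rfl

theorem dualKer_le_abelKer (ht : IsMesh t) (x y : ℝ) : dualKer t n α x y ≤ abelKer α x y :=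
  max_le (sub_le_self _ (ht.coarseKer_nonneg x y)) (abelKer_nonneg α x y)

theorem dualKer_eq (hα1 : α < 1) (ht : IsMesh t) (x : ℝ) (hy : y ∈ Ioc 0 (t n)) :
    dualKer t n α x y = abelKer α x y - coarseKer t n α x y := by
  refine max_eq_left (sub_nonneg.2 ?_)
  obtain ⟨hLy, hyR⟩ := ht.mem_cell hy
  by_cases hx : cellR t n y < x
  · rw [coarseKer, if_pos hx, abelKer, causal_of_lt _ (hyR.trans_lt hx)]
    exact Real.rpow_le_rpow_of_nonpos (by linarith) (by linarith) (by linarith)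
  · rw [coarseKer, if_neg hx]
    exact abelKer_nonneg α x y

theorem integrable_coarseKer_left (ht : IsMesh t) (hy : y ∈ Ioc 0 (t n)) :
    Integrable (coarseKer t n α · y) (volIoc (t n)) :=
  (integrable_causal_left (K := fun x _ => (x - cellL t n y) ^ (α - 1)) (ht.nonneg _)).2
    (integrableOn_rpow_sub_of_lt ((ht.mem_cell hy).1.trans_le (ht.mem_cell hy).2))

theorem integral_coarseKer_left (hα : 0 < α) (ht : IsMesh t) (hy : y ∈ Ioc 0 (t n)) :
    ∫ x, coarseKer t n α x y ∂volIoc (t n)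
      = ((t n - cellL t n y) ^ α - (cellR t n y - cellL t n y) ^ α) / α := by
  refine (integral_causal_left (K := fun x _ => (x - cellL t n y) ^ (α - 1))
    (ht.nonneg _)).trans ((integral_rpow_sub_of_lt (ht.cellR_le hy)
      ((ht.mem_cell hy).1.trans_le (ht.mem_cell hy).2) (by linarith)).trans ?_)
  rw [sub_add_cancel]

theorem integral_dualKer_left_le (hα : 0 < α) (hα1 : α < 1) (ht : IsMesh t)
    (hh : ∀ k < n, t (k + 1) - t k ≤ h) (hy : y ∈ Ioc 0 (t n)) :
    Integrable (dualKer t n α · y) (volIoc (t n)) ∧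
      ∫ x, dualKer t n α x y ∂volIoc (t n) ≤ h ^ α / α := by
  have habel := integrable_abelKer_left hα hy
  have hcoarse := ht.integrable_coarseKer_left (α := α) hy
  simp only [ht.dualKer_eq hα1 _ hy]
  refine ⟨habel.sub hcoarse, ?_⟩
  rw [integral_sub habel hcoarse, integral_abelKer_left hα hy, ht.integral_coarseKer_left hα hy,
    ← sub_div]
  obtain ⟨hLy, hyR⟩ := ht.mem_cell hy
  have htail : (t n - y) ^ α ≤ (t n - cellL t n y) ^ α :=
    Real.rpow_le_rpow (sub_nonneg.2 hy.2) (by linarith) hα.le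
  have hstep : (cellR t n y - cellL t n y) ^ α ≤ h ^ α :=
    Real.rpow_le_rpow (by linarith) (hh _ (ht.cellIdx_lt hy)) hα.le
  exact div_le_div_of_nonneg_right (by linarith) hα.le

end IsMesh

theorem integral_abelKer_mul_rpow_le (hα : 0 < α) (hα1 : α < 1) (a b x : ℝ) :
    IntegrableOn (fun y => abelKer α x y * (y - a) ^ (-α)) (Ioc a b) ∧
      ∫ y in Ioc a b, abelKer α x y * (y - a) ^ (-α)
        ≤ Real.Gamma α * Real.Gamma (1 - α) := by
  have hind : (fun y => abelKer α x y * (y - a) ^ (-α))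
      = (Iio x).indicator fun y => (x - y) ^ (α - 1) * (y - a) ^ (-α) := by
    ext y
    simp [abelKer, causal, indicator]
  have hsub : Iio x ∩ Ioc a b ⊆ Ioc a x := fun y hy => ⟨hy.2.1, hy.1.le⟩
  rw [hind, integral_indicator measurableSet_Iio, IntegrableOn,
    integrable_indicator_iff measurableSet_Iio, IntegrableOn,
    Measure.restrict_restrict measurableSet_Iio]
  rcases lt_or_ge a x with hax | hxa
  · have hi := integrableOn_beta hα hα1 hax
    refine ⟨hi.mono_set hsub, ?_⟩
    rw [← integral_beta hα hα1 hax]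
    exact setIntegral_mono_set hi ((ae_restrict_mem measurableSet_Ioc).mono fun y hy =>
      mul_nonneg (Real.rpow_nonneg (sub_nonneg.2 hy.2) _)
        (Real.rpow_nonneg (sub_nonneg.2 hy.1.le) _)) hsub.eventuallyLE
  · rw [subset_empty_iff.1 (hsub.trans_eq (Ioc_eq_empty hxa.not_gt)), Measure.restrict_empty,
      integral_zero_measure]
    exact ⟨integrable_zero_measure, zero_le_one.trans (one_le_Gamma_mul_Gamma_one_sub hα hα1)⟩

theorem rpow_sub_rpow_le_mul_sub (hα : 0 ≤ α) {a b : ℝ} (ha : 0 < a) (hab : a ≤ b) :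
    a ^ (α - 1) - b ^ (α - 1) ≤ a ^ (α - 2) * (b - a) := by
  have hb : 0 < b := ha.trans_le hab
  calc a ^ (α - 1) - b ^ (α - 1) = a ^ α / a - b ^ α / b := by
        rw [Real.rpow_sub_one ha.ne', Real.rpow_sub_one hb.ne']
    _ ≤ a ^ α / a - a ^ α / b := by gcongr
    _ = a ^ α * (b - a) / (a * b) := by field_simp
    _ ≤ a ^ α * (b - a) / (a * a) :=
        div_le_div_of_nonneg_left (mul_nonneg (Real.rpow_nonneg ha.le _) (sub_nonneg.2 hab))
          (mul_pos ha ha) (mul_le_mul_of_nonneg_left hab ha.le)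
    _ = a ^ (α - 2) * (b - a) := by
        rw [show α - 2 = α - 1 - 1 by ring, Real.rpow_sub_one ha.ne', Real.rpow_sub_one ha.ne']
        field_simp

theorem mul_le_sub_of_monotone_step (hstep : Monotone fun k => t (k + 1) - t k) (k m : ℕ) :
    (m : ℝ) * (t (k + 1) - t k) ≤ t (k + 1 + m) - t (k + 1) := by
  induction m with
  | zero => simp
  | succ m ih =>
    have hkm := hstep (show k ≤ k + 1 + m by omega)
    simp only at hkm
    push_cast
    rw [← add_assoc]
    linarith

namespace IsMesh

variable {x y : ℝ} {k : ℕ}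

theorem abs_sub_cellL (ht : IsMesh t) (hk : k < n) (hy : y ∈ Ioc (t k) (t (k + 1))) :
    |y - cellL t n y| = y - t k := by
  rw [cellL, ht.cellIdx_eq hk hy, abs_of_pos (sub_pos.2 hy.1)]

theorem dualKer_le_rpow_mul_rpow (hα : 0 ≤ α) (hα1 : α < 1) (ht : IsMesh t) (hk : k < n)
    (hy : y ∈ Ioc (t k) (t (k + 1))) {c : ℝ} (hc : 0 < c)
    (hcx : c * (t (k + 1) - t k) ≤ x - t (k + 1)) :
    dualKer t n α x y ≤ c ^ (α - 2) * (t (k + 1) - t k) ^ (α - 1) := by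
  have hτ : 0 < t (k + 1) - t k := sub_pos.2 (ht.strictMono k.lt_succ_self)
  have hcτ := mul_pos hc hτ
  have hyx : y < x := by linarith [hy.2]
  rw [ht.dualKer_eq hα1 x (ht.cell_subset hk hy), abelKer, causal_of_lt _ hyx, coarseKer, cellR,
    cellL, ht.cellIdx_eq hk hy, if_pos (by linarith)]
  refine (rpow_sub_rpow_le_mul_sub hα (sub_pos.2 hyx) (by linarith [hy.1])).trans ?_
  calc (x - y) ^ (α - 2) * (x - t k - (x - y))
      ≤ (c * (t (k + 1) - t k)) ^ (α - 2) * (t (k + 1) - t k) :=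
        mul_le_mul (Real.rpow_le_rpow_of_nonpos hcτ (by linarith [hy.2]) (by linarith))
          (by linarith [hy.2]) (by linarith [hy.1]) (Real.rpow_nonneg hcτ.le _)
    _ = _ := by
        rw [Real.mul_rpow hc.le hτ.le, mul_assoc, ← Real.rpow_add_one hτ.ne',
          show α - 2 + 1 = α - 1 by ring]

theorem integral_dualKer_mul_cell_le (hα : 0 < α) (hα1 : α < 1) (ht : IsMesh t) (hk : k < n)
    (x : ℝ) :
    IntegrableOn (fun y => dualKer t n α x y * |y - cellL t n y| ^ (-α))
        (Ioc (t k) (t (k + 1))) ∧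
      ∫ y in Ioc (t k) (t (k + 1)), dualKer t n α x y * |y - cellL t n y| ^ (-α)
        ≤ Real.Gamma α * Real.Gamma (1 - α) := by
  obtain ⟨hbetai, hbeta⟩ := integral_abelKer_mul_rpow_le hα hα1 (t k) (t (k + 1)) x
  have hle : ∀ y ∈ Ioc (t k) (t (k + 1)), dualKer t n α x y * |y - cellL t n y| ^ (-α)
      ≤ abelKer α x y * (y - t k) ^ (-α) := fun y hy => by
    rw [ht.abs_sub_cellL hk hy]
    exact mul_le_mul_of_nonneg_right (ht.dualKer_le_abelKer x y)
      (Real.rpow_nonneg (sub_pos.2 hy.1).le _)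
  have hmeas : Measurable fun y => dualKer t n α x y * |y - cellL t n y| ^ (-α) :=
    (measurable_dualKer t n α).of_uncurry_left.mul
      ((measurable_id.sub (measurable_cellL t n)).abs.pow_const _)
  have hi : IntegrableOn (fun y => dualKer t n α x y * |y - cellL t n y| ^ (-α))
      (Ioc (t k) (t (k + 1))) := by
    refine Integrable.mono' hbetai hmeas.aestronglyMeasurable ?_
    filter_upwards [ae_restrict_mem measurableSet_Ioc] with y hy
    rw [Real.norm_of_nonneg (mul_nonneg (dualKer_nonneg _ _)
      (Real.rpow_nonneg (abs_nonneg _) _))]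
    exact hle y hy
  exact ⟨hi, (setIntegral_mono_on hi hbetai measurableSet_Ioc hle).trans hbeta⟩

theorem integral_dualKer_mul_cell_eq_zero (ht : IsMesh t) (hk : k < n) (hx : x ≤ t k) :
    ∫ y in Ioc (t k) (t (k + 1)), dualKer t n α x y * |y - cellL t n y| ^ (-α) = 0 := by
  refine setIntegral_eq_zero_of_forall_eq_zero fun y hy => ?_
  have hcoarse : ¬ cellR t n y < x := by
    rw [cellR, ht.cellIdx_eq hk hy]
    exact (hx.trans (ht.le_succ k)).not_gt
  rw [dualKer, abelKer, causal_of_le _ (hx.trans hy.1.le), coarseKer, if_neg hcoarse, sub_zero,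
    max_self, zero_mul]

theorem integral_dualKer_mul_cell_le_of_le (hα : 0 < α) (hα1 : α < 1) (ht : IsMesh t)
    (hk : k < n) {c : ℝ} (hc : 0 < c) (hcx : c * (t (k + 1) - t k) ≤ x - t (k + 1)) :
    ∫ y in Ioc (t k) (t (k + 1)), dualKer t n α x y * |y - cellL t n y| ^ (-α)
      ≤ c ^ (α - 2) / (1 - α) := by
  have hτ : 0 < t (k + 1) - t k := sub_pos.2 (ht.strictMono k.lt_succ_self)
  have hi := (integrableOn_sub_left_rpow (ht.le_succ k) (γ := -α) (by linarith)).const_mul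
    (c ^ (α - 2) * (t (k + 1) - t k) ^ (α - 1))
  refine (setIntegral_mono_on (ht.integral_dualKer_mul_cell_le hα hα1 hk x).1 hi
    measurableSet_Ioc fun y hy => ?_).trans_eq ?_
  · rw [ht.abs_sub_cellL hk hy]
    exact mul_le_mul_of_nonneg_right (ht.dualKer_le_rpow_mul_rpow hα.le hα1 hk hy hc hcx)
      (Real.rpow_nonneg (sub_pos.2 hy.1).le _)
  · rw [integral_const_mul, integral_sub_left_rpow (ht.le_succ k) (by linarith), mul_assoc,
      ← mul_div_assoc, ← Real.rpow_add hτ, show α - 1 + (-α + 1) = 0 by ring, Real.rpow_zero,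
      show -α + 1 = 1 - α by ring, mul_one_div]

end IsMesh

/-- Bound for the mass of the weighted dual kernel on the cell lying `i` cells to the left of `x`:
a beta integral if `i ≤ 1`, a first-order expansion of the Abel kernel otherwise. -/
noncomputable def dualCellBound (α : ℝ) : ℕ → ℝ
  | 0 | 1 => Real.Gamma α * Real.Gamma (1 - α)
  | m + 2 => ((m + 1 : ℕ) : ℝ) ^ (α - 2) / (1 - α)

theorem summable_dualCellBound (hα1 : α < 1) : Summable (dualCellBound α) := by
  rw [← summable_nat_add_iff 2]
  exact ((summable_nat_add_iff 1).2
    (Real.summable_nat_rpow.2 (show α - 2 < -1 by linarith))).div_const _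

theorem dualCellBound_nonneg (hα : 0 < α) (hα1 : α < 1) : ∀ i, 0 ≤ dualCellBound α i
  | 0 | 1 => zero_le_one.trans (one_le_Gamma_mul_Gamma_one_sub hα hα1)
  | _ + 2 => div_nonneg (Real.rpow_nonneg (Nat.cast_nonneg _) _) (sub_nonneg.2 hα1.le)

namespace IsMesh

variable {x : ℝ}

theorem integral_dualKer_mul_cell_le_dualCellBound (hα : 0 < α) (hα1 : α < 1) (ht : IsMesh t)
    (hstep : Monotone fun k => t (k + 1) - t k) (hx : x ∈ Ioc 0 (t n)) {k : ℕ} (hk : k < n)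
    {i : ℕ} (hi : k + i = cellIdx t n x) :
    ∫ y in Ioc (t k) (t (k + 1)), dualKer t n α x y * |y - cellL t n y| ^ (-α)
      ≤ dualCellBound α i := by
  match i, hi with
  | 0, _ => exact (ht.integral_dualKer_mul_cell_le hα hα1 hk x).2
  | 1, _ => exact (ht.integral_dualKer_mul_cell_le hα hα1 hk x).2
  | m + 2, hi =>
    refine ht.integral_dualKer_mul_cell_le_of_le hα hα1 hk (by positivity) ?_
    have hgap := mul_le_sub_of_monotone_step hstep k (m + 1)
    have hxL := (ht.mem_cell hx).1
    rw [cellL, ← hi, show k + (m + 2) = k + 1 + (m + 1) by omega] at hxL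
    linarith

theorem integral_dualKer_mul_le (hα : 0 < α) (hα1 : α < 1) (ht : IsMesh t)
    (hstep : Monotone fun k => t (k + 1) - t k) (hx : x ∈ Ioc 0 (t n)) :
    Integrable (fun y => dualKer t n α x y * |y - cellL t n y| ^ (-α)) (volIoc (t n)) ∧
      ∫ y, dualKer t n α x y * |y - cellL t n y| ^ (-α) ∂volIoc (t n)
        ≤ ∑' i, dualCellBound α i := by
  have hi := ht.integrable_of_cells (n := n) fun k hk =>
    (ht.integral_dualKer_mul_cell_le hα hα1 hk x).1
  refine ⟨hi, ?_⟩
  have hjn := ht.cellIdx_lt hx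
  have hxR := (ht.mem_cell hx).2
  rw [cellR] at hxR
  set j := cellIdx t n x
  calc ∫ y, dualKer t n α x y * |y - cellL t n y| ^ (-α) ∂volIoc (t n)
      = ∑ k ∈ Finset.range (j + 1), ∫ y in Ioc (t k) (t (k + 1)),
          dualKer t n α x y * |y - cellL t n y| ^ (-α) := by
        rw [ht.integral_eq_sum_cells hi]
        refine (Finset.sum_subset (Finset.range_subset_range.2 hjn) fun k hk hkj =>
          ht.integral_dualKer_mul_cell_eq_zero (Finset.mem_range.1 hk) (hxR.trans ?_)).symm
        exact ht.strictMono.monotone (not_lt.1 fun h => hkj (Finset.mem_range.2 h))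
    _ ≤ ∑ k ∈ Finset.range (j + 1), dualCellBound α (j + 1 - 1 - k) := by
        refine Finset.sum_le_sum fun k hk => ?_
        have hkj := Finset.mem_range.1 hk
        exact ht.integral_dualKer_mul_cell_le_dualCellBound hα hα1 hstep hx (by omega) (by omega)
    _ ≤ ∑' i, dualCellBound α i := by
        rw [Finset.sum_range_reflect]
        exact (summable_dualCellBound hα1).sum_le_tsum _ fun i _ => dualCellBound_nonneg hα hα1 i

end IsMesh

end DualKernel

section DualFunction

variable {t : ℕ → ℝ} {n : ℕ} {α B h : ℝ} {e : ℝ → ℝ}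

/-- The Abel integral of `e` minus the piecewise constant obtained from the coarse kernel. -/
noncomputable def dualFun (t : ℕ → ℝ) (n : ℕ) (α : ℝ) (e : ℝ → ℝ) (y : ℝ) : ℝ :=
  ∫ x, dualKer t n α x y * e x ∂volIoc (t n)

theorem measurable_dualFun (he : Measurable e) : Measurable (dualFun t n α e) :=
  (((measurable_dualKer t n α).mul (he.comp measurable_fst)).stronglyMeasurable.integral_prod_left
    (f := fun x y => dualKer t n α x y * e x) (μ := volIoc (t n))).measurable

namespace IsMesh

theorem abs_dualFun_le (hα : 0 < α) (hα1 : α < 1) (ht : IsMesh t)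
    (hh : ∀ k < n, t (k + 1) - t k ≤ h) (hB0 : 0 ≤ B)
    (hB : ∀ x ∈ Ioc 0 (t n), |e x| ≤ B) {y : ℝ} (hy : y ∈ Ioc 0 (t n)) :
    |dualFun t n α e y| ≤ h ^ α / α * B := by
  obtain ⟨hi, hle⟩ := ht.integral_dualKer_left_le hα hα1 hh hy
  calc ‖dualFun t n α e y‖ ≤ ∫ x, dualKer t n α x y * B ∂volIoc (t n) := by
        refine norm_integral_le_of_norm_le (hi.mul_const B) ?_
        filter_upwards [ae_restrict_mem measurableSet_Ioc] with x hx
        rw [norm_mul, Real.norm_of_nonneg (dualKer_nonneg x y)]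
        exact mul_le_mul_of_nonneg_left (hB x hx) (dualKer_nonneg x y)
    _ ≤ _ := by
        rw [integral_mul_const]
        exact mul_le_mul_of_nonneg_right hle hB0

theorem exists_integral_abelKer_mul_eq_dualFun_add (hα : 0 < α) (hα1 : α < 1) (ht : IsMesh t)
    (he : Measurable e) (hB : ∀ x ∈ Ioc 0 (t n), |e x| ≤ B) :
    ∃ c : ℕ → ℝ, ∀ y ∈ Ioc 0 (t n),
      ∫ x, abelKer α x y * e x ∂volIoc (t n) = dualFun t n α e y + c (cellIdx t n y) := by
  refine ⟨fun k => ∫ x, (if t (k + 1) < x then (x - t k) ^ (α - 1) else 0) * e x ∂volIoc (t n),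
    fun y hy => ?_⟩
  have habel := integrable_mul_of_abs_le he hB (integrable_abelKer_left hα hy)
  have hcoarse := integrable_mul_of_abs_le he hB (ht.integrable_coarseKer_left (α := α) hy)
  simp only [dualFun, ht.dualKer_eq hα1 _ hy, sub_mul]
  rw [integral_sub habel hcoarse]
  exact (sub_add_cancel _ _).symm

theorem integral_rpow_mul_dualFun_sq_le (hα : 0 < α) (hα1 : α < 1) (ht : IsMesh t)
    (hstep : Monotone fun k => t (k + 1) - t k) (hh0 : 0 ≤ h)
    (hh : ∀ k < n, t (k + 1) - t k ≤ h) (he : Measurable e)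
    (hB : ∀ x ∈ Ioc 0 (t n), |e x| ≤ B) :
    Integrable (fun y => |y - cellL t n y| ^ (-α) * dualFun t n α e y ^ 2) (volIoc (t n)) ∧
      ∫ y, |y - cellL t n y| ^ (-α) * dualFun t n α e y ^ 2 ∂volIoc (t n)
        ≤ h ^ α / α * (∑' i, dualCellBound α i) * ∫ x, e x ^ 2 ∂volIoc (t n) := by
  have hB2 : ∀ x ∈ Ioc 0 (t n), |e x ^ 2| ≤ B ^ 2 := fun x hx => by
    rw [abs_pow]
    exact pow_le_pow_left₀ (abs_nonneg _) (hB x hx) 2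
  have hweight : Measurable fun y => |y - cellL t n y| ^ (-α) :=
    (measurable_id.sub (measurable_cellL t n)).abs.pow_const _
  have hw0 : ∀ y, 0 ≤ |y - cellL t n y| ^ (-α) := fun y => Real.rpow_nonneg (abs_nonneg _) _
  obtain ⟨hkeri, hker⟩ := integral_kernel_mul_fst_le (μ := volIoc (t n)) (ν := volIoc (t n))
    (κ := fun x y => dualKer t n α x y * |y - cellL t n y| ^ (-α))
    ((measurable_dualKer t n α).mul (hweight.comp measurable_snd))
    (fun x y => mul_nonneg (dualKer_nonneg x y) (hw0 y))
    ((ae_restrict_mem measurableSet_Ioc).mono fun x hx =>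
      ht.integral_dualKer_mul_le hα hα1 hstep hx)
    (he.pow_const 2) (fun x => sq_nonneg _)
    ((integrable_of_abs_le (he.pow_const 2) hB2).mul_const _)
  have hdom := hkeri.integral_prod_right.const_mul (h ^ α / α)
  have hle : ∀ᵐ y ∂volIoc (t n), |y - cellL t n y| ^ (-α) * dualFun t n α e y ^ 2 ≤
      h ^ α / α * ∫ x, dualKer t n α x y * |y - cellL t n y| ^ (-α) * e x ^ 2 ∂volIoc (t n) := by
    filter_upwards [ae_restrict_mem measurableSet_Ioc] with y hy
    obtain ⟨hi, hm⟩ := ht.integral_dualKer_left_le hα hα1 hh hy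
    have hcs := sq_integral_mul_le (fun x => dualKer_nonneg x y) hi hm
      (integrable_mul_of_abs_le he hB hi) (integrable_mul_of_abs_le (he.pow_const 2) hB2 hi)
    simp only [mul_right_comm _ (|y - cellL t n y| ^ (-α)), integral_mul_const]
    rw [← mul_assoc, mul_comm]
    exact mul_le_mul_of_nonneg_right hcs (hw0 y)
  have hi : Integrable (fun y => |y - cellL t n y| ^ (-α) * dualFun t n α e y ^ 2)
      (volIoc (t n)) := by
    refine hdom.mono' (hweight.mul ((measurable_dualFun he).pow_const 2)).aestronglyMeasurable ?_
    filter_upwards [hle] with y hy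
    rwa [Real.norm_of_nonneg (mul_nonneg (hw0 y) (sq_nonneg _))]
  refine ⟨hi, (integral_mono_ae hi hdom hle).trans ?_⟩
  rw [integral_prod_symm _ hkeri, integral_mul_const, mul_comm _ (∑' i, dualCellBound α i)] at hker
  rw [integral_const_mul, mul_assoc]
  exact mul_le_mul_of_nonneg_left hker (div_nonneg (Real.rpow_nonneg hh0 _) hα.le)

end IsMesh

end DualFunction

/-! ### The duality estimate -/

/-- An energy of `e` that controls the pairings of its Marchaud derivative: boundary part, part
coming from pairs of points in different cells, and part inside the cells, where `Λ` bounds the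
difference quotients of `e`. -/
noncomputable def splitEnergy (t : ℕ → ℝ) (n : ℕ) (α : ℝ) (Λ e : ℝ → ℝ) : ℝ :=
  (∫ x, x ^ (-α) * e x ^ 2 ∂volIoc (t n))
    + (∫ p : ℝ × ℝ, offCellKer t n α p.1 p.2 * (e p.1 - e p.2) ^ 2
        ∂(volIoc (t n)).prod (volIoc (t n)))
    + (∫ x, Λ x ^ 2 * (x - cellL t n x) ^ (2 - α) ∂volIoc (t n)) / (1 - α)

section MarchaudPairing

variable {t : ℕ → ℝ} {n : ℕ} {α B B' l : ℝ} {e ζ Λ : ℝ → ℝ}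

theorem integrable_rpow_mul_sq {b : ℝ} (hα1 : α < 1) (he : Measurable e)
    (hB : ∀ x ∈ Ioc 0 b, |e x| ≤ B) : Integrable (fun x => x ^ (-α) * e x ^ 2) (volIoc b) :=
  (integrable_mul_of_abs_le he hB (integrable_mul_of_abs_le he hB
    (integrable_rpow_neg hα1 b))).congr (.of_forall fun x => by
      simp only
      ring)

theorem integral_rpow_mul_mul_le (hα : 0 < α) (hα1 : α < 1) (ht : IsMesh t) (hl : 0 < l)
    (he : Measurable e) (hB : ∀ x ∈ Ioc 0 (t n), |e x| ≤ B)
    (hζ : Measurable ζ) (hB' : ∀ x ∈ Ioc 0 (t n), |ζ x| ≤ B')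
    (hζi : Integrable (fun x => |x - cellL t n x| ^ (-α) * ζ x ^ 2) (volIoc (t n))) :
    ∫ x, x ^ (-α) * e x * ζ x ∂volIoc (t n)
      ≤ l * (∫ x, x ^ (-α) * e x ^ 2 ∂volIoc (t n))
        + (∫ x, |x - cellL t n x| ^ (-α) * ζ x ^ 2 ∂volIoc (t n)) / (4 * l) := by
  have hei := integrable_rpow_mul_sq hα1 he hB
  have hl4 : 0 ≤ 4 * l := (mul_pos four_pos hl).le
  rw [← integral_const_mul, ← integral_div, ← integral_add (hei.const_mul l) (hζi.div_const _)]
  refine setIntegral_mono_on (integrable_mul_of_abs_le hζ hB' (integrable_mul_of_abs_le he hB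
    (integrable_rpow_neg hα1 (t n)))) ((hei.const_mul l).add (hζi.div_const _))
    measurableSet_Ioc fun x hx => ?_
  have hLx : 0 < x - cellL t n x := sub_pos.2 (ht.mem_cell hx).1
  have hweight : x ^ (-α) ≤ |x - cellL t n x| ^ (-α) := by
    rw [abs_of_pos hLx]
    exact Real.rpow_le_rpow_of_nonpos hLx (sub_le_self _ (ht.cellL_nonneg x)) (by linarith)
  calc x ^ (-α) * e x * ζ x = x ^ (-α) * (e x * ζ x) := by ring
    _ ≤ x ^ (-α) * (l * e x ^ 2 + ζ x ^ 2 / (4 * l)) :=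
        mul_le_mul_of_nonneg_left (mul_le_mul_sq_add_sq_div hl _ _) (Real.rpow_nonneg hx.1.le _)
    _ = l * (x ^ (-α) * e x ^ 2) + x ^ (-α) * ζ x ^ 2 / (4 * l) := by ring
    _ ≤ _ := add_le_add_right (div_le_div_of_nonneg_right
        (mul_le_mul_of_nonneg_right hweight (sq_nonneg _)) hl4) _

theorem integral_offCellKer_mul_sq_le (hα : 0 < α) (ht : IsMesh t) (hζ : Measurable ζ)
    (hζi : Integrable (fun x => |x - cellL t n x| ^ (-α) * ζ x ^ 2) (volIoc (t n))) :
    Integrable (fun p : ℝ × ℝ => offCellKer t n α p.1 p.2 * ζ p.1 ^ 2)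
      ((volIoc (t n)).prod (volIoc (t n))) ∧
    ∫ p : ℝ × ℝ, offCellKer t n α p.1 p.2 * ζ p.1 ^ 2 ∂(volIoc (t n)).prod (volIoc (t n))
      ≤ (∫ x, |x - cellL t n x| ^ (-α) * ζ x ^ 2 ∂volIoc (t n)) / α := by
  have hae : (fun x => |x - cellL t n x| ^ (-α) * ζ x ^ 2 / α)
      =ᵐ[volIoc (t n)] fun x => ζ x ^ 2 * ((x - cellL t n x) ^ (-α) / α) := by
    filter_upwards [ae_restrict_mem measurableSet_Ioc] with x hx
    rw [abs_of_pos (sub_pos.2 (ht.mem_cell hx).1)]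
    ring
  rw [← integral_div, integral_congr_ae hae]
  exact integral_kernel_mul_fst_le (measurable_offCellKer t n α) offCellKer_nonneg
    (ae_integral_offCellKer_right_le hα ht) (hζ.pow_const 2) (fun x => sq_nonneg _)
    ((hζi.div_const α).congr hae)

theorem mul_abs_mul_rpow_le {w z : ℝ} (hα1 : α < 1) (hl : 0 < l) (hw : 0 < w) (a : ℝ) :
    a * |z| * (w ^ (1 - α) / (1 - α))
      ≤ l / (1 - α) * (a ^ 2 * w ^ (2 - α)) + (|w| ^ (-α) * z ^ 2) / (4 * l * (1 - α)) := by
  have hα' : 0 < 1 - α := sub_pos.2 hα1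
  have hpow1 : w ^ (1 - α) = w ^ (-α) * w := by
    rw [← Real.rpow_add_one hw.ne', neg_add_eq_sub]
  have hpow2 : w ^ (2 - α) = w ^ (-α) * w ^ 2 := by
    rw [show 2 - α = -α + (2 : ℕ) by push_cast; ring, Real.rpow_add_natCast hw.ne']
  have hyoung := mul_le_mul_sq_add_sq_div hl (a * w) |z|
  rw [sq_abs] at hyoung
  rw [hpow1, hpow2, abs_of_pos hw]
  calc a * |z| * (w ^ (-α) * w / (1 - α)) = w ^ (-α) / (1 - α) * (a * w * |z|) := by ring
    _ ≤ w ^ (-α) / (1 - α) * (l * (a * w) ^ 2 + z ^ 2 / (4 * l)) :=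
        mul_le_mul_of_nonneg_left hyoung (div_nonneg (Real.rpow_nonneg hw.le _) hα'.le)
    _ = _ := by
        field_simp

theorem integral_inCellKer_mul_mul_abs_le (hα1 : α < 1) (ht : IsMesh t) (hl : 0 < l)
    (hΛ : Measurable Λ) (hΛ0 : ∀ x, 0 ≤ Λ x)
    (hΛi : Integrable (fun x => Λ x ^ 2 * (x - cellL t n x) ^ (2 - α)) (volIoc (t n)))
    (hζ : Measurable ζ)
    (hζi : Integrable (fun x => |x - cellL t n x| ^ (-α) * ζ x ^ 2) (volIoc (t n))) :
    Integrable (fun p : ℝ × ℝ => inCellKer t n α p.1 p.2 * (Λ p.1 * |ζ p.1|))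
      ((volIoc (t n)).prod (volIoc (t n))) ∧
    ∫ p : ℝ × ℝ, inCellKer t n α p.1 p.2 * (Λ p.1 * |ζ p.1|)
        ∂(volIoc (t n)).prod (volIoc (t n))
      ≤ l / (1 - α) * (∫ x, Λ x ^ 2 * (x - cellL t n x) ^ (2 - α) ∂volIoc (t n))
        + (∫ x, |x - cellL t n x| ^ (-α) * ζ x ^ 2 ∂volIoc (t n)) / (4 * l * (1 - α)) := by
  have hLx : ∀ᵐ x ∂volIoc (t n), 0 < x - cellL t n x := by
    filter_upwards [ae_restrict_mem measurableSet_Ioc] with x hx using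
      sub_pos.2 (ht.mem_cell hx).1
  have hle : ∀ᵐ x ∂volIoc (t n), Λ x * |ζ x| * ((x - cellL t n x) ^ (1 - α) / (1 - α))
      ≤ l / (1 - α) * (Λ x ^ 2 * (x - cellL t n x) ^ (2 - α))
        + (|x - cellL t n x| ^ (-α) * ζ x ^ 2) / (4 * l * (1 - α)) := by
    filter_upwards [hLx] with x hx using mul_abs_mul_rpow_le hα1 hl hx _
  have hdom := (hΛi.const_mul (l / (1 - α))).add (hζi.div_const (4 * l * (1 - α)))
  have hi : Integrable (fun x => Λ x * |ζ x| * ((x - cellL t n x) ^ (1 - α) / (1 - α)))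
      (volIoc (t n)) := by
    refine hdom.mono' ((hΛ.mul hζ.abs).mul (((measurable_id.sub
      (measurable_cellL t n)).pow_const _).div_const _)).aestronglyMeasurable ?_
    filter_upwards [hle, hLx] with x hx hLx
    rwa [Real.norm_of_nonneg (mul_nonneg (mul_nonneg (hΛ0 x) (abs_nonneg _))
      (div_nonneg (Real.rpow_nonneg hLx.le _) (sub_pos.2 hα1).le))]
  obtain ⟨hik, hlek⟩ := integral_kernel_mul_fst_le (measurable_inCellKer t n α) inCellKer_nonneg
    (ae_integral_inCellKer_right_le hα1 ht) (hΛ.mul hζ.abs)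
    (fun x => mul_nonneg (hΛ0 x) (abs_nonneg _)) hi
  refine ⟨hik, hlek.trans ((integral_mono_ae hi hdom hle).trans_eq ?_)⟩
  rw [← integral_const_mul, ← integral_div]
  exact integral_add (hΛi.const_mul _) (hζi.div_const _)

theorem MarchaudRegular.integrable_offCellKer_mul_sq (he : MarchaudRegular α (t n) B e) :
    Integrable (fun p : ℝ × ℝ => offCellKer t n α p.1 p.2 * (e p.1 - e p.2) ^ 2)
      ((volIoc (t n)).prod (volIoc (t n))) := by
  refine he.integrable_hyperKer_mul_sq.mono' ((measurable_offCellKer t n α).mul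
    (((he.measurable.comp measurable_fst).sub
      (he.measurable.comp measurable_snd)).pow_const 2)).aestronglyMeasurable
    (.of_forall fun q => ?_)
  rw [Real.norm_of_nonneg (mul_nonneg (offCellKer_nonneg _ _) (sq_nonneg _))]
  exact mul_le_mul_of_nonneg_right (offCellKer_le_hyperKer _ _) (sq_nonneg _)

/-- Pointwise, a pair in different cells is paired by Young's inequality, a pair in the same cell
by the slope bound; the kernel is too singular for Young's inequality near the diagonal. -/
theorem integral_hyperKer_mul_mul_le (hα : 0 < α) (hα1 : α < 1) (ht : IsMesh t) (hl : 0 < l)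
    (he : MarchaudRegular α (t n) B e) (hΛ : Measurable Λ) (hΛ0 : ∀ x, 0 ≤ Λ x)
    (hΛe : ∀ x ∈ Ioc 0 (t n), ∀ y, cellL t n x < y → y < x → |e x - e y| ≤ (x - y) * Λ x)
    (hΛi : Integrable (fun x => Λ x ^ 2 * (x - cellL t n x) ^ (2 - α)) (volIoc (t n)))
    (hζ : Measurable ζ) (hB' : ∀ x ∈ Ioc 0 (t n), |ζ x| ≤ B')
    (hζi : Integrable (fun x => |x - cellL t n x| ^ (-α) * ζ x ^ 2) (volIoc (t n))) :
    ∫ p : ℝ × ℝ, hyperKer α p.1 p.2 * (e p.1 - e p.2) * ζ p.1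
        ∂(volIoc (t n)).prod (volIoc (t n))
      ≤ l * (∫ p : ℝ × ℝ, offCellKer t n α p.1 p.2 * (e p.1 - e p.2) ^ 2
          ∂(volIoc (t n)).prod (volIoc (t n)))
        + (∫ x, |x - cellL t n x| ^ (-α) * ζ x ^ 2 ∂volIoc (t n)) / α / (4 * l)
        + (l / (1 - α) * (∫ x, Λ x ^ 2 * (x - cellL t n x) ^ (2 - α) ∂volIoc (t n))
          + (∫ x, |x - cellL t n x| ^ (-α) * ζ x ^ 2 ∂volIoc (t n)) / (4 * l * (1 - α))) := by
  obtain ⟨hoffi, hoff⟩ := integral_offCellKer_mul_sq_le hα ht hζ hζi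
  obtain ⟨hini, hin⟩ := integral_inCellKer_mul_mul_abs_le hα1 ht hl hΛ hΛ0 hΛi hζ hζi
  refine (integral_le_add_add (integrable_mul_fst_of_abs_le hζ hB' he.integrable)
    (he.integrable_offCellKer_mul_sq.const_mul l) (hoffi.div_const (4 * l)) hini ?_).trans ?_
  · filter_upwards [ae_prod_mem_Ioc (t n)] with p hp
    rw [mul_assoc]
    refine (hyperKer_mul_le_split (t := t) (n := n) (mul_le_mul_sq_add_sq_div hl _ _)
      (Λ := Λ p.1 * |ζ p.1|) fun hLy hyx => ?_).trans_eq (by ring)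
    calc (e p.1 - e p.2) * ζ p.1 ≤ |e p.1 - e p.2| * |ζ p.1| := by
          rw [← abs_mul]
          exact le_abs_self _
      _ ≤ (p.1 - p.2) * Λ p.1 * |ζ p.1| :=
          mul_le_mul_of_nonneg_right (hΛe _ hp.1 _ hLy hyx) (abs_nonneg _)
      _ = _ := mul_assoc _ _ _
  · rw [integral_const_mul, integral_div]
    exact add_le_add (add_le_add_right
      (div_le_div_of_nonneg_right hoff (mul_pos four_pos hl).le) _) hin

theorem integral_marchaud_mul_le (hα : 0 < α) (hα1 : α < 1) (ht : IsMesh t) (hl : 0 < l)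
    (he : MarchaudRegular α (t n) B e) (hΛ : Measurable Λ) (hΛ0 : ∀ x, 0 ≤ Λ x)
    (hΛe : ∀ x ∈ Ioc 0 (t n), ∀ y, cellL t n x < y → y < x → |e x - e y| ≤ (x - y) * Λ x)
    (hΛi : Integrable (fun x => Λ x ^ 2 * (x - cellL t n x) ^ (2 - α)) (volIoc (t n)))
    (hζ : Measurable ζ) (hB' : ∀ x ∈ Ioc 0 (t n), |ζ x| ≤ B')
    (hζi : Integrable (fun x => |x - cellL t n x| ^ (-α) * ζ x ^ 2) (volIoc (t n))) :
    ∫ x, marchaud α e x * ζ x ∂volIoc (t n)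
      ≤ l * splitEnergy t n α Λ e
        + (∫ x, |x - cellL t n x| ^ (-α) * ζ x ^ 2 ∂volIoc (t n)) / (l * (1 - α)) := by
  have hα' : 0 < 1 - α := sub_pos.2 hα1
  rw [integral_marchaud_mul hα1 he hζ hB', splitEnergy]
  have hboundary :=
    integral_rpow_mul_mul_le hα hα1 ht hl he.measurable he.abs_le hζ hB' hζi
  have hinterior := mul_le_mul_of_nonneg_left
    (integral_hyperKer_mul_mul_le hα hα1 ht hl he hΛ hΛ0 hΛe hΛi hζ hB' hζi) hα.le
  have hA0 : 0 ≤ ∫ x, |x - cellL t n x| ^ (-α) * ζ x ^ 2 ∂volIoc (t n) :=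
    integral_nonneg fun x => mul_nonneg (Real.rpow_nonneg (abs_nonneg _) _) (sq_nonneg _)
  have hoff0 : 0 ≤ ∫ p : ℝ × ℝ, offCellKer t n α p.1 p.2 * (e p.1 - e p.2) ^ 2
      ∂(volIoc (t n)).prod (volIoc (t n)) :=
    integral_nonneg fun p => mul_nonneg (offCellKer_nonneg _ _) (sq_nonneg _)
  have hin0 : 0 ≤ ∫ x, Λ x ^ 2 * (x - cellL t n x) ^ (2 - α) ∂volIoc (t n) :=
    setIntegral_nonneg measurableSet_Ioc fun x hx => mul_nonneg (sq_nonneg _)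
      (Real.rpow_nonneg (sub_pos.2 (ht.mem_cell hx).1).le _)
  set A := ∫ x, |x - cellL t n x| ^ (-α) * ζ x ^ 2 ∂volIoc (t n)
  set E₂ := ∫ p : ℝ × ℝ, offCellKer t n α p.1 p.2 * (e p.1 - e p.2) ^ 2
    ∂(volIoc (t n)).prod (volIoc (t n))
  set E₃ := ∫ x, Λ x ^ 2 * (x - cellL t n x) ^ (2 - α) ∂volIoc (t n)
  have hE₂ : α * (l * E₂) ≤ l * E₂ := mul_le_of_le_one_left (by positivity) hα1.le
  have hE₃ : α * (l / (1 - α) * E₃) ≤ l / (1 - α) * E₃ :=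
    mul_le_of_le_one_left (by positivity) hα1.le
  have hAα : α * (A / α / (4 * l)) = A / (4 * l) := by field_simp
  have hAin : α * (A / (4 * l * (1 - α))) ≤ A / (4 * l * (1 - α)) :=
    mul_le_of_le_one_left (by positivity) hα1.le
  have hAl : A / (4 * l) ≤ A / (4 * l * (1 - α)) :=
    div_le_div_of_nonneg_left hA0 (by positivity)
      (mul_le_of_le_one_right (by positivity) (by linarith))
  have hA4 : A / (l * (1 - α)) = 4 * (A / (4 * l * (1 - α))) := by field_simp
  have hA4' : 0 ≤ A / (4 * l * (1 - α)) := by positivity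
  rw [mul_add, mul_add, mul_div_left_comm, mul_comm E₃]
  linarith

end MarchaudPairing

section Duality

variable {t : ℕ → ℝ} {n : ℕ} {α B h : ℝ} {e : ℝ → ℝ}

theorem integral_sq_le_integral_marchaud_mul_dualFun (hα : 0 < α) (hα1 : α < 1) (ht : IsMesh t)
    (hh : ∀ k < n, t (k + 1) - t k ≤ h) (hB0 : 0 ≤ B) (he : MarchaudRegular α (t n) B e)
    (horth : ∀ c : ℕ → ℝ, ∫ x, marchaud α e x * c (cellIdx t n x) ∂volIoc (t n) = 0) :
    ∫ x, e x ^ 2 ∂volIoc (t n) ≤ ∫ x, marchaud α e x * dualFun t n α e x ∂volIoc (t n) := by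
  obtain ⟨c, hc⟩ := ht.exists_integral_abelKer_mul_eq_dualFun_add hα hα1 he.measurable he.abs_le
  have hM := integrable_marchaud hα1 he
  have hdual : Integrable (fun x => marchaud α e x * dualFun t n α e x) (volIoc (t n)) :=
    integrable_mul_of_abs_le (measurable_dualFun he.measurable)
      (fun x hx => ht.abs_dualFun_le hα hα1 hh hB0 he.abs_le hx) hM
  have hconst : Integrable (fun x => marchaud α e x * c (cellIdx t n x)) (volIoc (t n)) :=
    integrable_mul_of_abs_le (measurable_comp_cellIdx c t n)
      (fun x hx => ht.apply_cellIdx_le_sum (F := fun k => |c k|) (fun _ => abs_nonneg _) hx) hM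
  calc ∫ x, e x ^ 2 ∂volIoc (t n)
      ≤ Real.Gamma α * Real.Gamma (1 - α) * ∫ x, e x ^ 2 ∂volIoc (t n) :=
        le_mul_of_one_le_left (integral_nonneg fun _ => sq_nonneg _)
          (one_le_Gamma_mul_Gamma_one_sub hα hα1)
    _ = ∫ y, marchaud α e y * ∫ x, abelKer α x y * e x ∂volIoc (t n) ∂volIoc (t n) :=
        (integral_marchaud_mul_integral_abelKer hα hα1 he).symm
    _ = ∫ y, (marchaud α e y * dualFun t n α e y + marchaud α e y * c (cellIdx t n y))
          ∂volIoc (t n) :=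
        setIntegral_congr_fun measurableSet_Ioc fun y hy => by
          simp only [hc y hy, mul_add]
    _ = _ := by rw [integral_add hdual hconst, horth c, add_zero]

end Duality

/-! ### The error on a mesh with nondecreasing steps -/

/-- A slope bound inside the cells for the difference of a function with cellwise Lipschitz
constants `L` and a function satisfying `CellSmall t n σ ε`. The absolute value only makes the
bound nonnegative outside `(0, t n]`. -/
noncomputable def cellSlope (t : ℕ → ℝ) (n : ℕ) (σ : ℝ) (L ε : ℕ → ℝ) (x : ℝ) : ℝ :=
  L (cellIdx t n x) + ε (cellIdx t n x) * (cellR t n x - cellL t n x) ^ (-σ) *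
    |x - cellL t n x| ^ (σ - 1)

section CellSlope

variable {t L ε : ℕ → ℝ} {n : ℕ} {α σ : ℝ} {θ η : ℝ → ℝ}

theorem measurable_cellSlope (t : ℕ → ℝ) (n : ℕ) (σ : ℝ) (L ε : ℕ → ℝ) :
    Measurable (cellSlope t n σ L ε) :=
  (measurable_comp_cellIdx L t n).add (((measurable_comp_cellIdx ε t n).mul
    (((measurable_cellR t n).sub (measurable_cellL t n)).pow_const _)).mul
    ((measurable_id.sub (measurable_cellL t n)).abs.pow_const _))

theorem cellSlope_nonneg (ht : IsMesh t) (hL : ∀ k, 0 ≤ L k) (hε : ∀ k, 0 ≤ ε k) (x : ℝ) :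
    0 ≤ cellSlope t n σ L ε x :=
  add_nonneg (hL _) (mul_nonneg (mul_nonneg (hε _)
    (Real.rpow_nonneg (sub_nonneg.2 (ht.le_succ _)) _)) (Real.rpow_nonneg (abs_nonneg _) _))

theorem CellSmall.abs_sub_le_mul_cellSlope (ht : IsMesh t) (hη : CellSmall t n σ ε η)
    (hL : CellLipschitz t n L θ) {x y : ℝ} (hx : x ∈ Ioc 0 (t n)) (hLy : cellL t n x < y)
    (hyx : y < x) : |θ x - η x - (θ y - η y)| ≤ (x - y) * cellSlope t n σ L ε x := by
  rw [sub_sub_sub_comm, cellSlope, abs_of_pos (sub_pos.2 (ht.mem_cell hx).1), mul_add]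
  exact (abs_sub _ _).trans (add_le_add (hL x hx y hLy hyx) (hη.abs_sub_le x hx y hLy hyx))

theorem cellSlope_sq_mul_rpow_le (ht : IsMesh t) (L ε : ℕ → ℝ) {x : ℝ} (hx : x ∈ Ioc 0 (t n)) :
    cellSlope t n σ L ε x ^ 2 * (x - cellL t n x) ^ (2 - α)
      ≤ 2 * L (cellIdx t n x) ^ 2 * (x - cellL t n x) ^ (2 - α)
        + 2 * (ε (cellIdx t n x) * (t (cellIdx t n x + 1) - t (cellIdx t n x)) ^ (-σ)) ^ 2
          * (x - cellL t n x) ^ (2 * σ - α) := by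
  have hw : 0 < x - t (cellIdx t n x) := sub_pos.2 (ht.mem_cell hx).1
  rw [cellSlope, cellR, cellL, abs_of_pos hw]
  set w := x - t (cellIdx t n x)
  set G := ε (cellIdx t n x) * (t (cellIdx t n x + 1) - t (cellIdx t n x)) ^ (-σ)
  have hpow : w ^ (2 * σ - α) = (w ^ (σ - 1)) ^ 2 * w ^ (2 - α) := by
    rw [← Real.rpow_natCast, ← Real.rpow_mul hw.le, ← Real.rpow_add hw]
    congr 1
    push_cast
    ring
  rw [hpow]
  calc (L (cellIdx t n x) + G * w ^ (σ - 1)) ^ 2 * w ^ (2 - α)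
      ≤ 2 * (L (cellIdx t n x) ^ 2 + (G * w ^ (σ - 1)) ^ 2) * w ^ (2 - α) :=
        mul_le_mul_of_nonneg_right add_sq_le (Real.rpow_nonneg hw.le _)
    _ = _ := by ring

theorem integrable_cellSlope_sq_mul_rpow (hα1 : α < 1) (hσ : 0 < σ) (ht : IsMesh t)
    (L ε : ℕ → ℝ) :
    Integrable (fun x => cellSlope t n σ L ε x ^ 2 * (x - cellL t n x) ^ (2 - α))
      (volIoc (t n)) := by
  refine ((ht.integrable_cellL_rpow (n := n) (fun k => 2 * L k ^ 2)
    (by linarith : -1 < 2 - α)).add (ht.integrable_cellL_rpow (n := n)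
      (fun k => 2 * (ε k * (t (k + 1) - t k) ^ (-σ)) ^ 2) (by linarith : -1 < 2 * σ - α))).mono'
    (((measurable_cellSlope t n σ L ε).pow_const 2).mul ((measurable_id.sub
      (measurable_cellL t n)).pow_const _)).aestronglyMeasurable ?_
  filter_upwards [ae_restrict_mem measurableSet_Ioc] with x hx
  rw [Real.norm_of_nonneg (mul_nonneg (sq_nonneg _)
    (Real.rpow_nonneg (sub_pos.2 (ht.mem_cell hx).1).le _))]
  exact cellSlope_sq_mul_rpow_le ht L ε hx

theorem integral_cellSlope_sq_mul_rpow_le (hα1 : α < 1) (hσ : 0 < σ) (ht : IsMesh t)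
    (L ε : ℕ → ℝ) :
    ∫ x, cellSlope t n σ L ε x ^ 2 * (x - cellL t n x) ^ (2 - α) ∂volIoc (t n)
      ≤ 2 * (∑ k ∈ Finset.range n, L k ^ 2 * (t (k + 1) - t k) ^ (3 - α))
        + 2 / (2 * σ + 1 - α) * cellSum t n α ε := by
  have hγ₁ : -1 < 2 - α := by linarith
  have hγ₂ : -1 < 2 * σ - α := by linarith
  have hi₁ := ht.integrable_cellL_rpow (n := n) (fun k => 2 * L k ^ 2) hγ₁
  have hi₂ := ht.integrable_cellL_rpow (n := n)
    (fun k => 2 * (ε k * (t (k + 1) - t k) ^ (-σ)) ^ 2) hγ₂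
  refine (setIntegral_mono_on (integrable_cellSlope_sq_mul_rpow hα1 hσ ht L ε) (hi₁.add hi₂)
    measurableSet_Ioc fun x hx => cellSlope_sq_mul_rpow_le ht L ε hx).trans ?_
  simp only [Pi.add_apply]
  rw [integral_add hi₁ hi₂, ht.integral_cellL_rpow (fun k => 2 * L k ^ 2) hγ₁,
    ht.integral_cellL_rpow (fun k => 2 * (ε k * (t (k + 1) - t k) ^ (-σ)) ^ 2) hγ₂, cellSum,
    Finset.mul_sum, Finset.mul_sum]
  refine add_le_add (Finset.sum_le_sum fun k _ => ?_) (Finset.sum_le_sum fun k _ => ?_) <;>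
    have hτ : 0 < t (k + 1) - t k := sub_pos.2 (ht.strictMono k.lt_succ_self)
  · rw [show 2 - α + 1 = 3 - α by ring, mul_assoc]
    exact mul_le_mul_of_nonneg_left (mul_le_mul_of_nonneg_left
      (div_le_self (Real.rpow_nonneg hτ.le _) (by linarith)) (sq_nonneg _)) zero_le_two
  · set τ := t (k + 1) - t k
    have hpow : (τ ^ (-σ)) ^ 2 * τ ^ (2 * σ - α + 1) = τ ^ (1 - α) := by
      rw [← Real.rpow_natCast, ← Real.rpow_mul hτ.le, ← Real.rpow_add hτ]
      congr 1
      push_cast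
      ring
    rw [← hpow, show 2 * σ + 1 - α = 2 * σ - α + 1 by ring]
    exact le_of_eq (by ring)

end CellSlope

section SplitEnergy

variable {t L ε : ℕ → ℝ} {n : ℕ} {α σ B M : ℝ} {θ η : ℝ → ℝ}

theorem integral_rpow_mul_sub_sq_le (hα : 0 < α) (hα1 : α < 1) (ht : IsMesh t)
    (hθ : Measurable θ) (hB : ∀ x ∈ Ioc 0 (t n), |θ x| ≤ B) (hη : CellSmall t n σ ε η) :
    ∫ x, x ^ (-α) * (θ x - η x) ^ 2 ∂volIoc (t n)
      ≤ 2 * (∫ x, x ^ (-α) * θ x ^ 2 ∂volIoc (t n)) + 2 * (cellSum t n α ε / (1 - α)) := by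
  obtain ⟨hηi, hηle⟩ := hη.integral_rpow_mul_sq_le hα hα1 ht
  have hθi := integrable_rpow_mul_sq hα1 hθ hB
  have hi := integrable_rpow_mul_sq hα1 (hθ.sub hη.measurable) fun x hx =>
    (abs_sub _ _).trans (add_le_add (hB x hx) (hη.abs_le_sum ht hx))
  refine le_trans ?_ (add_le_add_right (mul_le_mul_of_nonneg_left hηle zero_le_two) _)
  rw [← integral_const_mul, ← integral_const_mul,
    ← integral_add (hθi.const_mul 2) (hηi.const_mul 2)]
  refine setIntegral_mono_on hi ((hθi.const_mul 2).add (hηi.const_mul 2)) measurableSet_Ioc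
    fun x hx => ?_
  calc x ^ (-α) * (θ x - η x) ^ 2 ≤ x ^ (-α) * (2 * (θ x ^ 2 + η x ^ 2)) :=
        mul_le_mul_of_nonneg_left (by linarith [sq_nonneg (θ x + η x)])
          (Real.rpow_nonneg hx.1.le _)
    _ = _ := by ring

theorem integral_offCellKer_mul_sub_sq_le (hα : 0 < α) (hα1 : α < 1) (ht : IsMesh t)
    (hσ : 0 < σ) (hθ : MarchaudRegular α (t n) B θ) (hη : CellSmall t n σ ε η) :
    ∫ q : ℝ × ℝ, offCellKer t n α q.1 q.2 * (θ q.1 - η q.1 - (θ q.2 - η q.2)) ^ 2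
        ∂(volIoc (t n)).prod (volIoc (t n))
      ≤ 2 * (∫ q : ℝ × ℝ, hyperKer α q.1 q.2 * (θ q.1 - θ q.2) ^ 2
          ∂(volIoc (t n)).prod (volIoc (t n))) + 8 * (cellSum t n α ε / (1 - α) / α) := by
  obtain ⟨hfsti, hfst⟩ := hη.integral_offCellKer_mul_sq_fst_le hα hα1 ht
  obtain ⟨hsndi, hsnd⟩ := hη.integral_offCellKer_mul_sq_snd_le hα hα1 ht
  have hle := integral_le_add_add
    (hθ.sub (hη.marchaudRegular hα hα1 ht hσ)).integrable_offCellKer_mul_sq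
    (hθ.integrable_hyperKer_mul_sq.const_mul 2) (hfsti.const_mul 4) (hsndi.const_mul 4)
    (.of_forall fun q => by
      have hsq : (θ q.1 - η q.1 - (θ q.2 - η q.2)) ^ 2
          ≤ 2 * (θ q.1 - θ q.2) ^ 2 + 4 * η q.1 ^ 2 + 4 * η q.2 ^ 2 := by
        linarith [sq_nonneg (θ q.1 - θ q.2 + (η q.1 - η q.2)), sq_nonneg (η q.1 + η q.2)]
      linarith [mul_le_mul_of_nonneg_left hsq
          (offCellKer_nonneg (t := t) (n := n) (α := α) q.1 q.2),
        mul_le_mul_of_nonneg_right (offCellKer_le_hyperKer (t := t) (n := n) (α := α) q.1 q.2)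
          (sq_nonneg (θ q.1 - θ q.2))])
  rw [integral_const_mul, integral_const_mul, integral_const_mul] at hle
  linarith

theorem splitEnergy_sub_le (hα : 0 < α) (hα1 : α < 1) (ht : IsMesh t) (hσ : 0 < σ)
    (hθ : MarchaudRegular α (t n) B θ) (hη : CellSmall t n σ ε η)
    (hboundary : ∫ x, x ^ (-α) * θ x ^ 2 ∂volIoc (t n) ≤ M)
    (henergy : ∫ q : ℝ × ℝ, hyperKer α q.1 q.2 * (θ q.1 - θ q.2) ^ 2
      ∂(volIoc (t n)).prod (volIoc (t n)) ≤ M)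
    (hL : ∑ k ∈ Finset.range n, L k ^ 2 * (t (k + 1) - t k) ^ (3 - α) ≤ M) :
    splitEnergy t n α (cellSlope t n σ L ε) (fun x => θ x - η x)
      ≤ 2 * M + 2 * (cellSum t n α ε / (1 - α))
        + (2 * M + 8 * (cellSum t n α ε / (1 - α) / α))
        + (2 * M + 2 / (2 * σ + 1 - α) * cellSum t n α ε) / (1 - α) := by
  have h₁ := integral_rpow_mul_sub_sq_le hα hα1 ht hθ.measurable hθ.abs_le hη
  have h₂ := integral_offCellKer_mul_sub_sq_le hα hα1 ht hσ hθ hη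
  have h₃ := integral_cellSlope_sq_mul_rpow_le (n := n) hα1 hσ ht L ε
  exact add_le_add (add_le_add (by linarith) (by linarith))
    (div_le_div_of_nonneg_right (by linarith) (sub_pos.2 hα1).le)

end SplitEnergy

section DualityBound

variable {t : ℕ → ℝ} {n : ℕ} {α h B : ℝ} {e : ℝ → ℝ}

/-- The weight in the Young inequality is chosen so that half of the `L²` norm is absorbed. -/
theorem integral_sq_le_splitEnergy (hα : 0 < α) (hα1 : α < 1) (ht : IsMesh t)
    (hstep : Monotone fun k => t (k + 1) - t k) (hh0 : 0 < h) (hh : ∀ k < n, t (k + 1) - t k ≤ h)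
    {K : ℝ} (hK : 0 < K) (hdK : ∑' i, dualCellBound α i ≤ K) (hB0 : 0 ≤ B)
    (he : MarchaudRegular α (t n) B e) {Λ : ℝ → ℝ} (hΛ : Measurable Λ) (hΛ0 : ∀ x, 0 ≤ Λ x)
    (hΛe : ∀ x ∈ Ioc 0 (t n), ∀ y, cellL t n x < y → y < x → |e x - e y| ≤ (x - y) * Λ x)
    (hΛi : Integrable (fun x => Λ x ^ 2 * (x - cellL t n x) ^ (2 - α)) (volIoc (t n)))
    (horth : ∀ c : ℕ → ℝ, ∫ x, marchaud α e x * c (cellIdx t n x) ∂volIoc (t n) = 0) :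
    ∫ x, e x ^ 2 ∂volIoc (t n)
      ≤ 4 * (K / (α * (1 - α))) * h ^ α * splitEnergy t n α Λ e := by
  have hα' : 0 < 1 - α := sub_pos.2 hα1
  have hl : 0 < 2 * (K / (α * (1 - α))) * h ^ α := by positivity
  obtain ⟨hdi, hd⟩ :=
    ht.integral_rpow_mul_dualFun_sq_le hα hα1 hstep hh0.le hh he.measurable he.abs_le
  have hmain := (integral_sq_le_integral_marchaud_mul_dualFun hα hα1 ht hh hB0 he horth).trans
    (integral_marchaud_mul_le hα hα1 ht hl he hΛ hΛ0 hΛe hΛi (measurable_dualFun he.measurable)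
      (fun x hx => ht.abs_dualFun_le hα hα1 hh hB0 he.abs_le hx) hdi)
  have hI0 : 0 ≤ ∫ x, e x ^ 2 ∂volIoc (t n) := integral_nonneg fun _ => sq_nonneg _
  have hhalf : (∫ x, |x - cellL t n x| ^ (-α) * dualFun t n α e x ^ 2 ∂volIoc (t n))
      / (2 * (K / (α * (1 - α))) * h ^ α * (1 - α)) ≤ (∫ x, e x ^ 2 ∂volIoc (t n)) / 2 := by
    calc _ ≤ h ^ α / α * K * (∫ x, e x ^ 2 ∂volIoc (t n))
          / (2 * (K / (α * (1 - α))) * h ^ α * (1 - α)) :=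
          div_le_div_of_nonneg_right (hd.trans (mul_le_mul_of_nonneg_right
            (mul_le_mul_of_nonneg_left hdK (by positivity)) hI0)) (by positivity)
      _ = _ := by field_simp
  linarith

end DualityBound

theorem exists_integral_sq_le {α σ : ℝ} (hα : 0 < α) (hα1 : α < 1) (hσ : 0 < σ) (p : ℕ) :
    ∃ C : ℝ, 0 < C ∧ ∀ (t : ℕ → ℝ) (n : ℕ) (h : ℝ) (Q : ℕ → Polynomial ℝ) (ε : ℕ → ℝ)
      (η : ℝ → ℝ), IsMesh t → (Monotone fun k => t (k + 1) - t k) → 0 < h →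
      (∀ k < n, t (k + 1) - t k ≤ h) → (∀ k, (Q k).degree ≤ p) → CellSmall t n σ ε η →
      (∀ Y : ℕ → Polynomial ℝ, (∀ k, (Y k).degree ≤ p) →
        ∫ x, marchaud α (fun x => pwPoly t n Q x - η x) x * pwPoly t n Y x ∂volIoc (t n) = 0) →
      ∫ x, (pwPoly t n Q x - η x) ^ 2 ∂volIoc (t n) ≤ C * h ^ α * cellSum t n α ε := by
  obtain ⟨C₀, hC₀, henergy⟩ := exists_energy_bound hα hα1 hσ p
  have : 0 < 1 - α := sub_pos.2 hα1
  have : 0 < 2 * σ + 1 - α := by linarith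
  have hK : 0 < ∑' i, dualCellBound α i + 1 := by
    have hsum : 0 ≤ ∑' i, dualCellBound α i := tsum_nonneg (dualCellBound_nonneg hα hα1)
    linarith
  set K := ∑' i, dualCellBound α i + 1
  set C₁ := 2 * C₀ + 2 / (1 - α) + (2 * C₀ + 8 / (1 - α) / α)
    + (2 * C₀ + 2 / (2 * σ + 1 - α)) / (1 - α) with hC₁
  refine ⟨4 * (K / (α * (1 - α))) * C₁, by positivity, ?_⟩
  intro t n h Q ε η ht hstep hh0 hh hQ hη horth
  obtain ⟨L, hL0, hL, hbdry, hinner, hslope⟩ := henergy t n Q ε η ht hQ hη (horth Q hQ)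
  obtain ⟨B, hB0, hθ⟩ := exists_marchaudRegular_pwPoly hα hα1 ht hL0 hL
  have hsplit := splitEnergy_sub_le hα hα1 ht hσ hθ hη hbdry hinner hslope
  have hconst : ∀ c : ℕ → ℝ, ∫ x, marchaud α (fun x => pwPoly t n Q x - η x) x
      * c (cellIdx t n x) ∂volIoc (t n) = 0 := fun c => by
    simpa only [pwPoly, Polynomial.eval_C] using
      horth (fun k => Polynomial.C (c k)) fun k => Polynomial.degree_C_le.trans (by simp)
  have he := hθ.sub (hη.marchaudRegular hα hα1 ht hσ)
  calc ∫ x, (pwPoly t n Q x - η x) ^ 2 ∂volIoc (t n)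
      ≤ 4 * (K / (α * (1 - α))) * h ^ α
          * splitEnergy t n α (cellSlope t n σ L ε) (fun x => pwPoly t n Q x - η x) :=
        integral_sq_le_splitEnergy hα hα1 ht hstep hh0 hh hK (le_add_of_nonneg_right zero_le_one)
          (add_nonneg hB0 (Finset.sum_nonneg fun k _ => hη.nonneg k)) he
          (measurable_cellSlope t n σ L ε) (cellSlope_nonneg ht hL0 hη.nonneg)
          (fun x hx y => hη.abs_sub_le_mul_cellSlope ht hL hx)
          (integrable_cellSlope_sq_mul_rpow hα1 hσ ht L ε) hconst
    _ ≤ 4 * (K / (α * (1 - α))) * h ^ α * (C₁ * cellSum t n α ε) :=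
        mul_le_mul_of_nonneg_left (hsplit.trans_eq (by rw [hC₁]; ring)) (by positivity)
    _ = _ := by ring

/-! ### Approximation of functions with an initial singularity -/

section Taylor

variable {a b M : ℝ} {p : ℕ} {f : ℝ → ℝ}

theorem exists_polynomial_eval_eq_taylorWithinEval (f : ℝ → ℝ) (p : ℕ) (s : Set ℝ) (x₀ : ℝ) :
    ∃ P : Polynomial ℝ, P.degree ≤ p ∧ ∀ x, P.eval x = taylorWithinEval f p s x₀ x := by
  refine ⟨∑ k ∈ Finset.range (p + 1), Polynomial.C ((k.factorial : ℝ)⁻¹ *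
    iteratedDerivWithin k f s x₀) * (Polynomial.X - Polynomial.C x₀) ^ k, ?_, fun x => ?_⟩
  · refine (Polynomial.degree_sum_le _ _).trans (Finset.sup_le fun k hk => ?_)
    rw [← Polynomial.smul_eq_C_mul]
    refine (Polynomial.degree_smul_le _ _).trans ?_
    rw [Polynomial.degree_pow, Polynomial.degree_X_sub_C, nsmul_one]
    exact_mod_cast Nat.lt_succ_iff.1 (Finset.mem_range.1 hk)
  · rw [taylor_within_apply, Polynomial.eval_finsetSum]
    refine Finset.sum_congr rfl fun k _ => ?_
    simp only [Polynomial.eval_mul, Polynomial.eval_C, Polynomial.eval_pow, Polynomial.eval_sub,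
      Polynomial.eval_X, smul_eq_mul]
    ring

theorem abs_taylor_remainder_le (hab : a ≤ b) (hf : ContDiffOn ℝ (p + 1) f (Icc a b))
    (hM : ∀ x ∈ Icc a b, |iteratedDerivWithin (p + 1) f (Icc a b) x| ≤ M) {x : ℝ}
    (hx : x ∈ Icc a b) :
    |f x - taylorWithinEval f p (Icc a b) a x| ≤ M * (b - a) ^ (p + 1) := by
  have hM0 : 0 ≤ M := (abs_nonneg _).trans (hM x hx)
  have hxa : 0 ≤ x - a := sub_nonneg.2 hx.1
  refine (taylor_mean_remainder_bound hab hf hx hM).trans ((div_le_self (by positivity) ?_).trans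
    (mul_le_mul_of_nonneg_left (pow_le_pow_left₀ hxa (sub_le_sub_right hx.2 a) _) hM0))
  exact_mod_cast p.factorial_pos

/-- Mean value inequality: the derivative of a Taylor remainder is the Taylor remainder of order
one less of the derivative. -/
theorem abs_taylor_remainder_sub_le (hab : a < b) (hf : ContDiffOn ℝ (p + 1) f (Icc a b))
    (hM : ∀ x ∈ Icc a b, |iteratedDerivWithin (p + 1) f (Icc a b) x| ≤ M) {x y : ℝ}
    (hx : x ∈ Icc a b) (hy : y ∈ Icc a b) :
    |f x - taylorWithinEval f p (Icc a b) a x - (f y - taylorWithinEval f p (Icc a b) a y)|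
      ≤ M * (b - a) ^ p * |x - y| := by
  have hf' : ∀ z ∈ Icc a b, HasDerivWithinAt f (derivWithin f (Icc a b) z) (Icc a b) z :=
    fun z hz => ((hf.differentiableOn (by simp)) z hz).hasDerivWithinAt
  rcases p with _ | p
  · simp only [taylor_within_zero_eval, sub_sub_sub_cancel_right, pow_zero, mul_one]
    exact (convex_Icc a b).norm_image_sub_le_of_norm_hasDerivWithin_le hf'
      (fun z hz => by simpa [iteratedDerivWithin_one] using hM z hz) hy hx
  · have hd : ContDiffOn ℝ (p + 1) (derivWithin f (Icc a b)) (Icc a b) :=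
      hf.derivWithin (uniqueDiffOn_Icc hab) (by norm_cast)
    refine (convex_Icc a b).norm_image_sub_le_of_norm_hasDerivWithin_le
      (fun z hz => (hf' z hz).sub (hasDerivAt_taylorWithinEval_succ f p).hasDerivWithinAt)
      (fun z hz => abs_taylor_remainder_le hab.le hd (fun x hx => ?_) hz) hy hx
    rw [← iteratedDerivWithin_succ']
    exact hM x hx

end Taylor

section SingularIncrement

variable {C₀ T σ x y : ℝ} {v v' : ℝ → ℝ}

theorem one_le_rpow_mul_rpow_neg {s : ℝ} (hs : 0 ≤ s) (hx : 0 < x) (hxT : x ≤ T) :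
    1 ≤ T ^ s * x ^ (-s) := by
  rw [Real.rpow_neg hx.le, ← div_eq_mul_inv, one_le_div (Real.rpow_pos_of_pos hx s)]
  exact Real.rpow_le_rpow hx.le hxT hs

theorem rpow_sub_rpow_le_mul (hσ1 : σ ≤ 1) (hy : 0 < y) (hyx : y ≤ x) :
    x ^ σ - y ^ σ ≤ (x - y) * x ^ (σ - 1) := by
  have hx : 0 < x := hy.trans_le hyx
  have hle : y * x ^ (σ - 1) ≤ y * y ^ (σ - 1) := mul_le_mul_of_nonneg_left
    (Real.rpow_le_rpow_of_nonpos hy hyx (sub_nonpos.2 hσ1)) hy.le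
  rw [Real.rpow_sub_one hy.ne', mul_div_cancel₀ _ hy.ne'] at hle
  rw [sub_mul, Real.rpow_sub_one hx.ne', mul_div_cancel₀ _ hx.ne', ← Real.rpow_sub_one hx.ne']
  exact sub_le_sub_left hle _

theorem abs_sub_le_of_abs_deriv_le_one_add_rpow (hσ : σ ≠ 0) (hy : 0 < y) (hyx : y ≤ x)
    (hv : ∀ s ∈ Icc y x, HasDerivWithinAt v (v' s) (Icc y x) s)
    (hv' : ∀ s ∈ Icc y x, |v' s| ≤ C₀ * (1 + s ^ (σ - 1))) :
    |v x - v y| ≤ C₀ * ((x - y) + (x ^ σ - y ^ σ) / σ) := by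
  have hmajorant : ∀ s ∈ Icc y x, HasDerivAt (fun s => C₀ * ((s - y) + (s ^ σ - y ^ σ) / σ))
      (C₀ * (1 + s ^ (σ - 1))) s := fun s hs => by
    have hpow := (Real.hasDerivAt_rpow_const (p := σ) (.inl (hy.trans_le hs.1).ne')).sub_const
      (y ^ σ) |>.div_const σ
    rw [mul_div_cancel_left₀ _ hσ] at hpow
    exact (((hasDerivAt_id s).sub_const y).add hpow).const_mul C₀
  exact image_norm_le_of_norm_deriv_right_le_deriv_boundary' (f := fun s => v s - v y) (f' := v')
    (fun s hs => (hv s hs).continuousWithinAt.sub continuousWithinAt_const)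
    (fun s hs => ((hv s (Ico_subset_Icc_self hs)).mono_of_mem_nhdsWithin
      (Icc_mem_nhdsGE_of_mem hs)).sub_const _)
    (by simp) (fun s hs => (hmajorant s hs).continuousAt.continuousWithinAt)
    (fun s hs => (hmajorant s (Ico_subset_Icc_self hs)).hasDerivWithinAt)
    (fun s hs => hv' s (Ico_subset_Icc_self hs)) (right_mem_Icc.2 hyx)

theorem sub_add_rpow_sub_rpow_div_le (hσ : 0 < σ) (hσ1 : σ ≤ 1) (hy : 0 < y) (hyx : y ≤ x)
    (hx : x ≤ T) :
    (x - y) + (x ^ σ - y ^ σ) / σ ≤ (x - y) * ((T ^ (1 - σ) + 1 / σ) * x ^ (σ - 1)) := by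
  have hone := one_le_rpow_mul_rpow_neg (sub_nonneg.2 hσ1) (hy.trans_le hyx) hx
  rw [neg_sub] at hone
  calc (x - y) + (x ^ σ - y ^ σ) / σ
      ≤ (x - y) * (T ^ (1 - σ) * x ^ (σ - 1)) + (x - y) * x ^ (σ - 1) / σ :=
        add_le_add (le_mul_of_one_le_right (sub_nonneg.2 hyx) hone)
          (div_le_div_of_nonneg_right (rpow_sub_rpow_le_mul hσ1 hy hyx) hσ.le)
    _ = _ := by ring

end SingularIncrement

/-- The one-cell form of `CellSmall`: on the cell `(a, b]` the function `f` is bounded by `E`,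
and its slopes are bounded by `E (b - a)^(-σ) (x - a)^(σ - 1)`. -/
structure SmallOnCell (a b σ E : ℝ) (f : ℝ → ℝ) : Prop where
  abs_le : ∀ x ∈ Ioc a b, |f x| ≤ E
  abs_sub_le : ∀ x ∈ Ioc a b, ∀ y, a < y → y < x →
    |f x - f y| ≤ (x - y) * (E * (b - a) ^ (-σ) * (x - a) ^ (σ - 1))

namespace SmallOnCell

variable {a b σ E E' : ℝ} {f g : ℝ → ℝ}

theorem mono (hf : SmallOnCell a b σ E f) (hE : E ≤ E') : SmallOnCell a b σ E' f where
  abs_le x hx := (hf.abs_le x hx).trans hE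
  abs_sub_le x hx y hay hyx := (hf.abs_sub_le x hx y hay hyx).trans <|
    mul_le_mul_of_nonneg_left (mul_le_mul_of_nonneg_right (mul_le_mul_of_nonneg_right hE
      (Real.rpow_nonneg (sub_nonneg.2 (hx.1.le.trans hx.2)) _))
        (Real.rpow_nonneg (sub_nonneg.2 hx.1.le) _)) (sub_nonneg.2 hyx.le)

theorem congr (hf : SmallOnCell a b σ E f) (hfg : EqOn f g (Ioc a b)) :
    SmallOnCell a b σ E g where
  abs_le x hx := hfg hx ▸ hf.abs_le x hx
  abs_sub_le x hx y hay hyx :=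
    hfg hx ▸ hfg ⟨hay, hyx.le.trans hx.2⟩ ▸ hf.abs_sub_le x hx y hay hyx

theorem of_lipschitz (hσ1 : σ ≤ 1) (hE : 0 ≤ E) (hf : ∀ x ∈ Icc a b, |f x| ≤ E)
    (hlip : ∀ x ∈ Icc a b, ∀ y ∈ Icc a b, |f x - f y| ≤ E / (b - a) * |x - y|) :
    SmallOnCell a b σ E f where
  abs_le x hx := hf x (Ioc_subset_Icc_self hx)
  abs_sub_le x hx y hay hyx := by
    have hba : 0 < b - a := sub_pos.2 (hx.1.trans_le hx.2)
    have hpow : (b - a)⁻¹ ≤ (b - a) ^ (-σ) * (x - a) ^ (σ - 1) := by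
      rw [← Real.rpow_neg_one, show (-1 : ℝ) = -σ + (σ - 1) by ring, Real.rpow_add hba]
      exact mul_le_mul_of_nonneg_left (Real.rpow_le_rpow_of_nonpos (sub_pos.2 hx.1)
        (sub_le_sub_right hx.2 a) (sub_nonpos.2 hσ1)) (Real.rpow_nonneg hba.le _)
    refine (hlip x (Ioc_subset_Icc_self hx) y ⟨hay.le, hyx.le.trans hx.2⟩).trans ?_
    rw [abs_of_pos (sub_pos.2 hyx), mul_comm, div_eq_mul_inv, mul_assoc E]
    exact mul_le_mul_of_nonneg_left (mul_le_mul_of_nonneg_left hpow hE) (sub_nonneg.2 hyx.le)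

end SmallOnCell

theorem IsMesh.cellSmall {t ε : ℕ → ℝ} {n : ℕ} {σ : ℝ} {η : ℝ → ℝ} (ht : IsMesh t)
    (hη : Measurable η) (hε : ∀ k, 0 ≤ ε k)
    (hcell : ∀ k < n, SmallOnCell (t k) (t (k + 1)) σ (ε k) η) : CellSmall t n σ ε η where
  measurable := hη
  nonneg := hε
  abs_le x hx := (hcell _ (ht.cellIdx_lt hx)).abs_le x (ht.mem_cell hx)
  abs_sub_le x hx := (hcell _ (ht.cellIdx_lt hx)).abs_sub_le x (ht.mem_cell hx)

/-- The regularity condition on the exact solution: an initial singularity of strength `σ` at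
`0`, quantified up to the derivative of order `p + 1`. -/
structure WeaklySingular (T σ C₀ : ℝ) (p : ℕ) (v : ℝ → ℝ) : Prop where
  continuousOn : ContinuousOn v (Icc 0 T)
  contDiffOn : ContDiffOn ℝ (p + 1) v (Ioc 0 T)
  abs_sub_zero_le : ∀ x ∈ Ioc 0 T, |v x - v 0| ≤ C₀ * x ^ σ
  abs_iteratedDerivWithin_le : ∀ x ∈ Ioc 0 T, ∀ l ≤ p + 1,
    |iteratedDerivWithin l v (Ioc 0 T) x| ≤ C₀ * (1 + x ^ (σ - (l : ℝ)))

/-- A bound for the error of the local Taylor polynomials of a `WeaklySingular` function. -/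
noncomputable def approxBound (t : ℕ → ℝ) (σ : ℝ) (p : ℕ) (C : ℝ) (k : ℕ) : ℝ :=
  C * (t (k + 1) - t k) ^ (p + 1) * t (k + 1) ^ (σ - (p + 1 : ℕ))

/-- The constant of `approxBound` for a `WeaklySingular` function on a mesh whose points grow at
most by the factor `ρ`; the first two summands come from the cell at `0`, the others from the
remaining cells. -/
noncomputable def approxConst (T σ C₀ ρ : ℝ) (p : ℕ) : ℝ :=
  C₀ * (1 + (T ^ (1 - σ) + 1 / σ) + (T ^ ((p + 1 : ℕ) - σ) + ρ ^ ((p + 1 : ℕ) - σ)))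

theorem approxConst_nonneg {T σ C₀ ρ : ℝ} {p : ℕ} (hT : 0 ≤ T) (hσ : 0 ≤ σ) (hC₀ : 0 ≤ C₀)
    (hρ : 0 ≤ ρ) : 0 ≤ approxConst T σ C₀ ρ p := by
  unfold approxConst
  positivity

theorem approxBound_nonneg {t : ℕ → ℝ} {σ C : ℝ} {p : ℕ} (ht : IsMesh t) (hC : 0 ≤ C) (k : ℕ) :
    0 ≤ approxBound t σ p C k :=
  mul_nonneg (mul_nonneg hC (pow_nonneg (sub_nonneg.2 (ht.le_succ k)) _))
    (Real.rpow_nonneg (ht.nonneg _) _)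

theorem approxBound_mono {t : ℕ → ℝ} {σ C C' : ℝ} {p : ℕ} (ht : IsMesh t) (hC : C ≤ C') (k : ℕ) :
    approxBound t σ p C k ≤ approxBound t σ p C' k :=
  mul_le_mul_of_nonneg_right (mul_le_mul_of_nonneg_right hC
    (pow_nonneg (sub_nonneg.2 (ht.le_succ k)) _)) (Real.rpow_nonneg (ht.nonneg _) _)

theorem approxBound_zero {t : ℕ → ℝ} {σ C : ℝ} {p : ℕ} (ht : IsMesh t) :
    approxBound t σ p C 0 = C * t 1 ^ σ := by
  rw [approxBound, ht.zero, sub_zero, zero_add, ← Real.rpow_natCast (t 1), mul_assoc,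
    ← Real.rpow_add (ht.zero ▸ ht.strictMono one_pos), add_sub_cancel]

namespace WeaklySingular

variable {T σ C₀ a b ρ : ℝ} {p : ℕ} {v : ℝ → ℝ}

theorem smallOnCell_sub_const (hσ : 0 < σ) (hσ1 : σ ≤ 1) (hC₀ : 0 ≤ C₀)
    (hv : WeaklySingular T σ C₀ p v) (hb : b ≤ T) :
    SmallOnCell 0 b σ (C₀ * (1 + (T ^ (1 - σ) + 1 / σ)) * b ^ σ) (fun x => v x - v 0) where
  abs_le x hx := by
    have hT : 0 ≤ T := hx.1.le.trans (hx.2.trans hb)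
    rw [mul_assoc]
    refine (hv.abs_sub_zero_le x ⟨hx.1, hx.2.trans hb⟩).trans (mul_le_mul_of_nonneg_left ?_ hC₀)
    exact (Real.rpow_le_rpow hx.1.le hx.2 hσ.le).trans (le_mul_of_one_le_left
      (Real.rpow_nonneg (hx.1.le.trans hx.2) _) (le_add_of_nonneg_right (by positivity)))
  abs_sub_le x hx y hy hyx := by
    have hb0 : 0 < b := hx.1.trans_le hx.2
    have hcancel : b ^ σ * b ^ (-σ) = 1 := by
      rw [← Real.rpow_add hb0, add_neg_cancel, Real.rpow_zero]
    have hsub : Icc y x ⊆ Ioc 0 T := fun s hs => ⟨hy.trans_le hs.1, hs.2.trans (hx.2.trans hb)⟩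
    have hderiv : ∀ s ∈ Icc y x,
        HasDerivWithinAt v (derivWithin v (Ioc 0 T) s) (Icc y x) s := fun s hs =>
      ((hv.contDiffOn.differentiableOn (by simp)) s (hsub hs)).hasDerivWithinAt.mono hsub
    have hincr := abs_sub_le_of_abs_deriv_le_one_add_rpow hσ.ne' hy hyx.le hderiv fun s hs => by
      simpa only [iteratedDerivWithin_one, Nat.cast_one] using
        hv.abs_iteratedDerivWithin_le s (hsub hs) 1 (by omega)
    rw [sub_sub_sub_cancel_right, sub_zero, sub_zero, mul_assoc _ (b ^ σ), hcancel, mul_one]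
    refine hincr.trans ((mul_le_mul_of_nonneg_left
      (sub_add_rpow_sub_rpow_div_le hσ hσ1 hy hyx.le (hx.2.trans hb)) hC₀).trans ?_)
    rw [mul_left_comm, mul_assoc C₀]
    exact mul_le_mul_of_nonneg_left (mul_le_mul_of_nonneg_left (mul_le_mul_of_nonneg_right
      (le_add_of_nonneg_left zero_le_one) (Real.rpow_nonneg hx.1.le _)) hC₀) (sub_nonneg.2 hyx.le)

theorem one_add_rpow_neg_le {s x : ℝ} (hs : 0 ≤ s) (hρ : 0 < ρ) (hb : 0 < b) (hbT : b ≤ T)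
    (hbx : b ≤ ρ * x) : 1 + x ^ (-s) ≤ (T ^ s + ρ ^ s) * b ^ (-s) := by
  rw [add_mul]
  refine add_le_add (one_le_rpow_mul_rpow_neg hs hb hbT) ?_
  calc x ^ (-s) ≤ (b / ρ) ^ (-s) := Real.rpow_le_rpow_of_nonpos (div_pos hb hρ)
        ((div_le_iff₀' hρ).2 hbx) (neg_nonpos.2 hs)
    _ = ρ ^ s * b ^ (-s) := by
        rw [Real.div_rpow hb.le hρ.le, Real.rpow_neg hρ.le s, div_inv_eq_mul, mul_comm]

theorem abs_iteratedDerivWithin_Icc_le (hσ1 : σ ≤ 1) (hC₀ : 0 ≤ C₀) (hρ : 0 < ρ)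
    (hv : WeaklySingular T σ C₀ p v) (ha : 0 < a) (hab : a < b) (hb : b ≤ T) (hρb : b ≤ ρ * a)
    {x : ℝ} (hx : x ∈ Icc a b) :
    |iteratedDerivWithin (p + 1) v (Icc a b) x|
      ≤ C₀ * (T ^ ((p + 1 : ℕ) - σ) + ρ ^ ((p + 1 : ℕ) - σ)) * b ^ (σ - (p + 1 : ℕ)) := by
  have hsub : Icc a b ⊆ Ioc 0 T := fun s hs => ⟨ha.trans_le hs.1, hs.2.trans hb⟩
  have heq : iteratedDerivWithin (p + 1) v (Icc a b) x
      = iteratedDerivWithin (p + 1) v (Ioc 0 T) x := by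
    rw [iteratedDerivWithin, iteratedFDerivWithin_subset hsub (uniqueDiffOn_Icc hab)
      (uniqueDiffOn_Ioc 0 T) (by exact_mod_cast hv.contDiffOn) hx, iteratedDerivWithin]
  have hpσ : 0 ≤ ((p + 1 : ℕ) : ℝ) - σ := by
    push_cast
    linarith [p.cast_nonneg (α := ℝ)]
  rw [heq, mul_assoc, ← neg_sub _ σ]
  refine (hv.abs_iteratedDerivWithin_le x (hsub hx) (p + 1) le_rfl).trans
    (mul_le_mul_of_nonneg_left ?_ hC₀)
  rw [← neg_sub _ σ]
  exact one_add_rpow_neg_le hpσ hρ (ha.trans hab) hb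
    (hρb.trans (mul_le_mul_of_nonneg_left hx.1 hρ.le))

theorem exists_smallOnCell_sub_eval (hσ1 : σ ≤ 1) (hC₀ : 0 ≤ C₀) (hρ : 0 < ρ)
    (hv : WeaklySingular T σ C₀ p v) (ha : 0 < a) (hab : a < b) (hb : b ≤ T) (hρb : b ≤ ρ * a) :
    ∃ P : Polynomial ℝ, P.degree ≤ p ∧ SmallOnCell a b σ
      (C₀ * (T ^ ((p + 1 : ℕ) - σ) + ρ ^ ((p + 1 : ℕ) - σ)) * (b - a) ^ (p + 1) *
        b ^ (σ - (p + 1 : ℕ))) (fun x => v x - P.eval x) := by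
  obtain ⟨P, hP, hPeval⟩ := exists_polynomial_eval_eq_taylorWithinEval v p (Icc a b) a
  have hcd : ContDiffOn ℝ (p + 1) v (Icc a b) :=
    hv.contDiffOn.mono fun s hs => ⟨ha.trans_le hs.1, hs.2.trans hb⟩
  have hM := fun x => hv.abs_iteratedDerivWithin_Icc_le (x := x) hσ1 hC₀ hρ ha hab hb hρb
  have hM0 := (abs_nonneg _).trans (hM a (left_mem_Icc.2 hab.le))
  have hba : 0 < b - a := sub_pos.2 hab
  refine ⟨P, hP, ?_⟩
  rw [mul_right_comm]
  refine .of_lipschitz hσ1 (mul_nonneg hM0 (pow_nonneg hba.le _)) (fun x hx => ?_)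
    fun x hx y hy => ?_
  · rw [hPeval]
    exact abs_taylor_remainder_le hab.le hcd hM hx
  · rw [hPeval, hPeval, pow_succ, ← mul_assoc, mul_div_cancel_right₀ _ hba.ne']
    exact abs_taylor_remainder_sub_le hab hcd hM hx hy

theorem exists_smallOnCell_approxBound (hσ : 0 < σ) (hσ1 : σ ≤ 1) (hT : 0 ≤ T) (hC₀ : 0 ≤ C₀)
    (hρ : 0 < ρ) (hv : WeaklySingular T σ C₀ p v) {t : ℕ → ℝ} (ht : IsMesh t)
    (hρt : ∀ k, 1 ≤ k → t (k + 1) ≤ ρ * t k) {k : ℕ} (hk : t (k + 1) ≤ T) :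
    ∃ P : Polynomial ℝ, P.degree ≤ p ∧ SmallOnCell (t k) (t (k + 1)) σ
      (approxBound t σ p (approxConst T σ C₀ ρ p) k) (fun x => v x - P.eval x) := by
  rcases Nat.eq_zero_or_pos k with rfl | hk0
  · refine ⟨Polynomial.C (v 0), Polynomial.degree_C_le.trans (by exact_mod_cast p.zero_le), ?_⟩
    simp only [Polynomial.eval_C, ht.zero]
    refine (smallOnCell_sub_const hσ hσ1 hC₀ hv hk).mono ?_
    rw [zero_add, ← approxBound_zero (p := p) ht]
    exact approxBound_mono ht (mul_le_mul_of_nonneg_left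
      (le_add_of_nonneg_right (by positivity)) hC₀) 0
  · obtain ⟨P, hP, hsmall⟩ := exists_smallOnCell_sub_eval hσ1 hC₀ hρ hv
      (ht.zero ▸ ht.strictMono hk0) (ht.strictMono k.lt_succ_self) hk (hρt k hk0)
    exact ⟨P, hP, hsmall.mono (approxBound_mono ht (mul_le_mul_of_nonneg_left
      (le_add_of_nonneg_left (by positivity)) hC₀) k)⟩

theorem exists_eq_pwPoly_add_cellSmall (hσ : 0 < σ) (hσ1 : σ ≤ 1) (hT : 0 ≤ T) (hC₀ : 0 ≤ C₀)
    (hρ : 0 < ρ) (hv : WeaklySingular T σ C₀ p v) {t : ℕ → ℝ} {n : ℕ} (ht : IsMesh t)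
    (htn : t n ≤ T) (hρt : ∀ k, 1 ≤ k → t (k + 1) ≤ ρ * t k) :
    ∃ (P : ℕ → Polynomial ℝ) (η : ℝ → ℝ), (∀ k, (P k).degree ≤ p) ∧
      CellSmall t n σ (approxBound t σ p (approxConst T σ C₀ ρ p)) η ∧
      ∀ x ∈ Ioc 0 (t n), v x = pwPoly t n P x + η x := by
  classical
  have hcell : ∀ k, ∃ P : Polynomial ℝ, P.degree ≤ p ∧ (k < n → SmallOnCell (t k) (t (k + 1)) σ
      (approxBound t σ p (approxConst T σ C₀ ρ p) k) fun x => v x - P.eval x) := by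
    intro k
    by_cases hk : k < n
    · obtain ⟨P, hP, hsmall⟩ := exists_smallOnCell_approxBound hσ hσ1 hT hC₀ hρ hv ht hρt
        ((ht.strictMono.monotone hk).trans htn)
      exact ⟨P, hP, fun _ => hsmall⟩
    · exact ⟨0, by simp, fun h => absurd h hk⟩
  choose P hP hsmall using hcell
  set w := (Icc 0 T).piecewise v 0
  have hw : Measurable w :=
    hv.continuousOn.measurable_piecewise continuousOn_const measurableSet_Icc
  have hwv : ∀ x ∈ Ioc 0 (t n), w x = v x := fun x hx =>
    piecewise_eq_of_mem _ _ _ ⟨hx.1.le, hx.2.trans htn⟩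
  refine ⟨P, fun x => w x - pwPoly t n P x, hP, ht.cellSmall (hw.sub (measurable_pwPoly t n P))
      (approxBound_nonneg ht (approxConst_nonneg hT hσ.le hC₀ hρ.le)) fun k hk =>
        (hsmall k hk).congr fun x hx => ?_,
    fun x hx => by simp only [hwv x hx, add_sub_cancel]⟩
  simp only [hwv x ⟨(ht.nonneg k).trans_lt hx.1, hx.2.trans (ht.strictMono.monotone hk)⟩, pwPoly,
    ht.cellIdx_eq hk hx]

end WeaklySingular

/-! ### The graded mesh -/

section Bernoulli

variable {x γ r : ℝ}

theorem one_add_neg_inv_rpow (hx : 0 ≤ x) (γ : ℝ) :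
    (1 + -1 / (x + 1)) ^ γ = x ^ γ / (x + 1) ^ γ := by
  have hx1 : 0 < x + 1 := by positivity
  rw [← Real.div_rpow hx hx1.le]
  congr 1
  field_simp
  ring

theorem neg_one_le_neg_inv (hx : 0 ≤ x) : -1 ≤ -1 / (x + 1) := by
  rw [neg_div, neg_le_neg_iff, div_le_one (by positivity)]
  linarith

theorem add_one_rpow_sub_rpow_le (hr : 1 ≤ r) (hx : 0 ≤ x) :
    (x + 1) ^ r - x ^ r ≤ r * (x + 1) ^ (r - 1) := by
  have hx1 : 0 < x + 1 := by positivity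
  have h := one_add_mul_self_le_rpow_one_add (neg_one_le_neg_inv hx) hr
  rw [one_add_neg_inv_rpow hx, le_div_iff₀ (by positivity)] at h
  rw [Real.rpow_sub_one hx1.ne']
  linear_combination h

theorem mul_add_one_rpow_sub_one_le (hγ : 0 ≤ γ) (hγ1 : γ ≤ 1) (hx : 0 ≤ x) :
    γ * (x + 1) ^ (γ - 1) ≤ (x + 1) ^ γ - x ^ γ := by
  have hx1 : 0 < x + 1 := by positivity
  have h := rpow_one_add_le_one_add_mul_self (neg_one_le_neg_inv hx) hγ hγ1
  rw [one_add_neg_inv_rpow hx, div_le_iff₀ (by positivity)] at h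
  rw [Real.rpow_sub_one hx1.ne']
  linear_combination h

end Bernoulli

section GradedMesh

variable {T r : ℝ} {N : ℕ}

theorem gradedMesh_eq (T r : ℝ) (N k : ℕ) :
    gradedMesh T r N k = T * (N : ℝ) ^ (-r) * (k : ℝ) ^ r := by
  rw [gradedMesh, Real.div_rpow k.cast_nonneg N.cast_nonneg, Real.rpow_neg N.cast_nonneg]
  ring

theorem isMesh_gradedMesh (hT : 0 < T) (hr : 0 < r) (hN : 1 ≤ N) : IsMesh (gradedMesh T r N) where
  strictMono a b hab := by
    have : (0 : ℝ) < N := by exact_mod_cast hN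
    simp only [gradedMesh_eq]
    gcongr
  zero := by simp [gradedMesh, Real.zero_rpow hr.ne']

theorem gradedMesh_le (hT : 0 < T) (hr : 0 < r) (hN : 1 ≤ N) {n : ℕ} (hn : n ≤ N) :
    gradedMesh T r N n ≤ T :=
  calc gradedMesh T r N n
      ≤ gradedMesh T r N N := (isMesh_gradedMesh hT hr hN).strictMono.monotone hn
    _ = T := by simp [gradedMesh, div_self (by positivity : (N : ℝ) ≠ 0)]

theorem gradedMesh_succ_le (hT : 0 ≤ T) (hr : 0 ≤ r) {k : ℕ} (hk : 1 ≤ k) :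
    gradedMesh T r N (k + 1) ≤ 2 ^ r * gradedMesh T r N k := by
  have hk' : (k : ℝ) + 1 ≤ 2 * k := by linarith [(by exact_mod_cast hk : (1 : ℝ) ≤ k)]
  rw [gradedMesh_eq, gradedMesh_eq, mul_left_comm, ← Real.mul_rpow zero_le_two k.cast_nonneg,
    Nat.cast_succ]
  gcongr

theorem monotone_gradedMesh_step (hT : 0 ≤ T) (hr : 1 ≤ r) :
    Monotone fun k => gradedMesh T r N (k + 1) - gradedMesh T r N k := by
  refine monotone_nat_of_le_succ fun k => ?_
  simp only [gradedMesh_eq, ← mul_sub]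
  refine mul_le_mul_of_nonneg_left ?_ (by positivity)
  have hmid := (convexOn_rpow hr).2 (mem_Ici.2 (by positivity : (0 : ℝ) ≤ k))
    (mem_Ici.2 (by positivity : (0 : ℝ) ≤ k + 2)) one_half_pos.le one_half_pos.le (add_halves 1)
  simp only [smul_eq_mul] at hmid
  rw [show (1 / 2 : ℝ) * k + 1 / 2 * (k + 2) = k + 1 by ring] at hmid
  push_cast
  rw [add_assoc (k : ℝ) 1 1, one_add_one_eq_two]
  linarith

theorem gradedMesh_step_le (hT : 0 ≤ T) (hr : 1 ≤ r) (k : ℕ) :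
    gradedMesh T r N (k + 1) - gradedMesh T r N k
      ≤ r * (T * (N : ℝ) ^ (-r)) * ((k : ℝ) + 1) ^ (r - 1) := by
  rw [gradedMesh_eq, gradedMesh_eq, ← mul_sub, mul_comm r, mul_assoc _ r, Nat.cast_succ]
  exact mul_le_mul_of_nonneg_left (add_one_rpow_sub_rpow_le hr k.cast_nonneg) (by positivity)

theorem gradedMesh_step_le_div (hT : 0 ≤ T) (hr : 1 ≤ r) {k : ℕ} (hk : k < N) :
    gradedMesh T r N (k + 1) - gradedMesh T r N k ≤ r * T / N := by
  have hN' : (0 : ℝ) < N := by exact_mod_cast k.zero_le.trans_lt hk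
  have hkN : (k : ℝ) + 1 ≤ N := by exact_mod_cast hk
  calc gradedMesh T r N (k + 1) - gradedMesh T r N k
      ≤ r * (T * (N : ℝ) ^ (-r)) * ((k : ℝ) + 1) ^ (r - 1) := gradedMesh_step_le hT hr k
    _ ≤ r * (T * (N : ℝ) ^ (-r)) * (N : ℝ) ^ (r - 1) :=
        mul_le_mul_of_nonneg_left (Real.rpow_le_rpow (by positivity) hkN (by linarith))
          (by positivity)
    _ = r * T * ((N : ℝ) ^ (-r) * (N : ℝ) ^ (r - 1)) := by ring
    _ = r * T / N := by
        rw [← Real.rpow_add hN', show -r + (r - 1) = -1 by ring, Real.rpow_neg_one,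
          div_eq_mul_inv]

end GradedMesh

section PowerSums

variable {γ : ℝ}

theorem sum_add_one_rpow_sub_one_le_of_le_one (hγ : 0 < γ) (hγ1 : γ ≤ 1) (n : ℕ) :
    ∑ k ∈ Finset.range n, ((k : ℝ) + 1) ^ (γ - 1) ≤ (n : ℝ) ^ γ / γ := by
  rw [le_div_iff₀' hγ, Finset.mul_sum]
  calc ∑ k ∈ Finset.range n, γ * ((k : ℝ) + 1) ^ (γ - 1)
      ≤ ∑ k ∈ Finset.range n, (((k + 1 : ℕ) : ℝ) ^ γ - (k : ℝ) ^ γ) :=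
        Finset.sum_le_sum fun k _ => by
          simpa only [Nat.cast_succ] using mul_add_one_rpow_sub_one_le hγ.le hγ1 k.cast_nonneg
    _ = (n : ℝ) ^ γ := by
        rw [Finset.sum_range_sub fun k : ℕ => (k : ℝ) ^ γ, Nat.cast_zero,
          Real.zero_rpow hγ.ne', sub_zero]

theorem sum_add_one_rpow_sub_one_le_of_one_le (hγ : 1 ≤ γ) (n : ℕ) :
    ∑ k ∈ Finset.range n, ((k : ℝ) + 1) ^ (γ - 1) ≤ (n : ℝ) ^ γ := by
  have hterm : ∀ k ∈ Finset.range n, ((k : ℝ) + 1) ^ (γ - 1) ≤ (n : ℝ) ^ (γ - 1) := fun k hk =>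
    Real.rpow_le_rpow (by positivity) (by exact_mod_cast Finset.mem_range.1 hk) (by linarith)
  refine (Finset.sum_le_card_nsmul _ _ _ hterm).trans_eq ?_
  rw [Finset.card_range, nsmul_eq_mul, mul_comm,
    ← Real.rpow_add_one' n.cast_nonneg (by linarith), sub_add_cancel]

theorem sum_add_one_rpow_sub_one_le (hγ : 0 < γ) (n : ℕ) :
    ∑ k ∈ Finset.range n, ((k : ℝ) + 1) ^ (γ - 1) ≤ (1 + 1 / γ) * (n : ℝ) ^ γ := by
  have hnγ : 0 ≤ (n : ℝ) ^ γ := by positivity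
  rw [one_add_mul, one_div_mul_eq_div]
  rcases le_total 1 γ with h | h
  · exact (sum_add_one_rpow_sub_one_le_of_one_le h n).trans
      (le_add_of_nonneg_right (by positivity))
  · exact (sum_add_one_rpow_sub_one_le_of_le_one hγ h n).trans (le_add_of_nonneg_left hnγ)

theorem sum_add_one_rpow_neg_one_le (n : ℕ) :
    ∑ k ∈ Finset.range n, ((k : ℝ) + 1) ^ (-1 : ℝ) ≤ 1 + Real.log n := by
  refine (le_of_eq ?_).trans (harmonic_le_one_add_log n)
  simp only [harmonic, Rat.cast_sum, Real.rpow_neg_one]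
  push_cast
  rfl

theorem summable_add_one_rpow_sub_one (hγ : γ < 0) :
    Summable fun k : ℕ => ((k : ℝ) + 1) ^ (γ - 1) := by
  simpa only [Nat.cast_succ] using
    (summable_nat_add_iff 1).2 (Real.summable_nat_rpow.2 (by linarith : γ - 1 < -1))

end PowerSums

/-- The excess of the grading parameter `r` over the critical value `(2p+2-α)/(1+2σ-α)`,
multiplied by `1+2σ-α`; its sign decides between the three regimes of `projErrBound`. -/
noncomputable def gradingExcess (r α σ : ℝ) (p : ℕ) : ℝ :=
  r * (1 + 2 * σ - α) - (2 * p + 2 - α)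

section ErrorBound

variable {T r α σ C : ℝ} {p N n : ℕ}

theorem approxBound_sq_mul_rpow {t : ℕ → ℝ} (ht : IsMesh t) (k : ℕ) :
    approxBound t σ p C k ^ 2 * (t (k + 1) - t k) ^ (1 - α)
      = C ^ 2 * t (k + 1) ^ (2 * (σ - (p + 1))) * (t (k + 1) - t k) ^ (2 * (p : ℝ) + 3 - α) := by
  have hτ : 0 < t (k + 1) - t k := sub_pos.2 (ht.strictMono k.lt_succ_self)
  have hpow : (t (k + 1) ^ (σ - (p + 1 : ℕ))) ^ 2 = t (k + 1) ^ (2 * (σ - (p + 1))) := by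
    rw [← Real.rpow_mul_natCast (ht.nonneg _), mul_comm]
    push_cast
    rfl
  have hstep : ((t (k + 1) - t k) ^ (p + 1)) ^ 2 * (t (k + 1) - t k) ^ (1 - α)
      = (t (k + 1) - t k) ^ (2 * (p : ℝ) + 3 - α) := by
    rw [← pow_mul, ← Real.rpow_natCast, ← Real.rpow_add hτ]
    congr 1
    push_cast
    ring
  rw [approxBound, mul_pow, mul_pow, hpow, ← hstep]
  ring

theorem gradedMesh_rpow_mul_step_bound_rpow (hT : 0 < T) (hr : 0 ≤ r) (hN : 1 ≤ N) (k : ℕ) :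
    gradedMesh T r N (k + 1) ^ (2 * (σ - (p + 1))) *
        (r * (T * (N : ℝ) ^ (-r)) * ((k : ℝ) + 1) ^ (r - 1)) ^ (2 * (p : ℝ) + 3 - α)
      = r ^ (2 * (p : ℝ) + 3 - α) * T ^ (1 + 2 * σ - α) *
        (N : ℝ) ^ (-(r * (1 + 2 * σ - α))) * ((k : ℝ) + 1) ^ (gradingExcess r α σ p - 1) := by
  have hN' : (0 : ℝ) < N := by exact_mod_cast hN
  have hm : 0 < (k : ℝ) + 1 := by positivity
  have hA : 0 < T * (N : ℝ) ^ (-r) := by positivity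
  have hscale : (T * (N : ℝ) ^ (-r)) ^ (2 * (σ - (p + 1))) *
      (T * (N : ℝ) ^ (-r)) ^ (2 * (p : ℝ) + 3 - α)
        = T ^ (1 + 2 * σ - α) * (N : ℝ) ^ (-(r * (1 + 2 * σ - α))) := by
    rw [← Real.rpow_add hA, show 2 * (σ - (p + 1)) + (2 * (p : ℝ) + 3 - α) = 1 + 2 * σ - α by ring,
      Real.mul_rpow hT.le (by positivity), ← Real.rpow_mul hN'.le, neg_mul]
  have hindex : ((k : ℝ) + 1) ^ (r * (2 * (σ - (p + 1)))) *
      ((k : ℝ) + 1) ^ ((r - 1) * (2 * (p : ℝ) + 3 - α))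
        = ((k : ℝ) + 1) ^ (gradingExcess r α σ p - 1) := by
    rw [← Real.rpow_add hm, gradingExcess]
    congr 1
    ring
  rw [gradedMesh_eq, Nat.cast_succ, Real.mul_rpow hA.le (by positivity),
    Real.mul_rpow (x := r * (T * (N : ℝ) ^ (-r))) (by positivity) (by positivity),
    Real.mul_rpow hr hA.le,
    ← Real.rpow_mul hm.le, ← Real.rpow_mul hm.le, mul_assoc _ (T ^ _), ← hscale, ← hindex]
  ring

theorem cellSum_gradedMesh_le (hT : 0 < T) (hr : 1 ≤ r) (hα1 : α ≤ 1) (p : ℕ) (C : ℝ)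
    (hN : 1 ≤ N) (n : ℕ) :
    cellSum (gradedMesh T r N) n α (approxBound (gradedMesh T r N) σ p C) ≤
      C ^ 2 * (r ^ (2 * (p : ℝ) + 3 - α) * T ^ (1 + 2 * σ - α) *
        (N : ℝ) ^ (-(r * (1 + 2 * σ - α)))) *
        ∑ k ∈ Finset.range n, ((k : ℝ) + 1) ^ (gradingExcess r α σ p - 1) := by
  have hmesh := isMesh_gradedMesh hT (by linarith : 0 < r) hN
  rw [cellSum, Finset.mul_sum]
  refine Finset.sum_le_sum fun k _ => ?_
  have hstep := Real.rpow_le_rpow (sub_nonneg.2 (hmesh.le_succ k))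
    (gradedMesh_step_le hT.le hr k) (by linarith [p.cast_nonneg (α := ℝ)] : 0 ≤ 2 * (p : ℝ) + 3 - α)
  rw [approxBound_sq_mul_rpow hmesh, mul_assoc (C ^ 2) (_ * _),
    ← gradedMesh_rpow_mul_step_bound_rpow hT (by linarith : 0 ≤ r) hN, ← mul_assoc (C ^ 2)]
  exact mul_le_mul_of_nonneg_left hstep
    (mul_nonneg (sq_nonneg C) (Real.rpow_nonneg (hmesh.nonneg _) _))

theorem rpow_mul_cellSum_gradedMesh_le (hT : 0 < T) (hr : 1 ≤ r) (hα1 : α ≤ 1) (p : ℕ) (C : ℝ)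
    (hN : 1 ≤ N) (n : ℕ) :
    (r * T / N) ^ α * cellSum (gradedMesh T r N) n α (approxBound (gradedMesh T r N) σ p C) ≤
      (r * T) ^ α * (C ^ 2 * r ^ (2 * (p : ℝ) + 3 - α) * T ^ (1 + 2 * σ - α)) *
        ((N : ℝ) ^ (-(r * (1 + 2 * σ - α)) - α) *
          ∑ k ∈ Finset.range n, ((k : ℝ) + 1) ^ (gradingExcess r α σ p - 1)) := by
  have hN' : (0 : ℝ) < N := by exact_mod_cast hN
  refine (mul_le_mul_of_nonneg_left (cellSum_gradedMesh_le hT hr hα1 p C hN n)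
    (by positivity)).trans_eq ?_
  rw [Real.div_rpow (by positivity) hN'.le, Real.rpow_sub hN']
  ring

theorem projErrBound_nonneg (hT : 0 ≤ T) (r α σ : ℝ) (p N n : ℕ) :
    0 ≤ projErrBound T r α σ p N n := by
  have : 0 ≤ gradedMesh T r N n := by
    unfold gradedMesh
    positivity
  unfold projErrBound
  split_ifs <;> positivity

theorem projErrBound_of_gradingExcess_neg (hs : 0 < 1 + 2 * σ - α)
    (h : gradingExcess r α σ p < 0) :
    projErrBound T r α σ p N n = (N : ℝ) ^ (-(r * (1 + 2 * σ - α)) - α) :=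
  if_pos ((lt_div_iff₀ hs).2 (sub_neg.1 h))

theorem projErrBound_of_gradingExcess_eq_zero (hs : 0 < 1 + 2 * σ - α)
    (h : gradingExcess r α σ p = 0) :
    projErrBound T r α σ p N n
      = (N : ℝ) ^ (-(r * (1 + 2 * σ - α)) - α) * (1 + Real.log n) := by
  have hr : r = (2 * (p : ℝ) + 2 - α) / (1 + 2 * σ - α) :=
    (eq_div_iff hs.ne').2 (sub_eq_zero.1 h)
  rw [projErrBound, if_neg hr.not_lt, if_pos hr, sub_eq_zero.1 h]
  congr 2
  ring

theorem projErrBound_of_gradingExcess_pos (hT : 0 ≤ T) (hr : 0 < r) (hs : 0 < 1 + 2 * σ - α)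
    (hN : 1 ≤ N) (h : 0 < gradingExcess r α σ p) :
    projErrBound T r α σ p N n = T ^ (gradingExcess r α σ p / r) *
      ((N : ℝ) ^ (-(r * (1 + 2 * σ - α)) - α) * (n : ℝ) ^ gradingExcess r α σ p) := by
  have hN' : (0 : ℝ) < N := by exact_mod_cast hN
  have hgt : (2 * (p : ℝ) + 2 - α) / (1 + 2 * σ - α) < r := (div_lt_iff₀ hs).2 (sub_pos.1 h)
  have hexp : 1 + 2 * σ - α - (2 * (p : ℝ) + 2 - α) / r = gradingExcess r α σ p / r := by
    rw [gradingExcess, sub_div _ (_ - _), mul_div_cancel_left₀ _ hr.ne']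
  rw [projErrBound, if_neg hgt.not_gt, if_neg hgt.ne', hexp, gradedMesh,
    Real.mul_rpow (by positivity) hT, ← Real.rpow_mul (by positivity),
    mul_div_cancel₀ _ hr.ne', Real.div_rpow n.cast_nonneg hN'.le,
    show -(r * (1 + 2 * σ - α)) - α = -2 * (p : ℝ) - 2 - gradingExcess r α σ p by
      rw [gradingExcess]; ring, Real.rpow_sub hN' (-2 * (p : ℝ) - 2)]
  ring

theorem exists_rpow_mul_sum_le_projErrBound (hT : 0 < T) (hr : 0 < r) (hs : 0 < 1 + 2 * σ - α)
    (p : ℕ) :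
    ∃ K : ℝ, 0 ≤ K ∧ ∀ N n : ℕ, 1 ≤ N →
      (N : ℝ) ^ (-(r * (1 + 2 * σ - α)) - α) *
          ∑ k ∈ Finset.range n, ((k : ℝ) + 1) ^ (gradingExcess r α σ p - 1)
        ≤ K * projErrBound T r α σ p N n := by
  rcases lt_trichotomy (gradingExcess r α σ p) 0 with h | h | h
  · refine ⟨∑' k : ℕ, ((k : ℝ) + 1) ^ (gradingExcess r α σ p - 1),
      tsum_nonneg fun k => by positivity, fun N n _ => ?_⟩
    rw [projErrBound_of_gradingExcess_neg hs h, mul_comm]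
    exact mul_le_mul_of_nonneg_right ((summable_add_one_rpow_sub_one h).sum_le_tsum
      (Finset.range n) fun k _ => by positivity) (by positivity)
  · refine ⟨1, zero_le_one, fun N n _ => ?_⟩
    rw [projErrBound_of_gradingExcess_eq_zero hs h, h, zero_sub, one_mul]
    exact mul_le_mul_of_nonneg_left (sum_add_one_rpow_neg_one_le n) (by positivity)
  · refine ⟨(1 + 1 / gradingExcess r α σ p) / T ^ (gradingExcess r α σ p / r), by positivity,
      fun N n hN => ?_⟩
    rw [projErrBound_of_gradingExcess_pos hT.le hr hs hN h, ← mul_assoc,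
      div_mul_cancel₀ _ (by positivity), mul_left_comm]
    exact mul_le_mul_of_nonneg_left (sum_add_one_rpow_sub_one_le h n) (by positivity)

theorem exists_rpow_mul_cellSum_le_projErrBound (hT : 0 < T) (hr : 1 ≤ r) (hα1 : α ≤ 1)
    (hσ : 0 < σ) (p : ℕ) (C : ℝ) :
    ∃ K : ℝ, 0 < K ∧ ∀ N n : ℕ, 1 ≤ N →
      (r * T / N) ^ α * cellSum (gradedMesh T r N) n α (approxBound (gradedMesh T r N) σ p C) ≤
        K * projErrBound T r α σ p N n := by
  have hr0 : 0 < r := by linarith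
  obtain ⟨K, hK, hsum⟩ := exists_rpow_mul_sum_le_projErrBound hT hr0
    (by linarith : 0 < 1 + 2 * σ - α) p
  set A := (r * T) ^ α * (C ^ 2 * r ^ (2 * (p : ℝ) + 3 - α) * T ^ (1 + 2 * σ - α))
  have hA : 0 ≤ A := by positivity
  refine ⟨A * K + 1, by positivity, fun N n hN => ?_⟩
  calc _ ≤ A * _ := rpow_mul_cellSum_gradedMesh_le hT hr hα1 p C hN n
    _ ≤ A * (K * projErrBound T r α σ p N n) := mul_le_mul_of_nonneg_left (hsum N n hN) hA
    _ ≤ (A * K + 1) * projErrBound T r α σ p N n := by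
        rw [add_one_mul, mul_assoc A K]
        exact le_add_of_nonneg_right (projErrBound_nonneg hT.le ..)

end ErrorBound

/-! ### The projection error -/

/-- Agreement on each of the first `n` cells `(t (k - 1), t k]` with a polynomial of degree at
most `p`, with no condition elsewhere: the trial and test functions of the projection. -/
def IsPiecewisePoly (t : ℕ → ℝ) (n p : ℕ) (R : ℝ → ℝ) : Prop :=
  ∀ k, 1 ≤ k → k ≤ n → ∃ q : Polynomial ℝ, q.degree ≤ p ∧
    ∀ s ∈ Ioc (t (k - 1)) (t k), R s = q.eval s

/-- `R` is a fractional orthogonal projection of `v` onto the piecewise polynomials of degree at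
most `p`, where `D` is the Riemann–Liouville derivative of `R - v` away from the mesh points. -/
structure IsRLProjection (α : ℝ) (t : ℕ → ℝ) (n p : ℕ) (v R D : ℝ → ℝ) : Prop where
  isPiecewisePoly : IsPiecewisePoly t n p R
  hasDerivAt : ∀ x ∈ Ioo 0 (t n), (∀ k, x ≠ t k) →
    HasDerivAt (fun τ => ∫ s in (0 : ℝ)..τ, rlKernel (1 - α) (τ - s) * (R s - v s)) (D x) x
  integral_mul_eq_zero : ∀ X, IsPiecewisePoly t n p X → ∫ x in (0 : ℝ)..t n, D x * X x = 0

section Projection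

variable {t : ℕ → ℝ} {n p : ℕ} {α σ : ℝ}

theorem isPiecewisePoly_pwPoly (ht : IsMesh t) {Y : ℕ → Polynomial ℝ}
    (hY : ∀ k, (Y k).degree ≤ p) : IsPiecewisePoly t n p (pwPoly t n Y) :=
  fun k hk hkn => ⟨Y (k - 1), hY _, fun s hs => by
    rw [pwPoly, ht.cellIdx_eq (by omega : k - 1 < n) (by rwa [Nat.sub_add_cancel hk])]⟩

theorem IsPiecewisePoly.exists_eq_pwPoly (ht : IsMesh t) {R : ℝ → ℝ}
    (hR : IsPiecewisePoly t n p R) :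
    ∃ Q : ℕ → Polynomial ℝ, (∀ k, (Q k).degree ≤ p) ∧
      ∀ x ∈ Ioc 0 (t n), R x = pwPoly t n Q x := by
  have hcell : ∀ k, ∃ q : Polynomial ℝ, q.degree ≤ p ∧
      (k < n → ∀ s ∈ Ioc (t k) (t (k + 1)), R s = q.eval s) := fun k => by
    by_cases hk : k < n
    · obtain ⟨q, hq, hqR⟩ := hR (k + 1) k.succ_pos hk
      exact ⟨q, hq, fun _ => hqR⟩
    · exact ⟨0, by simp only [Polynomial.degree_zero, bot_le], fun h => absurd h hk⟩
  choose Q hQ hQR using hcell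
  exact ⟨Q, hQ, fun x hx => hQR _ (ht.cellIdx_lt hx) x (ht.mem_cell hx)⟩

theorem pwPoly_sub (t : ℕ → ℝ) (n : ℕ) (Q P : ℕ → Polynomial ℝ) (x : ℝ) :
    pwPoly t n (fun k => Q k - P k) x = pwPoly t n Q x - pwPoly t n P x :=
  Polynomial.eval_sub _ _ _

theorem ae_eq_marchaud_of_rlKernel (hα : 0 < α) (hα1 : α < 1) {B : ℝ} {e f D : ℝ → ℝ}
    (he : MarchaudRegular α (t n) B e) (hfe : ∀ x ∈ Ioc 0 (t n), f x = e x)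
    (hD : ∀ x ∈ Ioo 0 (t n), (∀ k, x ≠ t k) →
      HasDerivAt (fun τ => ∫ s in (0 : ℝ)..τ, rlKernel (1 - α) (τ - s) * f s) (D x) x) :
    (fun x => Real.Gamma (1 - α) * D x) =ᵐ[volIoc (t n)] marchaud α e := by
  have hΓ : Real.Gamma (1 - α) ≠ 0 := (Real.Gamma_pos_of_pos (by linarith)).ne'
  refine ae_eq_marchaud hα hα1 he ?_
  filter_upwards [(countable_range t).ae_notMem _, ae_mem_Ioo (t n)] with x hxt hx
  refine ((hD x hx fun k hk => hxt ⟨k, hk.symm⟩).const_mul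
    (Real.Gamma (1 - α))).congr_of_eventuallyEq ?_
  filter_upwards [Ioo_mem_nhds hx.1 hx.2] with τ hτ
  rw [← intervalIntegral.integral_const_mul, intervalIntegral.integral_of_le hτ.1.le,
    intervalIntegral.integral_of_le hτ.1.le]
  refine setIntegral_congr_fun measurableSet_Ioc fun s hs => ?_
  simp only [rlKernel, hfe s ⟨hs.1, hs.2.trans hτ.2.le⟩, sub_sub_cancel_left]
  field_simp

namespace IsRLProjection

variable {v R D η : ℝ → ℝ} {Q : ℕ → Polynomial ℝ} {ε : ℕ → ℝ}

theorem integral_marchaud_mul_pwPoly (hα : 0 < α) (hα1 : α < 1) (hσ : 0 < σ) (ht : IsMesh t)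
    (hR : IsRLProjection α t n p v R D) (hQ : ∀ k, (Q k).degree ≤ p)
    (hη : CellSmall t n σ ε η) (hRv : ∀ x ∈ Ioc 0 (t n), R x - v x = pwPoly t n Q x - η x)
    {Y : ℕ → Polynomial ℝ} (hY : ∀ k, (Y k).degree ≤ p) :
    ∫ x, marchaud α (fun x => pwPoly t n Q x - η x) x * pwPoly t n Y x ∂volIoc (t n) = 0 := by
  obtain ⟨_, _, hlip⟩ := exists_cellLipschitz p
  obtain ⟨L, hL0, hL, -⟩ := hlip α t n Q hα ht hQ
  obtain ⟨_, -, hQr⟩ := exists_marchaudRegular_pwPoly hα hα1 ht hL0 hL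
  have hDae := ae_eq_marchaud_of_rlKernel hα hα1
    (hQr.sub (hη.marchaudRegular hα hα1 ht hσ)) hRv hR.hasDerivAt
  have horth := hR.integral_mul_eq_zero _ (isPiecewisePoly_pwPoly ht hY)
  rw [intervalIntegral.integral_of_le (ht.nonneg n)] at horth
  rw [← mul_zero (Real.Gamma (1 - α)), ← horth, ← integral_const_mul]
  refine integral_congr_ae ?_
  filter_upwards [hDae] with x hx
  rw [← hx, mul_assoc]

theorem exists_sub_eq_pwPoly_sub (hR : IsRLProjection α t n p v R D) (ht : IsMesh t)
    {P : ℕ → Polynomial ℝ} (hP : ∀ k, (P k).degree ≤ p)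
    (hv : ∀ x ∈ Ioc 0 (t n), v x = pwPoly t n P x + η x) :
    ∃ Q : ℕ → Polynomial ℝ, (∀ k, (Q k).degree ≤ p) ∧
      ∀ x ∈ Ioc 0 (t n), R x - v x = pwPoly t n Q x - η x := by
  obtain ⟨q, hq, hqR⟩ := hR.isPiecewisePoly.exists_eq_pwPoly ht
  refine ⟨fun k => q k - P k, fun k =>
    (Polynomial.degree_sub_le _ _).trans (max_le (hq k) (hP k)), fun x hx => ?_⟩
  rw [hqR x hx, hv x hx, pwPoly_sub, sub_sub]

end IsRLProjection

theorem exists_integral_sub_sq_le (hα : 0 < α) (hα1 : α < 1) (hσ : 0 < σ) (hσ1 : σ ≤ 1) (p : ℕ) :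
    ∃ C : ℝ, 0 < C ∧ ∀ {T C₀ ρ h : ℝ} {t : ℕ → ℝ} {n : ℕ} {v R D : ℝ → ℝ},
      0 ≤ T → 0 ≤ C₀ → 0 < ρ → 0 < h → WeaklySingular T σ C₀ p v →
      IsMesh t → t n ≤ T → (∀ k, 1 ≤ k → t (k + 1) ≤ ρ * t k) →
      (Monotone fun k => t (k + 1) - t k) → (∀ k < n, t (k + 1) - t k ≤ h) →
      IsRLProjection α t n p v R D →
      ∫ x in (0 : ℝ)..t n, (R x - v x) ^ 2
        ≤ C * (h ^ α * cellSum t n α (approxBound t σ p (approxConst T σ C₀ ρ p))) := by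
  obtain ⟨C, hC, hstability⟩ := exists_integral_sq_le hα hα1 hσ p
  refine ⟨C, hC, fun {T C₀ ρ h t n v R D} hT hC₀ hρ hh hv ht htn hratio hmono hstep hR => ?_⟩
  obtain ⟨P, η, hP, hη, hvη⟩ := hv.exists_eq_pwPoly_add_cellSmall hσ hσ1 hT hC₀ hρ ht htn hratio
  obtain ⟨Q, hQ, hRv⟩ := hR.exists_sub_eq_pwPoly_sub ht hP hvη
  rw [intervalIntegral.integral_of_le (ht.nonneg n), setIntegral_congr_fun measurableSet_Ioc
    fun x hx => congrArg (· ^ 2) (hRv x hx), ← mul_assoc]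
  exact hstability t n h Q _ η ht hmono hh hstep hQ hη fun Y hY =>
    hR.integral_marchaud_mul_pwPoly hα hα1 hσ ht hQ hη hRv hY

end Projection

end RLProjection

open RLProjection in
theorem rl_projection_L2_error_general {T α r σ C₀ : ℝ} (hT : 0 < T) (hα0 : 0 < α) (hα1 : α < 1)
    (hr : 1 ≤ r) (p : ℕ) (hσ0 : 0 < σ) (hσ1 : σ ≤ 1) (hC₀ : 0 ≤ C₀) :
    ∃ C : ℝ, 0 < C ∧ ∀ N, 1 ≤ N → ∀ v, WeaklySingular T σ C₀ p v →
      ∀ n, 1 ≤ n → n ≤ N → ∀ R D, IsRLProjection α (gradedMesh T r N) n p v R D →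
        ∫ t in (0 : ℝ)..gradedMesh T r N n, (R t - v t) ^ 2
          ≤ C * projErrBound T r α σ p N n := by
  have hr0 : 0 < r := by linarith
  obtain ⟨C, hC, hmesh⟩ := exists_integral_sub_sq_le hα0 hα1 hσ0 hσ1 p
  obtain ⟨K, hK, hsum⟩ := exists_rpow_mul_cellSum_le_projErrBound hT hr hα1.le hσ0 p
    (approxConst T σ C₀ (2 ^ r) p)
  refine ⟨C * K, mul_pos hC hK, fun N hN v hv n _ hnN R D hR => ?_⟩
  have : (0 : ℝ) < N := by exact_mod_cast hN
  calc ∫ t in (0 : ℝ)..gradedMesh T r N n, (R t - v t) ^ 2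
      ≤ C * ((r * T / N) ^ α * cellSum (gradedMesh T r N) n α
          (approxBound (gradedMesh T r N) σ p (approxConst T σ C₀ (2 ^ r) p))) :=
        hmesh hT.le hC₀ (Real.rpow_pos_of_pos two_pos r) (by positivity) hv
          (isMesh_gradedMesh hT hr0 hN) (gradedMesh_le hT hr0 hN hnN)
          (fun _ => gradedMesh_succ_le hT.le hr0.le) (monotone_gradedMesh_step hT.le hr)
          (fun _ hk => gradedMesh_step_le_div hT.le hr (hk.trans_le hnN)) hR
    _ ≤ C * (K * projErrBound T r α σ p N n) :=
        mul_le_mul_of_nonneg_left (hsum N n hN) hC.le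
    _ = C * K * projErrBound T r α σ p N n := (mul_assoc _ _ _).symm

/-- Optimal `L²` error of the fractional orthogonal projection `R_t^α` onto piecewise
polynomials of degree `p` on the graded mesh:
`∫_0^{t_n} (R(t) - v(t))² dt ≤ C ⋅ E(n,N,σ,α,r,p)`, with `C` depending only on
`p, σ, α, r, C₀, T`. -/
theorem rl_projection_L2_error (T : ℝ) (hT : 0 < T)
    (α : ℝ) (hα0 : 0 < α) (hα1 : α < 1)
    (r : ℝ) (hr : 1 ≤ r) (p : ℕ) (hp : 1 ≤ p)
    (σ C₀ : ℝ) (hσ0 : 0 < σ) (hσ1 : σ < 1) (hC₀ : 0 < C₀) :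
    ∃ C : ℝ, 0 < C ∧
      ∀ (N : ℕ), 1 ≤ N → ∀ v : ℝ → ℝ,
        -- regularity of v
        ContinuousOn v (Set.Icc 0 T) →
        ContDiffOn ℝ (p + 1) v (Set.Ioc 0 T) →
        (∀ t ∈ Set.Ioc (0 : ℝ) T, |v t - v 0| ≤ C₀ * t ^ σ) →
        (∀ t ∈ Set.Ioc (0 : ℝ) T, ∀ ℓ ≤ p + 1,
          |iteratedDerivWithin ℓ v (Set.Ioc 0 T) t| ≤ C₀ * (1 + t ^ (σ - (ℓ : ℝ)))) →
        ∀ n, 1 ≤ n → n ≤ N → ∀ R D : ℝ → ℝ,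
          -- R is piecewise polynomial of degree ≤ p on the mesh of (0, t_n]
          (∀ k, 1 ≤ k → k ≤ n → ∃ q : Polynomial ℝ, q.degree ≤ p ∧
            ∀ s ∈ Set.Ioc (gradedMesh T r N (k - 1)) (gradedMesh T r N k),
              R s = q.eval s) →
          -- D is the Riemann–Liouville derivative of order α of R - v
          (∀ t ∈ Set.Ioo (0 : ℝ) (gradedMesh T r N n),
            (∀ k ≤ N, t ≠ gradedMesh T r N k) →
            HasDerivAt
              (fun τ => ∫ s in (0:ℝ)..τ, rlKernel (1 - α) (τ - s) * (R s - v s)) (D t) t) →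
          -- orthogonality of R - v against all piecewise polynomials of degree ≤ p
          (∀ X : ℝ → ℝ,
            (∀ k, 1 ≤ k → k ≤ n → ∃ q : Polynomial ℝ, q.degree ≤ p ∧
              ∀ s ∈ Set.Ioc (gradedMesh T r N (k - 1)) (gradedMesh T r N k),
                X s = q.eval s) →
            (∫ t in (0:ℝ)..(gradedMesh T r N n), D t * X t) = 0) →
          (∫ t in (0:ℝ)..(gradedMesh T r N n), (R t - v t) ^ 2)
            ≤ C * projErrBound T r α σ p N n :=
  let ⟨C, hC, hbound⟩ := rl_projection_L2_error_general hT hα0 hα1 hr p hσ0 hσ1.le hC₀.le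
  ⟨C, hC, fun N hN v hvc hvd hv0 hvℓ n hn hnN R D hR hD hX =>
    hbound N hN v ⟨hvc, hvd, hv0, hvℓ⟩ n hn hnN R D
      ⟨hR, fun x hx hne => hD x hx fun k _ => hne k, hX⟩⟩
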